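/- Let d ≥ 3, let r = d − 1, and let Δ ⊆ ℝ^d be a d-dimensional Gorenstein polytope of index r. Then 12 = Σ_θ v(θ)·v(θ*) + ((r(1−r)+2)/2)·v(Δ), where the sum runs over all (r−1)-dimensional faces θ of Δ and θ* is the dual face of θ. -/

import Mathlib

open MeasureTheory Filter Pointwise

noncomputable section

/-- The canonical embedding of a lattice point of `ℤ^d` into `ℝ^d`. -/
def coeLat {d : ℕ} (n : Fin d → ℤ) : Fin d → ℝ := fun i => (n i : ℝ)

/-- The set of lattice points lying in a subset `S ⊆ ℝ^d`. -/
def latticePoints {d : ℕ} (S : Set (Fin d → ℝ)) : Set (Fin d → ℤ) :=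
  {n | coeLat n ∈ S}

/-- A lattice polytope: the convex hull of finitely many points of `ℤ^d`. -/
def IsLatticePolytope {d : ℕ} (P : Set (Fin d → ℝ)) : Prop :=
  ∃ V : Finset (Fin d → ℤ), P = convexHull ℝ (coeLat '' (V : Set (Fin d → ℤ)))

/-- The dual (polar) body `P* = {y | ⟨y,x⟩ ≥ -1 ∀ x ∈ P}`. -/
def polarDual {d : ℕ} (P : Set (Fin d → ℝ)) : Set (Fin d → ℝ) :=
  {y | ∀ x ∈ P, -1 ≤ ∑ i, y i * x i}

/-- Dimension of a subset of `ℝ^d`: the dimension of its affine span. -/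
def dimSet {d : ℕ} (S : Set (Fin d → ℝ)) : ℕ :=
  Module.finrank ℝ (affineSpan ℝ S).direction

/-- A reflexive polytope: a lattice polytope containing the origin in its interior
whose dual is again a lattice polytope. -/
def IsReflexive {d : ℕ} (P : Set (Fin d → ℝ)) : Prop :=
  IsLatticePolytope P ∧ (0 : Fin d → ℝ) ∈ interior P ∧ IsLatticePolytope (polarDual P)

/-- A (nonempty, exposed) face of dimension `k` of a polytope `P`. -/
def IsFaceOfDim {d : ℕ} (P : Set (Fin d → ℝ)) (k : ℕ) (θ : Set (Fin d → ℝ)) : Prop :=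
  IsExposed ℝ P θ ∧ θ.Nonempty ∧ dimSet θ = k

/-- The dual face `θ* = {y ∈ P* | ⟨y,x⟩ = -1 ∀ x ∈ θ}` of a face `θ` of `P`. -/
def dualFace {d : ℕ} (P θ : Set (Fin d → ℝ)) : Set (Fin d → ℝ) :=
  {y ∈ polarDual P | ∀ x ∈ θ, ∑ i, y i * x i = -1}

/-- The normalized volume of a `k`-dimensional lattice polytope `θ ⊆ ℝ^d`:
`lim_{m → ∞} k! ⬝ |mθ ∩ ℤ^d| / m^k`. -/
def normVol {d : ℕ} (k : ℕ) (θ : Set (Fin d → ℝ)) : ℝ :=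
  limUnder atTop
    (fun m : ℕ => (Nat.factorial k : ℝ) * (latticePoints ((m : ℝ) • θ)).ncard / (m : ℝ) ^ k)

/-!
Let `N s t` count the lattice points at height `t` of the cone over the polytope on which each facet
form `u` has value at least `s u`. By the Gorenstein property some lattice point at height `r` has
value one under all facet forms, so `N (s + 1) t = N s (t - r)`. In order `t ^ (d - 2)`, the mixed
second difference of `N` in the directions `u` and `w` vanishes unless these facets meet in a ridge
`θ` and `v(θ*)` divides `s u - s w`, when it is asymptotic to `v(θ) * t ^ (d - 2) / (d - 2)!`. Up to
lower order, `N` is therefore an explicit quadratic function of `s` plus a periodic part, with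
coefficients given by the `v(θ)` and `v(θ*)`.

Sorting the lattice points at height `2 * t` by their classes modulo two expresses `N 0 (2 * t)` as
a sum of values `N s t`. In order `t ^ (d - 2)`, this identity is a linear relation between the sum
of the `v(θ) * v(θ*)` and the three leading coefficients of the Ehrhart polynomial. If `r = d - 1`,
then by reciprocity the `h^*`-polynomial is palindromic of degree two, so these coefficients depend
only on the volume.
-/

namespace GorensteinPolytope

/-! ### Half-open triangulations of polyhedral cones -/

section Coordinates

variable {E ι : Type*} [AddCommGroup E] [Module ℝ E] {g : ι → E} {B : Finset ι}

/-- The finite set `B` indexes a basis, extracted from the family `g`, of the linear span of `g`. -/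
def IsSubbasis (g : ι → E) (B : Finset ι) : Prop :=
  LinearIndepOn ℝ g (B : Set ι) ∧ Set.range g ⊆ Submodule.span ℝ (g '' B)

theorem IsSubbasis.span_eq (hB : IsSubbasis g B) :
    Submodule.span ℝ (Set.range fun i : B => g i) = Submodule.span ℝ (Set.range g) := by
  change Submodule.span ℝ (Set.range fun i : (B : Set ι) => g i) = _
  rw [← Set.image_eq_range]
  exact le_antisymm (Submodule.span_mono (Set.image_subset_range _ _)) (Submodule.span_le.2 hB.2)

theorem IsSubbasis.card_eq_finrank (hB : IsSubbasis g B) :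
    B.card = Module.finrank ℝ (Submodule.span ℝ (Set.range g)) := by
  rw [← hB.span_eq, finrank_span_eq_card (R := ℝ) (b := fun i : B => g i) hB.1, Fintype.card_coe]

theorem exists_isSubbasis_superset [Finite ι] {I : Set ι} (hI : LinearIndepOn ℝ g I) :
    ∃ B : Finset ι, I ⊆ B ∧ IsSubbasis g B := by
  obtain ⟨b, -, hIb, hspan, hb⟩ := exists_linearIndepOn_extension hI (Set.subset_univ _)
  refine ⟨b.toFinite.toFinset, by simpa using hIb, by simpa using hb, ?_⟩
  simpa [Set.image_univ] using hspan

/-- The coordinates of a vector in the subfamily of `g` indexed by `B`, extended by zero to the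
whole index set. They are junk outside the span of this subfamily. -/
def coord (g : ι → E) (B : Finset ι) : E →ₗ[ℝ] ι → ℝ :=
  Function.ExtendByZero.linearMap ℝ ((↑) : B → ι) ∘ₗ
    (Fintype.linearCombination ℝ fun i : B => g i).leftInverse

theorem coord_of_notMem {i : ι} (hi : i ∉ B) (x : E) : coord g B x i = 0 :=
  Function.extend_apply' _ _ _ (by rintro ⟨j, rfl⟩; exact hi j.2)

section Fintype

variable [Fintype ι]

theorem linearCombination_extend (c : B → ℝ) :
    Fintype.linearCombination ℝ g (Function.extend ((↑) : B → ι) c 0) =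
      Fintype.linearCombination ℝ (fun i : B => g i) c := by
  classical
  rw [Fintype.linearCombination_apply, Fintype.linearCombination_apply, Finset.univ_eq_attach,
    ← Finset.sum_subset (Finset.subset_univ B), ← Finset.sum_attach]
  · simp only [Subtype.val_injective.extend_apply]
  · intro i _ hi
    rw [Function.extend_apply' _ _ _ (by rintro ⟨j, rfl⟩; exact hi j.2), Pi.zero_apply, zero_smul]

theorem coord_linearCombination (hB : LinearIndepOn ℝ g (B : Set ι)) {l : ι → ℝ}
    (hl : ∀ i ∉ B, l i = 0) : coord g B (Fintype.linearCombination ℝ g l) = l := by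
  have hext : Function.extend ((↑) : B → ι) (fun i => l i) 0 = l := by
    funext i
    by_cases hi : i ∈ B
    · exact Subtype.val_injective.extend_apply _ _ (⟨i, hi⟩ : B)
    · rw [hl i hi, Function.extend_apply' _ _ _ (by rintro ⟨j, rfl⟩; exact hi j.2), Pi.zero_apply]
  have hker : LinearMap.ker (Fintype.linearCombination ℝ fun i : B => g i) = ⊥ :=
    LinearMap.ker_eq_bot.2 (linearIndependent_iff_injective_fintypeLinearCombination.1 hB)
  conv_lhs => rw [← hext, linearCombination_extend]
  exact (congrArg (fun c : B → ℝ => Function.extend ((↑) : B → ι) c (0 : ι → ℝ))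
    (LinearMap.leftInverse_apply_of_inj hker _)).trans hext

theorem linearCombination_coord (hB : IsSubbasis g B) {x : E}
    (hx : x ∈ Submodule.span ℝ (Set.range g)) :
    Fintype.linearCombination ℝ g (coord g B x) = x := by
  rw [← hB.span_eq, ← Fintype.range_linearCombination] at hx
  obtain ⟨c, rfl⟩ := hx
  rw [← linearCombination_extend, coord_linearCombination hB.1]
  exact fun i hi => Function.extend_apply' _ _ _ (by rintro ⟨j, rfl⟩; exact hi j.2)

theorem linearCombination_mem_span (g : ι → E) (l : ι → ℝ) :
    Fintype.linearCombination ℝ g l ∈ Submodule.span ℝ (Set.range g) :=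
  Fintype.range_linearCombination ℝ g ▸ LinearMap.mem_range_self _ l

theorem mem_hull_range_iff {z : E} :
    z ∈ PointedCone.hull ℝ (Set.range g) ↔
      ∃ l : ι → ℝ, 0 ≤ l ∧ Fintype.linearCombination ℝ g l = z := by
  rw [PointedCone.hull, Submodule.mem_span_range_iff_exists_fun]
  constructor
  · rintro ⟨c, rfl⟩
    exact ⟨fun i => c i, fun i => (c i).2, rfl⟩
  · rintro ⟨l, hl, rfl⟩
    exact ⟨fun i => ⟨l i, hl i⟩, rfl⟩

end Fintype

theorem coord_apply_of_mem [Finite ι] [DecidableEq ι] (hB : LinearIndepOn ℝ g (B : Set ι)) {j : ι}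
    (hj : j ∈ B) : coord g B (g j) = Pi.single j 1 := by
  cases nonempty_fintype ι
  have hsingle : Fintype.linearCombination ℝ g (Pi.single j 1) = g j := by
    rw [Fintype.linearCombination_apply_single, one_smul]
  rw [← hsingle]
  exact coord_linearCombination hB fun i hi => Pi.single_eq_of_ne (by rintro rfl; exact hi hj) _

theorem mem_hull_of_coord_nonneg [Finite ι] (hB : IsSubbasis g B) {z : E}
    (hz : z ∈ Submodule.span ℝ (Set.range g)) (h : ∀ i ∈ B, 0 ≤ coord g B z i) :
    z ∈ PointedCone.hull ℝ (Set.range g) := by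
  cases nonempty_fintype ι
  refine mem_hull_range_iff.2 ⟨coord g B z, fun i => ?_, linearCombination_coord hB hz⟩
  by_cases hi : i ∈ B
  · exact h i hi
  · exact (coord_of_notMem hi z).ge

end Coordinates

section LinearProgram

variable {E ι : Type*} [AddCommGroup E] [Module ℝ E] {g : ι → E}

/-- The vector `y` lies on no hyperplane spanned by elements of `g`: none of its coordinates in a
basis extracted from `g` vanishes. -/
def IsGeneric (g : ι → E) (y : E) : Prop :=
  ∀ B, IsSubbasis g B → ∀ i ∈ B, coord g B y i ≠ 0

theorem IsGeneric.neg {y : E} (hy : IsGeneric g y) : IsGeneric g (-y) := fun B hB i hi => by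
  simpa using hy B hB i hi

theorem exists_pos_forall_pos_sub_mul (s : Finset ι) {a : ι → ℝ} (ha : ∀ i ∈ s, 0 < a i)
    (b : ι → ℝ) : ∃ ε : ℝ, 0 < ε ∧ ∀ i ∈ s, 0 < a i - ε * b i := by
  have hev : ∀ᶠ ε : ℝ in nhdsWithin 0 (Set.Ioi 0), ∀ i ∈ s, 0 < a i - ε * b i := by
    refine (Filter.eventually_all_finset s).2 fun i hi => ?_
    have hcont : Tendsto (fun ε : ℝ => a i - ε * b i) (nhds 0) (nhds (a i - 0 * b i)) :=
      Continuous.tendsto (by fun_prop) 0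
    exact (hcont.mono_left nhdsWithin_le_nhds).eventually_const_lt (by simpa using ha i hi)
  obtain ⟨ε, h, hε⟩ := (hev.and self_mem_nhdsWithin).exists
  exact ⟨ε, hε, h⟩

variable [Fintype ι]

theorem exists_linearCombination_eq_zero_of_not_linearIndepOn (w : ι → ℝ) {l : ι → ℝ}
    (hdep : ¬LinearIndepOn ℝ g (Function.support l)) :
    ∃ c : ι → ℝ, (∀ i, l i = 0 → c i = 0) ∧
      Fintype.linearCombination ℝ g c = 0 ∧ c ≠ 0 ∧ c ⬝ᵥ w ≤ 0 := by
  classical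
  have hfin : (Finset.univ.filter fun i => l i ≠ 0 : Set ι) = Function.support l := by
    simp [Function.support]
  rw [← hfin, linearIndepOn_finset_iff] at hdep
  push Not at hdep
  obtain ⟨f, hf, j, hj, hfj⟩ := hdep
  set c : ι → ℝ := fun i => if l i = 0 then 0 else f i
  have hcl : ∀ i, l i = 0 → c i = 0 := fun i hi => if_pos hi
  have hcg : Fintype.linearCombination ℝ g c = 0 := by
    rw [Fintype.linearCombination_apply, ← hf]
    simp [c, Finset.sum_ite, ite_smul]
  have hc0 : c ≠ 0 := by
    intro h
    have hlj : l j ≠ 0 := by simpa using hj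
    exact hfj (by simpa [c, hlj] using congrFun h j)
  rcases le_total (c ⬝ᵥ w) 0 with h | h
  · exact ⟨c, hcl, hcg, hc0, h⟩
  · exact ⟨-c, fun i hi => by simp [hcl i hi], by simp [hcg], by simpa using hc0,
      by simpa using h⟩

theorem exists_support_ssubset {ht : E →ₗ[ℝ] ℝ} (hht : ∀ i, ht (g i) = 1) (w : ι → ℝ)
    {l : ι → ℝ} (hl : 0 ≤ l) (hdep : ¬ LinearIndepOn ℝ g (Function.support l)) :
    ∃ l' : ι → ℝ, 0 ≤ l' ∧
      Fintype.linearCombination ℝ g l' = Fintype.linearCombination ℝ g l ∧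
      l' ⬝ᵥ w ≤ l ⬝ᵥ w ∧ Function.support l' ⊂ Function.support l := by
  classical
  obtain ⟨c, hcl, hcg, hc0, hcw⟩ := exists_linearCombination_eq_zero_of_not_linearIndepOn w hdep
  have hsum : ∑ i, c i = 0 := by
    simpa [Fintype.linearCombination_apply, hht] using congrArg ht hcg
  have hneg : (Finset.univ.filter fun i => c i < 0).Nonempty := by
    rw [Finset.nonempty_iff_ne_empty, Ne, Finset.filter_eq_empty_iff]
    intro h
    exact hc0 <| funext fun i => (Finset.sum_eq_zero_iff_of_nonneg
      fun i hi => not_lt.1 (h hi)).1 hsum i (Finset.mem_univ i)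
  obtain ⟨k, hk, hmin⟩ := Finset.exists_min_image _ (fun i => l i / (-c i)) hneg
  simp only [Finset.mem_filter, Finset.mem_univ, true_and] at hk hmin
  set s := l k / (-c k) with hs
  have hs0 : 0 ≤ s := div_nonneg (hl k) (by linarith)
  refine ⟨l + s • c, fun i => ?_, by simp [hcg], ?_, ?_⟩
  · by_cases hi : c i < 0
    · have := hmin i hi
      rw [le_div_iff₀ (by linarith)] at this
      simp only [Pi.zero_apply, Pi.add_apply, Pi.smul_apply, smul_eq_mul]
      linarith
    · exact add_nonneg (hl i) (mul_nonneg hs0 (not_lt.1 hi))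
  · rw [add_dotProduct, smul_dotProduct, smul_eq_mul]
    linarith [mul_nonpos_of_nonneg_of_nonpos hs0 hcw]
  · refine (Set.ssubset_iff_of_subset ?_).2 ⟨k, fun h => hk.ne (hcl k h), ?_⟩
    · intro i hi h
      exact hi (by simp [h, hcl i h])
    · have hk0 : l k + s * c k = 0 := by
        rw [hs]
        field_simp [hk.ne]
        ring
      simpa using hk0

theorem exists_linearIndepOn_support {ht : E →ₗ[ℝ] ℝ} (hht : ∀ i, ht (g i) = 1) (w : ι → ℝ)
    {l : ι → ℝ} (hl : 0 ≤ l) :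
    ∃ l' : ι → ℝ, 0 ≤ l' ∧
      Fintype.linearCombination ℝ g l' = Fintype.linearCombination ℝ g l ∧
      l' ⬝ᵥ w ≤ l ⬝ᵥ w ∧ LinearIndepOn ℝ g (Function.support l') := by
  induction hn : (Function.support l).ncard using Nat.strong_induction_on generalizing l with
  | _ n ih =>
    by_cases hind : LinearIndepOn ℝ g (Function.support l)
    · exact ⟨l, hl, rfl, le_rfl, hind⟩
    obtain ⟨l₁, hl₁, hg₁, hw₁, hsupp⟩ := exists_support_ssubset hht w hl hind
    obtain ⟨l₂, hl₂, hg₂, hw₂, hind₂⟩ :=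
      ih _ (hn ▸ Set.ncard_lt_ncard hsupp (Set.toFinite _)) hl₁ rfl
    exact ⟨l₂, hl₂, hg₂.trans hg₁, hw₂.trans hw₁, hind₂⟩

/-- The cost vector `w` is generic: it lifts no `g j` onto the hyperplane through the lifts of a
basis extracted from `g` that does not contain `g j`. -/
def IsGenericCost (g : ι → E) (w : ι → ℝ) : Prop :=
  ∀ B, IsSubbasis g B → ∀ j ∉ B, coord g B (g j) ⬝ᵥ w ≠ w j

/-- The subbasis `B` is dual feasible for the linear program of minimizing `l ⬝ᵥ w` among the
nonnegative `l` with a prescribed linear combination of `g`. Geometrically, `B` spans a cone of the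
regular triangulation induced by the heights `w`. -/
def IsDualFeasible (g : ι → E) (w : ι → ℝ) (B : Finset ι) : Prop :=
  IsSubbasis g B ∧ ∀ j ∉ B, coord g B (g j) ⬝ᵥ w < w j

theorem coord_linearCombination_dotProduct (B : Finset ι) (l w : ι → ℝ) :
    coord g B (Fintype.linearCombination ℝ g l) ⬝ᵥ w = ∑ j, l j * (coord g B (g j) ⬝ᵥ w) := by
  simp only [Fintype.linearCombination_apply, map_sum, map_smul, sum_dotProduct, smul_dotProduct,
    smul_eq_mul]

variable {w : ι → ℝ} {B : Finset ι}

theorem IsDualFeasible.coord_dotProduct_le (hB : IsDualFeasible g w B) (j : ι) :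
    coord g B (g j) ⬝ᵥ w ≤ w j := by
  classical
  by_cases hj : j ∈ B
  · rw [coord_apply_of_mem hB.1.1 hj, single_one_dotProduct]
  · exact (hB.2 j hj).le

theorem IsDualFeasible.dotProduct_le (hB : IsDualFeasible g w B) {l : ι → ℝ} (hl : 0 ≤ l) :
    coord g B (Fintype.linearCombination ℝ g l) ⬝ᵥ w ≤ l ⬝ᵥ w := by
  rw [coord_linearCombination_dotProduct]
  exact Finset.sum_le_sum fun j _ => mul_le_mul_of_nonneg_left (hB.coord_dotProduct_le j) (hl j)

theorem IsDualFeasible.dotProduct_lt (hB : IsDualFeasible g w B) {l : ι → ℝ} (hl : 0 ≤ l)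
    {j : ι} (hj : j ∉ B) (hlj : 0 < l j) :
    coord g B (Fintype.linearCombination ℝ g l) ⬝ᵥ w < l ⬝ᵥ w := by
  rw [coord_linearCombination_dotProduct]
  exact Finset.sum_lt_sum
    (fun j _ => mul_le_mul_of_nonneg_left (hB.coord_dotProduct_le j) (hl j))
    ⟨j, Finset.mem_univ j, mul_lt_mul_of_pos_left (hB.2 j hj) hlj⟩

theorem IsDualFeasible.eq_of_pos {B' : Finset ι} (hB : IsDualFeasible g w B)
    (hB' : IsDualFeasible g w B') {z : E} (hz : z ∈ Submodule.span ℝ (Set.range g))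
    (hpos : ∀ i ∈ B, 0 < coord g B z i) (hpos' : ∀ i ∈ B', 0 < coord g B' z i) : B = B' := by
  have hnonneg {B : Finset ι} (h : ∀ i ∈ B, 0 < coord g B z i) : 0 ≤ coord g B z := fun i => by
    by_cases hi : i ∈ B
    · exact (h i hi).le
    · exact (coord_of_notMem hi z).ge
  have hle := hB.dotProduct_le (hnonneg hpos')
  have hle' := hB'.dotProduct_le (hnonneg hpos)
  rw [linearCombination_coord hB'.1 hz] at hle
  rw [linearCombination_coord hB.1 hz] at hle'
  refine Finset.Subset.antisymm (fun j hj => ?_) fun j hj => ?_ <;> by_contra hj'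
  · have hlt := hB'.dotProduct_lt (hnonneg hpos) hj' (hpos j hj)
    rw [linearCombination_coord hB.1 hz] at hlt
    exact hlt.not_ge hle
  · have hlt := hB.dotProduct_lt (hnonneg hpos') hj' (hpos' j hj)
    rw [linearCombination_coord hB'.1 hz] at hlt
    exact hlt.not_ge hle'

theorem IsGeneric.exists_isSubbasis_dotProduct_le {ht : E →ₗ[ℝ] ℝ} (hht : ∀ i, ht (g i) = 1)
    (w : ι → ℝ) {l : ι → ℝ} (hgen : IsGeneric g (Fintype.linearCombination ℝ g l)) (hl : 0 ≤ l) :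
    ∃ B, IsSubbasis g B ∧ (∀ i ∈ B, 0 < coord g B (Fintype.linearCombination ℝ g l) i) ∧
      coord g B (Fintype.linearCombination ℝ g l) ⬝ᵥ w ≤ l ⬝ᵥ w := by
  obtain ⟨l', hl', hg', hw', hind⟩ := exists_linearIndepOn_support hht w hl
  obtain ⟨B, hsub, hB⟩ := exists_isSubbasis_superset hind
  have hcoord : coord g B (Fintype.linearCombination ℝ g l) = l' := by
    rw [← hg']
    exact coord_linearCombination hB.1 fun i hi => not_not.1 fun h => hi (hsub h)
  refine ⟨B, hB, fun i hi => ?_, hcoord ▸ hw'⟩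
  exact lt_of_le_of_ne (hcoord ▸ hl' i) (hgen B hB i hi).symm

theorem IsGenericCost.exists_isDualFeasible (hw : IsGenericCost g w) {ht : E →ₗ[ℝ] ℝ}
    (hht : ∀ i, ht (g i) = 1) {z : E} (hz : z ∈ PointedCone.hull ℝ (Set.range g))
    (hgen : IsGeneric g z) : ∃ B, IsDualFeasible g w B ∧ ∀ i ∈ B, 0 < coord g B z i := by
  classical
  obtain ⟨l, hl, rfl⟩ := mem_hull_range_iff.1 hz
  set z := Fintype.linearCombination ℝ g l
  have hne : (Finset.univ.filter fun B =>
      IsSubbasis g B ∧ ∀ i ∈ B, 0 < coord g B z i).Nonempty := by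
    obtain ⟨B, hB, hpos, -⟩ := hgen.exists_isSubbasis_dotProduct_le hht w hl
    exact ⟨B, by simpa using ⟨hB, hpos⟩⟩
  obtain ⟨B, hBmem, hmin⟩ := Finset.exists_min_image _ (fun B => coord g B z ⬝ᵥ w) hne
  simp only [Finset.mem_filter, Finset.mem_univ, true_and] at hBmem hmin
  obtain ⟨hB, hpos⟩ := hBmem
  refine ⟨B, ⟨hB, fun j hj => ?_⟩, hpos⟩
  by_contra hcon
  have hlt : w j < coord g B (g j) ⬝ᵥ w := lt_of_le_of_ne (not_lt.1 hcon) (hw B hB j hj).symm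
  obtain ⟨ε, hε, hεpos⟩ := exists_pos_forall_pos_sub_mul B hpos (coord g B (g j))
  -- Pivoting `j` into the optimal basis `B` would lower the cost.
  set l' : ι → ℝ := coord g B z - ε • coord g B (g j) + ε • Pi.single j 1 with hl'
  have hl'nonneg : 0 ≤ l' := fun i => by
    have hsingle : (0 : ι → ℝ) ≤ Pi.single j 1 := Pi.single_nonneg.2 zero_le_one
    have hs : 0 ≤ ε * (Pi.single j 1 : ι → ℝ) i := mul_nonneg hε.le (hsingle i)
    by_cases hi : i ∈ B
    · exact add_nonneg (hεpos i hi).le hs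
    · simpa [hl', coord_of_notMem hi] using hs
  have hgl' : Fintype.linearCombination ℝ g l' = z := by
    simp [hl', linearCombination_coord hB (linearCombination_mem_span g l),
      linearCombination_coord hB (Submodule.subset_span (Set.mem_range_self j)), z]
  obtain ⟨B', hB', hpos', hle⟩ :=
    IsGeneric.exists_isSubbasis_dotProduct_le hht w (hgl'.symm ▸ hgen) hl'nonneg
  rw [hgl'] at hpos' hle
  have hcost : l' ⬝ᵥ w = coord g B z ⬝ᵥ w - ε * (coord g B (g j) ⬝ᵥ w - w j) := by
    simp only [hl', add_dotProduct, sub_dotProduct, smul_dotProduct, single_one_dotProduct,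
      smul_eq_mul]
    ring
  have := hmin B' ⟨hB', hpos'⟩
  linarith [mul_pos hε (sub_pos.2 hlt)]

end LinearProgram

section Genericity

variable {E ι : Type*} [AddCommGroup E] [Module ℝ E]

theorem exists_pos_forall_dotProduct_ne_zero [Fintype ι] {κ : Type*} [Finite κ] {c : κ → ι → ℝ}
    (hc : ∀ k, c k ≠ 0) : ∃ μ : ι → ℝ, (∀ i, 0 < μ i) ∧ ∀ k, c k ⬝ᵥ μ ≠ 0 := by
  -- All but finitely many points of the moment curve work.
  let e := Fintype.equivFin ι
  let P : κ → Polynomial ℝ := fun k => ∑ i, Polynomial.monomial (e i : ℕ) (c k i)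
  have hP (k : κ) : P k ≠ 0 := by
    intro h0
    refine hc k (funext fun i => ?_)
    have hcoeff := congrArg (Polynomial.coeff · (e i : ℕ)) h0
    simp only [P, Polynomial.finsetSum_coeff, Polynomial.coeff_monomial] at hcoeff
    rw [Finset.sum_eq_single_of_mem i (Finset.mem_univ i)
      fun j _ hj => if_neg (mt Fin.val_inj.1 (e.injective.ne hj)), if_pos rfl] at hcoeff
    exact hcoeff
  have hfin : (⋃ k, {x : ℝ | (P k).IsRoot x}).Finite :=
    Set.finite_iUnion fun k => Polynomial.finite_setOfPred_isRoot (hP k)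
  obtain ⟨τ, hτ, hroot⟩ := (Set.Ioi_infinite (0 : ℝ)).exists_notMem_finite hfin
  refine ⟨fun i => τ ^ (e i : ℕ), fun i => pow_pos hτ _, fun k h0 => hroot ?_⟩
  refine Set.mem_iUnion.2 ⟨k, ?_⟩
  simpa [Polynomial.IsRoot, P, Polynomial.eval_finsetSum, dotProduct] using h0

theorem exists_isGenericCost [Fintype ι] (g : ι → E) : ∃ w : ι → ℝ, IsGenericCost g w := by
  classical
  let c (q : {q : Finset ι × ι // IsSubbasis g q.1 ∧ q.2 ∉ q.1}) : ι → ℝ :=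
    Pi.single q.1.2 1 - coord g q.1.1 (g q.1.2)
  have hc (q) : c q ≠ 0 := fun h0 => by
    simpa [c, coord_of_notMem q.2.2] using congrFun h0 q.1.2
  obtain ⟨w, -, hw⟩ := exists_pos_forall_dotProduct_ne_zero hc
  refine ⟨w, fun B hB j hj h => hw ⟨(B, j), hB, hj⟩ ?_⟩
  change (Pi.single j 1 - coord g B (g j)) ⬝ᵥ w = 0
  rw [sub_dotProduct, single_one_dotProduct, h, sub_self]

theorem exists_isGeneric [Fintype ι] (g : ι → E) :
    ∃ μ : ι → ℝ, (∀ i, 0 < μ i) ∧ IsGeneric g (Fintype.linearCombination ℝ g μ) := by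
  classical
  let c (q : {q : Finset ι × ι // IsSubbasis g q.1 ∧ q.2 ∈ q.1}) (j : ι) : ℝ :=
    coord g q.1.1 (g j) q.1.2
  have hc (q) : c q ≠ 0 := fun h0 => by
    simpa [c, coord_apply_of_mem q.2.1.1 q.2.2] using congrFun h0 q.1.2
  obtain ⟨μ, hpos, hμ⟩ := exists_pos_forall_dotProduct_ne_zero hc
  refine ⟨μ, hpos, fun B hB i hi h => hμ ⟨(B, i), hB, hi⟩ ?_⟩
  rw [← h]
  simp [c, dotProduct, Fintype.linearCombination_apply, mul_comm]

/-- The cones over the subbases in `𝓣` triangulate the cone generated by `g`: a generic point of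
the latter lies in the interior of exactly one of them. -/
def IsTriangulation (g : ι → E) (𝓣 : Set (Finset ι)) : Prop :=
  (∀ B ∈ 𝓣, IsSubbasis g B) ∧ ∀ z ∈ PointedCone.hull ℝ (Set.range g), IsGeneric g z →
    ∃! B, B ∈ 𝓣 ∧ ∀ i ∈ B, 0 < coord g B z i

theorem exists_isTriangulation [Finite ι] {g : ι → E} {ht : E →ₗ[ℝ] ℝ} (hht : ∀ i, ht (g i) = 1) :
    ∃ 𝓣, IsTriangulation g 𝓣 := by
  cases nonempty_fintype ι
  obtain ⟨w, hw⟩ := exists_isGenericCost g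
  refine ⟨{B | IsDualFeasible g w B}, fun B hB => hB.1, fun z hz hgen => ?_⟩
  obtain ⟨B, hB, hpos⟩ := hw.exists_isDualFeasible hht hz hgen
  exact ⟨B, ⟨hB, hpos⟩, fun B' hB' =>
    hB'.1.eq_of_pos hB (PointedCone.hull_le_span ℝ _ hz) hB'.2 hpos⟩

end Genericity

section Perturbation

variable {E ι : Type*} [AddCommGroup E] [Module ℝ E]

/-- The pair `(a, b)` is lexicographically positive, i.e. `a + ε b` is positive for small
`ε > 0`. -/
def LexPos (a b : ℝ) : Prop := 0 < a ∨ a = 0 ∧ 0 < b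

theorem LexPos.nonneg {a b : ℝ} (h : LexPos a b) : 0 ≤ a := by
  rcases h with h | ⟨h, -⟩
  exacts [h.le, h.ge]

theorem eventually_pos_add_mul_iff (a : ℝ) {b : ℝ} (hb : b ≠ 0) :
    ∀ᶠ ε : ℝ in nhdsWithin 0 (Set.Ioi 0), (0 < a + ε * b ↔ LexPos a b) ∧ a + ε * b ≠ 0 := by
  have hlim : Tendsto (fun ε : ℝ => a + ε * b) (nhdsWithin 0 (Set.Ioi 0)) (nhds a) := by
    have : Tendsto (fun ε : ℝ => a + ε * b) (nhds 0) (nhds (a + 0 * b)) :=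
      Continuous.tendsto (by fun_prop) 0
    simpa using this.mono_left nhdsWithin_le_nhds
  rcases lt_trichotomy a 0 with h | rfl | h
  · filter_upwards [hlim.eventually_lt_const h] with ε hε
    exact ⟨⟨fun h' => absurd h' hε.not_gt, fun h' => absurd h'.nonneg h.not_ge⟩, hε.ne⟩
  · filter_upwards [self_mem_nhdsWithin] with ε hε
    have hε : 0 < ε := hε
    simp [LexPos, hε, hb, hε.ne']
  · filter_upwards [hlim.eventually_const_lt h] with ε hε
    exact ⟨⟨fun _ => Or.inl h, fun _ => hε⟩, hε.ne'⟩

variable [Finite ι] {g : ι → E} {x y : E}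

theorem IsGeneric.eventually_coord_pos_iff (hy : IsGeneric g y) (x : E) :
    ∀ᶠ ε : ℝ in nhdsWithin 0 (Set.Ioi 0), ∀ B, IsSubbasis g B → ∀ i ∈ B,
      (0 < coord g B (x + ε • y) i ↔ LexPos (coord g B x i) (coord g B y i)) ∧
        coord g B (x + ε • y) i ≠ 0 := by
  refine Filter.eventually_all.2 fun B => Filter.eventually_imp_distrib_left.2 fun hB =>
    (Filter.eventually_all_finset B).2 fun i hi => ?_
  simpa using eventually_pos_add_mul_iff (coord g B x i) (hy B hB i hi)

variable {𝓣 : Set (Finset ι)}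

theorem IsTriangulation.eventually_mem_hull_iff (h𝓣 : IsTriangulation g 𝓣)
    (hx : x ∈ Submodule.span ℝ (Set.range g)) (hy : y ∈ Submodule.span ℝ (Set.range g))
    (hgen : IsGeneric g y) :
    (∀ᶠ ε : ℝ in nhdsWithin 0 (Set.Ioi 0), x + ε • y ∈ PointedCone.hull ℝ (Set.range g)) ↔
      ∃ B ∈ 𝓣, ∀ i ∈ B, LexPos (coord g B x i) (coord g B y i) := by
  constructor
  · intro h
    obtain ⟨ε, hmem, hsign⟩ := (h.and (hgen.eventually_coord_pos_iff x)).exists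
    obtain ⟨B, ⟨hB, hpos⟩, -⟩ := h𝓣.2 _ hmem fun B hB i hi => (hsign B hB i hi).2
    exact ⟨B, hB, fun i hi => (hsign B (h𝓣.1 B hB) i hi).1.1 (hpos i hi)⟩
  · rintro ⟨B, hB, h⟩
    filter_upwards [hgen.eventually_coord_pos_iff x] with ε hsign
    exact mem_hull_of_coord_nonneg (h𝓣.1 B hB) (add_mem hx (Submodule.smul_mem _ _ hy))
      fun i hi => ((hsign B (h𝓣.1 B hB) i hi).1.2 (h i hi)).le

theorem IsTriangulation.eq_of_lexPos (h𝓣 : IsTriangulation g 𝓣)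
    (hx : x ∈ Submodule.span ℝ (Set.range g)) (hy : y ∈ Submodule.span ℝ (Set.range g))
    (hgen : IsGeneric g y) {B B' : Finset ι} (hB : B ∈ 𝓣) (hB' : B' ∈ 𝓣)
    (h : ∀ i ∈ B, LexPos (coord g B x i) (coord g B y i))
    (h' : ∀ i ∈ B', LexPos (coord g B' x i) (coord g B' y i)) : B = B' := by
  obtain ⟨ε, hsign⟩ := (hgen.eventually_coord_pos_iff x).exists
  have hpos {B : Finset ι} (hB : B ∈ 𝓣) (h : ∀ i ∈ B, LexPos (coord g B x i) (coord g B y i)) :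
      ∀ i ∈ B, 0 < coord g B (x + ε • y) i := fun i hi => (hsign B (h𝓣.1 B hB) i hi).1.2 (h i hi)
  have hmem := mem_hull_of_coord_nonneg (h𝓣.1 B hB)
    (add_mem hx (Submodule.smul_mem _ ε hy)) fun i hi => (hpos hB h i hi).le
  exact (h𝓣.2 _ hmem fun B hB i hi => (hsign B hB i hi).2).unique ⟨hB, hpos hB h⟩ ⟨hB', hpos hB' h'⟩

theorem IsTriangulation.mem_hull_iff_eventually (h𝓣 : IsTriangulation g 𝓣)
    (hy : y ∈ PointedCone.hull ℝ (Set.range g)) (hgen : IsGeneric g y) :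
    x ∈ PointedCone.hull ℝ (Set.range g) ↔ x ∈ Submodule.span ℝ (Set.range g) ∧
      ∀ᶠ ε : ℝ in nhdsWithin 0 (Set.Ioi 0), x + ε • y ∈ PointedCone.hull ℝ (Set.range g) := by
  refine ⟨fun hx => ⟨PointedCone.hull_le_span ℝ _ hx, ?_⟩, fun ⟨hx, h⟩ => ?_⟩
  · filter_upwards [self_mem_nhdsWithin] with ε hε
    exact add_mem hx (PointedCone.smul_mem _ (le_of_lt hε) hy)
  · obtain ⟨B, hB, h⟩ :=
      (h𝓣.eventually_mem_hull_iff hx (PointedCone.hull_le_span ℝ _ hy) hgen).1 h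
    exact mem_hull_of_coord_nonneg (h𝓣.1 B hB) hx fun i hi => (h i hi).nonneg

end Perturbation

/-! ### Counting lattice points in half-open cones -/

section HalfOpenUnit

/-- The unit interval without its right end point if `b` is positive, and without its left end
point otherwise: the set of `a ≤ 1` such that `a + ε b` lies in `(0, 1)` for small `ε > 0`, when
`b ≠ 0`. -/
def halfOpenUnit (b : ℝ) : Set ℝ :=
  if 0 < b then Set.Ico 0 1 else Set.Ioc 0 1

variable {a a' b : ℝ}

theorem halfOpenUnit_subset_Icc (b : ℝ) : halfOpenUnit b ⊆ Set.Icc 0 1 := by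
  unfold halfOpenUnit
  split_ifs
  exacts [Set.Ico_subset_Icc_self, Set.Ioc_subset_Icc_self]

theorem lexPos_add_natCast (ha : a ∈ halfOpenUnit b) (n : ℕ) : LexPos (a + n) b := by
  have hn : (0 : ℝ) ≤ n := n.cast_nonneg
  unfold halfOpenUnit at ha
  split_ifs at ha with hb
  · rcases (add_nonneg ha.1 hn).eq_or_lt with h | h
    exacts [Or.inr ⟨h.symm, hb⟩, Or.inl h]
  · exact Or.inl (add_pos_of_pos_of_nonneg ha.1 hn)

theorem LexPos.exists_sub_natCast_mem_halfOpenUnit (h : LexPos a b) :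
    ∃ n : ℕ, a - n ∈ halfOpenUnit b := by
  unfold halfOpenUnit
  split_ifs with hb
  · refine ⟨⌊a⌋₊, ?_⟩
    constructor <;> linarith [Nat.floor_le h.nonneg, Nat.lt_floor_add_one a]
  · have ha : 0 < a := h.resolve_right fun h' => hb h'.2
    refine ⟨⌈a⌉₊ - 1, ?_⟩
    rw [Nat.cast_sub (Nat.one_le_ceil_iff.2 ha), Nat.cast_one]
    constructor <;> linarith [Nat.le_ceil a, Nat.ceil_lt_add_one ha.le]

theorem eq_of_add_natCast_eq (ha : a ∈ halfOpenUnit b) (ha' : a' ∈ halfOpenUnit b) {n n' : ℕ}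
    (h : a + n = a' + n') : n = n' := by
  have hlt : |(n : ℝ) - n'| < 1 := by
    rw [abs_lt]
    unfold halfOpenUnit at ha ha'
    split_ifs at ha ha' <;> constructor <;> linarith [ha.1, ha.2, ha'.1, ha'.2]
  have hlt' : |(n : ℤ) - n'| < 1 := by exact_mod_cast hlt
  have := Int.abs_lt_one_iff.1 hlt'
  omega

theorem one_sub_mem_halfOpenUnit_neg (hb : b ≠ 0) (ha : a ∈ halfOpenUnit b) :
    1 - a ∈ halfOpenUnit (-b) := by
  unfold halfOpenUnit at ha ⊢
  rcases hb.lt_or_gt with hb | hb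
  · rw [if_neg hb.not_gt] at ha
    rw [if_pos (neg_pos.2 hb)]
    constructor <;> linarith [ha.1, ha.2]
  · rw [if_pos hb] at ha
    rw [if_neg (neg_neg_of_pos hb).not_gt]
    constructor <;> linarith [ha.1, ha.2]

end HalfOpenUnit

/-- The coefficient of `X ^ t` in the power series `(∑ j ≤ D, h j * X ^ j) / (1 - X) ^ D`. -/
def hilbertCoeff (D : ℕ) (h : ℕ → ℕ) (t : ℤ) : ℕ :=
  ∑ j ∈ Finset.range (D + 1), if (j : ℤ) ≤ t then h j * D.multichoose (t - j).toNat else 0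

/-- A finite family of elements of degree one in a graded lattice `G` mapped to a real vector
space `E`. -/
structure LatticeConfiguration (E ι G : Type*) [AddCommGroup E] [Module ℝ E] [Fintype ι]
    [AddCommGroup G] where
  /-- the realization of lattice points as vectors -/
  real : G →+ E
  /-- the points of the configuration -/
  point : ι → G
  /-- the grading of the vector space -/
  height : E →ₗ[ℝ] ℝ
  /-- the grading of the lattice -/
  deg : G →+ ℤ
  height_real : ∀ p, height (real p) = deg p
  deg_point : ∀ i, deg (point i) = 1
  finite_zonotope : {p | ∃ l : ι → ℝ, (∀ i, |l i| ≤ 1) ∧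
    Fintype.linearCombination ℝ (fun i => real (point i)) l = real p}.Finite

namespace LatticeConfiguration

variable {E ι G : Type*} [AddCommGroup E] [Module ℝ E] [Fintype ι] [AddCommGroup G]
  (L : LatticeConfiguration E ι G)

/-- The vectors realizing the points of the configuration. -/
def vec (i : ι) : E := L.real (L.point i)

/-- The real span of the configuration. -/
def span : Submodule ℝ E := Submodule.span ℝ (Set.range L.vec)

/-- The dimension of the span of the configuration. -/
def rank : ℕ := Module.finrank ℝ L.span

theorem height_vec (i : ι) : L.height (L.vec i) = 1 := by
  simp [vec, L.height_real, L.deg_point]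

theorem real_sum_smul (c : ι → ℕ) :
    L.real (∑ i, c i • L.point i) = Fintype.linearCombination ℝ L.vec fun i => (c i : ℝ) := by
  simp [Fintype.linearCombination_apply, vec, Nat.cast_smul_eq_nsmul]

theorem deg_sum_smul (c : ι → ℕ) : L.deg (∑ i, c i • L.point i) = ∑ i, (c i : ℤ) := by
  simp [L.deg_point]

theorem coord_real_add_sum_smul {B : Finset ι} (hB : IsSubbasis L.vec B) (p : G) {c : ι → ℕ}
    (hc : ∀ i ∉ B, c i = 0) (i : ι) :
    coord L.vec B (L.real (p + ∑ i, c i • L.point i)) i = coord L.vec B (L.real p) i + c i := by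
  rw [map_add, real_sum_smul, map_add, Pi.add_apply,
    coord_linearCombination hB.1 fun i hi => by rw [hc i hi, Nat.cast_zero]]

theorem card_eq_rank {B : Finset ι} (hB : IsSubbasis L.vec B) : B.card = L.rank :=
  hB.card_eq_finrank

theorem deg_eq_sum_coord {B : Finset ι} (hB : IsSubbasis L.vec B) {p : G}
    (hp : L.real p ∈ L.span) : (L.deg p : ℝ) = ∑ i ∈ B, coord L.vec B (L.real p) i := by
  rw [← L.height_real]
  conv_lhs => rw [← linearCombination_coord hB hp, Fintype.linearCombination_apply]
  simp only [map_sum, map_smul, L.height_vec, smul_eq_mul, mul_one]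
  exact (Finset.sum_subset (Finset.subset_univ B) fun i _ hi => coord_of_notMem hi _).symm

/-- The pairs of a cone of the triangulation `𝓣` and a lattice point of its half-open fundamental
parallelepiped, where `y` determines which facets of the parallelepiped are removed. -/
def boxPoints (𝓣 : Set (Finset ι)) (y : E) : Set (Finset ι × G) :=
  {q | q.1 ∈ 𝓣 ∧ L.real q.2 ∈ L.span ∧
    ∀ i ∈ q.1, coord L.vec q.1 (L.real q.2) i ∈ halfOpenUnit (coord L.vec q.1 y i)}

/-- The number of box points of degree `j`. -/
def hVector (𝓣 : Set (Finset ι)) (y : E) (j : ℤ) : ℕ := {q ∈ L.boxPoints 𝓣 y | L.deg q.2 = j}.ncard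

variable {L} {𝓣 : Set (Finset ι)} {y : E}

theorem finite_boxPoints (h𝓣 : IsTriangulation L.vec 𝓣) (y : E) : (L.boxPoints 𝓣 y).Finite := by
  refine (Set.finite_univ.prod L.finite_zonotope).subset fun q ⟨hB, hspan, hbox⟩ => ⟨trivial, ?_⟩
  refine ⟨coord L.vec q.1 (L.real q.2), fun i => ?_, linearCombination_coord (h𝓣.1 _ hB) hspan⟩
  by_cases hi : i ∈ q.1
  · have hmem := halfOpenUnit_subset_Icc _ (hbox i hi)
    exact abs_le.2 ⟨by linarith [hmem.1], hmem.2⟩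
  · rw [coord_of_notMem hi, abs_zero]
    exact zero_le_one

theorem deg_nonneg_of_mem_boxPoints (h𝓣 : IsTriangulation L.vec 𝓣) {q : Finset ι × G}
    (hq : q ∈ L.boxPoints 𝓣 y) : 0 ≤ L.deg q.2 := by
  have h : (0 : ℝ) ≤ L.deg q.2 := by
    rw [deg_eq_sum_coord L (h𝓣.1 _ hq.1) hq.2.1]
    exact Finset.sum_nonneg fun i hi => (halfOpenUnit_subset_Icc _ (hq.2.2 i hi)).1
  exact_mod_cast h

theorem deg_le_rank_of_mem_boxPoints (h𝓣 : IsTriangulation L.vec 𝓣) {q : Finset ι × G}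
    (hq : q ∈ L.boxPoints 𝓣 y) : L.deg q.2 ≤ L.rank := by
  have h : (L.deg q.2 : ℝ) ≤ L.rank := by
    rw [deg_eq_sum_coord L (h𝓣.1 _ hq.1) hq.2.1, ← card_eq_rank L (h𝓣.1 _ hq.1)]
    simpa using Finset.sum_le_card_nsmul q.1 _ 1 fun i hi =>
      (halfOpenUnit_subset_Icc _ (hq.2.2 i hi)).2
  exact_mod_cast h

theorem reflect_mem_boxPoints (h𝓣 : IsTriangulation L.vec 𝓣) (hy : IsGeneric L.vec y)
    {q : Finset ι × G} (hq : q ∈ L.boxPoints 𝓣 y) :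
    (q.1, ∑ i ∈ q.1, L.point i - q.2) ∈ L.boxPoints 𝓣 (-y) := by
  classical
  obtain ⟨B, p⟩ := q
  obtain ⟨hB, hspan, hbox⟩ := hq
  have hBsub := h𝓣.1 _ hB
  have hsum : L.real (∑ i ∈ B, L.point i) =
      Fintype.linearCombination ℝ L.vec fun i => if i ∈ B then 1 else 0 := by
    simp [Fintype.linearCombination_apply, vec]
  refine ⟨hB, ?_, fun i hi => ?_⟩
  · rw [map_sub, hsum]
    exact sub_mem (linearCombination_mem_span _ _) hspan
  · have hone : coord L.vec B (L.real (∑ i ∈ B, L.point i)) i = 1 := by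
      rw [hsum, coord_linearCombination hBsub.1 fun i hi => if_neg hi]
      exact if_pos hi
    simp only [map_sub, map_neg, Pi.sub_apply, Pi.neg_apply, hone]
    exact one_sub_mem_halfOpenUnit_neg (hy B hBsub i hi) (hbox i hi)

theorem hVector_le_hVector_neg (h𝓣 : IsTriangulation L.vec 𝓣) (hy : IsGeneric L.vec y) (j : ℤ) :
    L.hVector 𝓣 y j ≤ L.hVector 𝓣 (-y) (L.rank - j) := by
  refine Set.ncard_le_ncard_of_injOn (fun q => (q.1, ∑ i ∈ q.1, L.point i - q.2)) ?_ ?_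
    ((finite_boxPoints h𝓣 (-y)).subset fun q hq => hq.1)
  · rintro q ⟨hq, rfl⟩
    refine ⟨reflect_mem_boxPoints h𝓣 hy hq, ?_⟩
    simp only [map_sub, map_sum, L.deg_point]
    rw [← card_eq_rank L (h𝓣.1 _ hq.1), Finset.sum_const, nsmul_one]
  · rintro ⟨B, p⟩ - ⟨B', p'⟩ - h
    obtain ⟨rfl, h⟩ := Prod.mk.inj h
    exact Prod.ext rfl (sub_right_injective h)

theorem hVector_neg (h𝓣 : IsTriangulation L.vec 𝓣) (hy : IsGeneric L.vec y) (j : ℤ) :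
    L.hVector 𝓣 (-y) (L.rank - j) = L.hVector 𝓣 y j := by
  refine le_antisymm ?_ (hVector_le_hVector_neg h𝓣 hy j)
  simpa using hVector_le_hVector_neg h𝓣 hy.neg (L.rank - j)

variable (L) in
/-- The lattice points of degree `t` in the cone over the configuration translated by a small
negative multiple of `y`. -/
def perturbedPoints (y : E) (t : ℤ) : Set G :=
  {p | L.deg p = t ∧ L.real p ∈ L.span ∧ ∀ᶠ ε : ℝ in nhdsWithin 0 (Set.Ioi 0),
    L.real p + ε • y ∈ PointedCone.hull ℝ (Set.range L.vec)}

variable (L) in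
/-- The ways to write a lattice point of degree `t` as a box point plus a nonnegative integral
combination of the generators of the corresponding cone of the triangulation. -/
def boxDecompositions (𝓣 : Set (Finset ι)) (y : E) (t : ℤ) : Set ((Finset ι × G) × (ι →₀ ℕ)) :=
  {x | x.1 ∈ L.boxPoints 𝓣 y ∧ (∀ i ∉ x.1.1, x.2 i = 0) ∧ L.deg x.1.2 + ∑ i, (x.2 i : ℤ) = t}

variable {t : ℤ}

theorem lexPos_coord_of_mem_boxDecompositions (h𝓣 : IsTriangulation L.vec 𝓣)
    {x : (Finset ι × G) × (ι →₀ ℕ)} (hx : x ∈ L.boxDecompositions 𝓣 y t) (i : ι) (hi : i ∈ x.1.1) :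
    LexPos (coord L.vec x.1.1 (L.real (x.1.2 + ∑ i, x.2 i • L.point i)) i)
      (coord L.vec x.1.1 y i) := by
  rw [coord_real_add_sum_smul L (h𝓣.1 _ hx.1.1) _ hx.2.1]
  exact lexPos_add_natCast (hx.1.2.2 i hi) _

theorem real_mem_span_of_mem_boxDecompositions {x : (Finset ι × G) × (ι →₀ ℕ)}
    (hx : x ∈ L.boxDecompositions 𝓣 y t) : L.real (x.1.2 + ∑ i, x.2 i • L.point i) ∈ L.span := by
  rw [map_add, real_sum_smul]
  exact add_mem hx.1.2.1 (linearCombination_mem_span _ _)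

theorem injOn_boxDecompositions (h𝓣 : IsTriangulation L.vec 𝓣) (hspan : y ∈ L.span)
    (hy : IsGeneric L.vec y) :
    Set.InjOn (fun x => x.1.2 + ∑ i, x.2 i • L.point i) (L.boxDecompositions 𝓣 y t) := by
  rintro ⟨⟨B, p⟩, c⟩ hx ⟨⟨B', p'⟩, c'⟩ hx' h
  change p + ∑ i, c i • L.point i = p' + ∑ i, c' i • L.point i at h
  obtain rfl : B = B' := h𝓣.eq_of_lexPos (real_mem_span_of_mem_boxDecompositions hx) hspan hy
    hx.1.1 hx'.1.1 (lexPos_coord_of_mem_boxDecompositions h𝓣 hx)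
    (h ▸ lexPos_coord_of_mem_boxDecompositions h𝓣 hx')
  have hB := h𝓣.1 _ hx.1.1
  obtain rfl : c = c' := by
    ext i
    by_cases hi : i ∈ B
    · refine eq_of_add_natCast_eq (hx.1.2.2 i hi) (hx'.1.2.2 i hi) ?_
      rw [← coord_real_add_sum_smul L hB p hx.2.1, h, coord_real_add_sum_smul L hB p' hx'.2.1]
    · rw [hx.2.1 i hi, hx'.2.1 i hi]
  rw [add_right_cancel h]

theorem bijOn_boxDecompositions (h𝓣 : IsTriangulation L.vec 𝓣) (hspan : y ∈ L.span)
    (hy : IsGeneric L.vec y) (t : ℤ) :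
    Set.BijOn (fun x => x.1.2 + ∑ i, x.2 i • L.point i) (L.boxDecompositions 𝓣 y t)
      (L.perturbedPoints y t) := by
  refine ⟨fun x hx => ⟨?_, real_mem_span_of_mem_boxDecompositions hx, ?_⟩,
    injOn_boxDecompositions h𝓣 hspan hy, fun p ⟨hdeg, hp, hev⟩ => ?_⟩
  · rw [map_add, deg_sum_smul, hx.2.2]
  · exact (h𝓣.eventually_mem_hull_iff (real_mem_span_of_mem_boxDecompositions hx) hspan hy).2
      ⟨_, hx.1.1, lexPos_coord_of_mem_boxDecompositions h𝓣 hx⟩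
  · obtain ⟨B, hB, hlex⟩ := (h𝓣.eventually_mem_hull_iff hp hspan hy).1 hev
    have hfract (i : ι) : ∃ n : ℕ, (i ∈ B →
        coord L.vec B (L.real p) i - n ∈ halfOpenUnit (coord L.vec B y i)) ∧ (i ∉ B → n = 0) := by
      by_cases hi : i ∈ B
      · obtain ⟨n, hn⟩ := (hlex i hi).exists_sub_natCast_mem_halfOpenUnit
        exact ⟨n, fun _ => hn, fun h => absurd hi h⟩
      · exact ⟨0, fun h => absurd h hi, fun _ => rfl⟩
    choose c hc hc0 using hfract
    set q := p - ∑ i, c i • L.point i with hq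
    have hqp : q + ∑ i, c i • L.point i = p := sub_add_cancel _ _
    refine ⟨((B, q), Finsupp.equivFunOnFinite.symm c), ⟨⟨hB, ?_, fun i hi => ?_⟩, hc0, ?_⟩, hqp⟩
    · change L.real q ∈ L.span
      rw [hq, map_sub, real_sum_smul]
      exact sub_mem hp (linearCombination_mem_span L.vec _)
    · have hcoord := coord_real_add_sum_smul L (h𝓣.1 B hB) q hc0 i
      rw [hqp] at hcoord
      change coord L.vec B (L.real q) i ∈ _
      rw [eq_sub_of_add_eq hcoord.symm]
      exact hc i hi
    · change L.deg q + ∑ i, (c i : ℤ) = t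
      rw [← deg_sum_smul L, ← map_add, hqp, hdeg]

theorem boxDecompositions_eq_sigma [DecidableEq ι] (h𝓣 : IsTriangulation L.vec 𝓣) (t : ℤ) :
    L.boxDecompositions 𝓣 y t = Equiv.sigmaEquivProd _ _ ''
      ((finite_boxPoints h𝓣 y).toFinset.sigma fun q =>
        if L.deg q.2 ≤ t then q.1.finsuppAntidiag (t - L.deg q.2).toNat else ∅ : Finset _) := by
  rw [Equiv.image_eq_preimage_symm]
  ext ⟨⟨B, p⟩, c⟩
  simp only [boxDecompositions, Set.mem_ofPred_eq, Set.mem_preimage, Finset.mem_coe,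
    Finset.mem_sigma, Equiv.sigmaEquivProd_symm_apply, Set.Finite.mem_toFinset]
  refine and_congr_right fun _ => ?_
  have hsum (h : ∀ i ∉ B, c i = 0) : ∑ i ∈ B, c i = ∑ i, c i :=
    Finset.sum_subset (Finset.subset_univ B) fun i _ hi => h i hi
  have hsupp : c.support ⊆ B ↔ ∀ i ∉ B, c i = 0 := by
    simp only [Finset.subset_iff, Finsupp.mem_support_iff, not_imp_comm]
  rw [← Nat.cast_sum]
  split_ifs with hle
  · rw [Finset.mem_finsuppAntidiag, hsupp, and_comm]
    refine and_congr_left fun h => ?_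
    rw [hsum h]
    omega
  · simp only [Finset.notMem_empty, iff_false, not_and]
    omega

theorem finite_boxDecompositions (h𝓣 : IsTriangulation L.vec 𝓣) (t : ℤ) :
    (L.boxDecompositions 𝓣 y t).Finite := by
  classical
  rw [boxDecompositions_eq_sigma h𝓣]
  exact (Finset.finite_toSet _).image _

theorem ncard_boxDecompositions (h𝓣 : IsTriangulation L.vec 𝓣) (t : ℤ) :
    (L.boxDecompositions 𝓣 y t).ncard = ∑ q ∈ (finite_boxPoints h𝓣 y).toFinset,
      if L.deg q.2 ≤ t then L.rank.multichoose (t - L.deg q.2).toNat else 0 := by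
  classical
  rw [boxDecompositions_eq_sigma h𝓣, Set.ncard_image_of_injective _ (Equiv.injective _),
    Set.ncard_coe_finset, Finset.card_sigma]
  refine Finset.sum_congr rfl fun q hq => ?_
  split_ifs
  · rw [Finset.card_finsuppAntidiag_nat_eq_multichoose,
      card_eq_rank L (h𝓣.1 _ ((Set.Finite.mem_toFinset _).1 hq).1)]
  · rfl

theorem finite_perturbedPoints (h𝓣 : IsTriangulation L.vec 𝓣) (hspan : y ∈ L.span)
    (hy : IsGeneric L.vec y) (t : ℤ) : (L.perturbedPoints y t).Finite := by
  rw [← (bijOn_boxDecompositions h𝓣 hspan hy t).image_eq]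
  exact (finite_boxDecompositions h𝓣 t).image _

theorem ncard_perturbedPoints (h𝓣 : IsTriangulation L.vec 𝓣) (hspan : y ∈ L.span)
    (hy : IsGeneric L.vec y) (t : ℤ) :
    (L.perturbedPoints y t).ncard = hilbertCoeff L.rank (fun j => L.hVector 𝓣 y j) t := by
  classical
  have hbij := bijOn_boxDecompositions h𝓣 hspan hy t
  rw [← hbij.image_eq, hbij.injOn.ncard_image, ncard_boxDecompositions h𝓣]
  have hnonneg (q) (hq : q ∈ (finite_boxPoints h𝓣 y).toFinset) : 0 ≤ L.deg q.2 :=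
    deg_nonneg_of_mem_boxPoints h𝓣 ((Set.Finite.mem_toFinset _).1 hq)
  have hmaps (q) (hq : q ∈ (finite_boxPoints h𝓣 y).toFinset) :
      (L.deg q.2).toNat ∈ Finset.range (L.rank + 1) := by
    have := deg_le_rank_of_mem_boxPoints h𝓣 ((Set.Finite.mem_toFinset _).1 hq)
    exact Finset.mem_range.2 (by omega)
  rw [← Finset.sum_fiberwise_of_maps_to hmaps]
  refine Finset.sum_congr rfl fun j _ => ?_
  have hdeg (q) (hq : q ∈ (finite_boxPoints h𝓣 y).toFinset) :
      (L.deg q.2).toNat = j ↔ L.deg q.2 = j := by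
    have := hnonneg q hq
    omega
  have hcard : L.hVector 𝓣 y j =
      ((finite_boxPoints h𝓣 y).toFinset.filter fun q => L.deg q.2 = j).card := by
    rw [hVector, ← Set.ncard_coe_finset]
    congr 1
    ext q
    simp
  rw [Finset.filter_congr hdeg, Finset.sum_congr rfl fun q hq => by
    rw [(Finset.mem_filter.1 hq).2], Finset.sum_const, ← hcard]
  split_ifs <;> simp

variable (L) in
theorem exists_ncard_eq_hilbertCoeff : ∃ (h : ℕ → ℕ) (μ : ι → ℝ), (∀ i, 0 < μ i) ∧ ∀ t : ℤ,
    {p | L.deg p = t ∧ L.real p ∈ PointedCone.hull ℝ (Set.range L.vec)}.Finite ∧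
    {p | L.deg p = t ∧ L.real p ∈ PointedCone.hull ℝ (Set.range L.vec)}.ncard =
      hilbertCoeff L.rank h t ∧
    (L.perturbedPoints (-Fintype.linearCombination ℝ L.vec μ) t).ncard =
      hilbertCoeff L.rank (fun j => h (L.rank - j)) t := by
  obtain ⟨𝓣, h𝓣⟩ := exists_isTriangulation L.height_vec
  obtain ⟨μ, hμ, hy⟩ := exists_isGeneric L.vec
  set y := Fintype.linearCombination ℝ L.vec μ
  have hspan : y ∈ L.span := linearCombination_mem_span _ _
  have hhull : y ∈ PointedCone.hull ℝ (Set.range L.vec) :=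
    mem_hull_range_iff.2 ⟨μ, fun i => (hμ i).le, rfl⟩
  have hclosed (t : ℤ) : {p | L.deg p = t ∧ L.real p ∈ PointedCone.hull ℝ (Set.range L.vec)} =
      L.perturbedPoints y t :=
    Set.ext fun p => and_congr_right fun _ => h𝓣.mem_hull_iff_eventually hhull hy
  refine ⟨fun j => L.hVector 𝓣 y j, μ, hμ, fun t => ?_⟩
  rw [hclosed, ncard_perturbedPoints h𝓣 hspan hy, ncard_perturbedPoints h𝓣 (neg_mem hspan) hy.neg]
  refine ⟨finite_perturbedPoints h𝓣 hspan hy t, rfl, Finset.sum_congr rfl fun j hj => ?_⟩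
  have hj : j ≤ L.rank := Nat.lt_succ_iff.1 (Finset.mem_range.1 hj)
  have hneg : L.hVector 𝓣 (-y) j = L.hVector 𝓣 y ((L.rank - j : ℕ) : ℤ) := by
    rw [← hVector_neg h𝓣 hy, Nat.cast_sub hj, sub_sub_cancel]
  simp only [hneg]

end LatticeConfiguration

/-! ### Leading growth -/

/-- `f t` is asymptotic to `c * t ^ k / k!` as `t` tends to infinity, or of smaller order than
`t ^ k` if `c = 0`. -/
def HasGrowth (k : ℕ) (f : ℤ → ℝ) (c : ℝ) : Prop :=
  Tendsto (fun t : ℤ => f t * k.factorial / (t : ℝ) ^ k) atTop (nhds c)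

namespace HasGrowth

variable {k : ℕ} {f g : ℤ → ℝ} {a b : ℝ}

theorem zero (k : ℕ) : HasGrowth k (fun _ => 0) 0 := by
  simp [HasGrowth]

theorem add (hf : HasGrowth k f a) (hg : HasGrowth k g b) :
    HasGrowth k (fun t => f t + g t) (a + b) :=
  (Tendsto.add hf hg).congr fun t => by ring

theorem sub (hf : HasGrowth k f a) (hg : HasGrowth k g b) :
    HasGrowth k (fun t => f t - g t) (a - b) :=
  (Tendsto.sub hf hg).congr fun t => by ring

theorem const_mul (x : ℝ) (hf : HasGrowth k f a) : HasGrowth k (fun t => x * f t) (x * a) :=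
  (Tendsto.const_mul x hf).congr fun t => by ring

theorem sum {ι : Type*} (s : Finset ι) {f : ι → ℤ → ℝ} {a : ι → ℝ}
    (h : ∀ i ∈ s, HasGrowth k (f i) (a i)) :
    HasGrowth k (fun t => ∑ i ∈ s, f i t) (∑ i ∈ s, a i) :=
  (tendsto_finsetSum s h).congr fun t => by rw [Finset.sum_mul, Finset.sum_div]

theorem congr (hf : HasGrowth k f a) (h : ∀ t, f t = g t) (hab : a = b) : HasGrowth k g b := by
  rwa [← funext h, ← hab]

theorem congr' (hf : HasGrowth k f a) (h : ∀ᶠ t in atTop, f t = g t) : HasGrowth k g a :=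
  Tendsto.congr' (h.mono fun t ht => by rw [ht]) hf

theorem unique (hf : HasGrowth k f a) (hg : HasGrowth k f b) : a = b :=
  tendsto_nhds_unique hf hg

theorem squeeze {f₁ f₂ : ℤ → ℝ} (h₁ : HasGrowth k f₁ a) (h₂ : HasGrowth k f₂ a)
    (hle₁ : ∀ᶠ t in atTop, f₁ t ≤ f t) (hle₂ : ∀ᶠ t in atTop, f t ≤ f₂ t) : HasGrowth k f a := by
  have hpos : ∀ᶠ t : ℤ in atTop, (0 : ℝ) < t :=
    (eventually_gt_atTop 0).mono fun t ht => by exact_mod_cast ht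
  refine tendsto_of_tendsto_of_tendsto_of_le_of_le' h₁ h₂ ?_ ?_
  · filter_upwards [hle₁, hpos] with t ht ht₀
    gcongr
  · filter_upwards [hle₂, hpos] with t ht ht₀
    gcongr

theorem comp_sub_const (hf : HasGrowth k f a) (r : ℤ) : HasGrowth k (fun t => f (t - r)) a := by
  have hshift : Tendsto (fun t : ℤ => t - r) atTop atTop :=
    tendsto_atTop_add_const_right _ _ tendsto_id
  have hratio : Tendsto (fun t : ℤ => (1 - (r : ℝ) / t) ^ k) atTop (nhds 1) := by
    simpa using
      ((tendsto_const_nhds (x := (1 : ℝ))).sub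
        ((tendsto_const_nhds (x := (r : ℝ))).div_atTop tendsto_intCast_atTop_atTop)).pow k
  have hprod := (hf.comp hshift).mul hratio
  rw [mul_one] at hprod
  refine hprod.congr' ?_
  filter_upwards [eventually_gt_atTop 0, hshift.eventually (eventually_gt_atTop 0)] with t ht htr
  have ht₀ : (t : ℝ) ≠ 0 := by exact_mod_cast ht.ne'
  have htr₀ : (t : ℝ) - r ≠ 0 := by exact_mod_cast htr.ne'
  rw [one_sub_div ht₀, div_pow]
  simp only [Function.comp_apply, Int.cast_sub]
  field_simp

end HasGrowth

/-! ### Potentials for the periodic part of the mixed second differences -/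

section FloorPotential

/-- The even function on the integers with increments `2 * (n / k) + 1`. -/
def floorPotential (k n : ℤ) : ℤ := n / k * (n + n % k) + n % k

variable {k : ℤ}

theorem floorPotential_eq (hk : 0 < k) {n j ρ : ℤ} (hn : n = k * j + ρ) (h₀ : 0 ≤ ρ) (h₁ : ρ ≤ k) :
    floorPotential k n = j * (n + ρ) + ρ := by
  rw [floorPotential]
  rcases h₁.lt_or_eq with h₁ | rfl
  · obtain ⟨hdiv, hmod⟩ := (Int.ediv_emod_unique hk).2 ⟨(add_comm _ _).trans hn.symm, h₀, h₁⟩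
    rw [hdiv, hmod]
  · obtain ⟨hdiv, hmod⟩ := (Int.ediv_emod_unique (a := n) (r := 0) (q := j + 1) hk).2
      ⟨by rw [hn]; ring, le_rfl, hk⟩
    rw [hdiv, hmod, hn]
    ring

theorem floorPotential_mul (hk : 0 < k) (q : ℤ) : floorPotential k (k * q) = k * q ^ 2 := by
  rw [floorPotential_eq hk (add_zero _).symm le_rfl hk.le]
  ring

theorem floorPotential_add_one (hk : 0 < k) (n : ℤ) :
    floorPotential k (n + 1) - floorPotential k n = 2 * (n / k) + 1 := by
  have h₀ := Int.emod_nonneg n hk.ne'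
  have h₁ := Int.emod_lt_of_pos n hk
  have hn := Int.mul_ediv_add_emod n k
  rw [floorPotential_eq hk (n := n + 1) (j := n / k) (ρ := n % k + 1) (by omega) (by omega)
    (by omega), floorPotential]
  ring

theorem floorPotential_neg (hk : 0 < k) (n : ℤ) : floorPotential k (-n) = floorPotential k n := by
  have h₀ := Int.emod_nonneg n hk.ne'
  have h₁ := Int.emod_lt_of_pos n hk
  have hn := Int.mul_ediv_add_emod n k
  rw [floorPotential_eq hk (n := -n) (j := -(n / k) - 1) (ρ := k - n % k) (by linarith) (by omega)
    (by omega), floorPotential]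
  linear_combination -hn

theorem floorPotential_of_two_mul_eq (hk : 0 < k) {n q : ℤ} (hn : 2 * n = k * q) :
    4 * floorPotential k n = k * (q ^ 2 + q % 2) := by
  rcases Int.even_or_odd' q with ⟨j, rfl | rfl⟩
  · rw [show n = k * j by linarith, floorPotential_mul hk, Int.mul_emod_right]
    ring
  · obtain ⟨l, rfl⟩ : Even k := by
      have : Even (k * (2 * j + 1)) := ⟨n, by linarith⟩
      exact (Int.even_mul.1 this).resolve_right (by simp)
    rw [floorPotential_eq hk (j := j) (ρ := l) (by linarith) (by omega) (by omega),
      show (2 * j + 1) % 2 = 1 by omega]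
    linear_combination 2 * j * hn

theorem floorPotential_add_of_two_mul_eq (hk : 0 < k) {n q : ℤ} (hn : 2 * n = k * q + 1) :
    2 * (floorPotential k n + floorPotential k (n - 1)) = k * (q ^ 2 + q % 2) := by
  have hodd : Odd (k * q) := ⟨n - 1, by linarith⟩
  obtain ⟨⟨l, rfl⟩, ⟨j, rfl⟩⟩ := Int.odd_mul.1 hodd
  rw [floorPotential_eq hk (n := n) (j := j) (ρ := l + 1) (by linarith) (by omega) (by omega),
    floorPotential_eq hk (n := n - 1) (j := j) (ρ := l) (by linarith) (by omega) (by omega),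
    show (2 * j + 1) % 2 = 1 by omega]
  linear_combination 2 * j * hn

-- `(s + 1) / 2` is half of `s`, rounded up.
theorem floorPotential_ceil_half (hk : 0 < k) {s s' q : ℤ} (h : s - s' = k * q) :
    2 * (floorPotential k ((s + 1) / 2 - (s' + 1) / 2) +
      floorPotential k ((-s + 1) / 2 - (-s' + 1) / 2)) = k * (q ^ 2 + q % 2) := by
  rw [← floorPotential_neg hk ((-s + 1) / 2 - (-s' + 1) / 2)]
  have hsame {n : ℤ} (hn : 2 * n = k * q) :
      2 * (floorPotential k n + floorPotential k n) = k * (q ^ 2 + q % 2) := by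
    linarith [floorPotential_of_two_mul_eq hk hn]
  rcases Int.even_or_odd' s with ⟨j, hs | hs⟩ <;> rcases Int.even_or_odd' s' with ⟨j', hs' | hs'⟩
  · rw [← hsame (n := j - j') (by omega)]
    congr 3 <;> omega
  · rw [← floorPotential_add_of_two_mul_eq hk (n := j - j') (by omega), add_comm]
    congr 3 <;> omega
  · rw [← floorPotential_add_of_two_mul_eq hk (n := j - j' + 1) (by omega)]
    congr 3 <;> omega
  · rw [← hsame (n := j - j') (by omega)]
    congr 3 <;> omega

/-- The interaction of two facets in the quadratic expansion of the number of lattice points. Its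
increments in `s` are `-2 * ((s - s') / k)`. -/
def pairPotential (k s s' : ℤ) : ℤ := s + s' - floorPotential k (s - s')

theorem pairPotential_comm (hk : 0 < k) (s s' : ℤ) :
    pairPotential k s s' = pairPotential k s' s := by
  rw [pairPotential, pairPotential, ← floorPotential_neg hk (s - s'), neg_sub, add_comm s s']

theorem pairPotential_add_one (hk : 0 < k) (s s' : ℤ) :
    pairPotential k (s + 1) s' - pairPotential k s s' = -2 * ((s - s') / k) := by
  have h := floorPotential_add_one hk (s - s')
  rw [pairPotential, pairPotential, show s + 1 - s' = s - s' + 1 by ring]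
  linarith

theorem pairPotential_ceil_half (hk : 0 < k) {s s' q : ℤ} (h : s - s' = k * q) :
    4 * (pairPotential k ((s + 1) / 2) ((s' + 1) / 2) +
        pairPotential k ((-s + 1) / 2) ((-s' + 1) / 2)) -
      (pairPotential k s s' + pairPotential k (-s) (-s')) =
    4 * (s % 2 + s' % 2) - 2 * k * (q % 2) := by
  have hhalf := floorPotential_ceil_half hk h
  have hs : (s + 1) / 2 + (-s + 1) / 2 = s % 2 := by omega
  have hs' : (s' + 1) / 2 + (-s' + 1) / 2 = s' % 2 := by omega
  simp only [pairPotential]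
  rw [show -s - -s' = -(s - s') by ring, floorPotential_neg hk, h, floorPotential_mul hk]
  linear_combination 4 * hs + 4 * hs' - 2 * hhalf

end FloorPotential

theorem mul_sub_one_ceil_half (s : ℤ) :
    4 * (((s + 1) / 2) * ((s + 1) / 2 - 1) + ((-s + 1) / 2) * ((-s + 1) / 2 - 1)) -
      (s * (s - 1) + -s * (-s - 1)) = -2 * (s % 2) := by
  rcases Int.even_or_odd' s with ⟨j, rfl | rfl⟩
  · rw [show (2 * j + 1) / 2 = j by omega, show (-(2 * j) + 1) / 2 = -j by omega,
      Int.mul_emod_right]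
    ring
  · rw [show (2 * j + 1 + 1) / 2 = j + 1 by omega, show (-(2 * j + 1) + 1) / 2 = -j by omega,
      show (2 * j + 1) % 2 = 1 by omega]
    ring

/-! ### Families of functions with periodic mixed second differences -/

theorem forall_of_forall_add_iff {M : Type*} [AddGroup M] {S : Set M}
    (hS : AddSubgroup.closure S = ⊤) {Q : M → Prop} (h₀ : Q 0)
    (hstep : ∀ v ∈ S, ∀ s, Q s ↔ Q (s + v)) (s : M) : Q s := by
  have hs : s ∈ AddSubgroup.closure S := hS ▸ AddSubgroup.mem_top s
  induction hs using AddSubgroup.closure_induction_right with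
  | zero => exact h₀
  | add_right x _ v hv hx => exact (hstep v hv x).1 hx
  | add_neg_cancel x _ v hv hx => exact (hstep v hv _).2 (by rwa [neg_add_cancel_right])

section IntegerVectors

variable {U : Type*} [Finite U] [DecidableEq U]

theorem closure_range_single_one :
    AddSubgroup.closure (Set.range fun u => (Pi.single u 1 : U → ℤ)) = ⊤ := by
  cases nonempty_fintype U
  refine eq_top_iff.2 fun s _ => ?_
  rw [← Finset.univ_sum_single s]
  refine sum_mem fun u _ => ?_
  rw [show (Pi.single u (s u) : U → ℤ) = s u • Pi.single u 1 by
    rw [← Pi.single_smul, smul_eq_mul, mul_one]]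
  exact zsmul_mem (AddSubgroup.subset_closure (Set.mem_range_self u)) _

theorem closure_insert_one_single_one (u : U) :
    AddSubgroup.closure (insert 1 ((fun w => (Pi.single w 1 : U → ℤ)) '' {u}ᶜ)) = ⊤ := by
  cases nonempty_fintype U
  refine eq_top_iff.2 (closure_range_single_one.ge.trans ((AddSubgroup.closure_le _).2 ?_))
  have hne (w : U) (hw : w ≠ u) : (Pi.single w 1 : U → ℤ) ∈
      AddSubgroup.closure (insert 1 ((fun w => (Pi.single w 1 : U → ℤ)) '' {u}ᶜ)) :=
    AddSubgroup.subset_closure (Set.mem_insert_of_mem _ ⟨w, hw, rfl⟩)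
  rintro _ ⟨v, rfl⟩
  rcases eq_or_ne v u with rfl | hv
  · have hone : (Pi.single v 1 : U → ℤ) = 1 - ∑ w ∈ Finset.univ.erase v, Pi.single w 1 := by
      rw [eq_sub_iff_add_eq, Finset.add_sum_erase _ (fun w => (Pi.single w 1 : U → ℤ))
        (Finset.mem_univ v)]
      exact Finset.univ_sum_single 1
    change (Pi.single v 1 : U → ℤ) ∈ _
    rw [hone]
    exact sub_mem (AddSubgroup.subset_closure (Set.mem_insert _ _))
      (sum_mem fun w hw => hne w (Finset.ne_of_mem_erase hw))
  · exact hne v hv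

end IntegerVectors

theorem ediv_sub_ediv_sub_one {k : ℤ} (hk : 0 < k) (n : ℤ) :
    n / k - (n - 1) / k = if k ∣ n then 1 else 0 := by
  have hn := Int.mul_ediv_add_emod n k
  have h₀ := Int.emod_nonneg n hk.ne'
  have h₁ := Int.emod_lt_of_pos n hk
  split_ifs with hdvd
  · have : (n - 1) / k = n / k - 1 := by
      rw [Int.ediv_eq_iff_of_pos hk]
      constructor <;> linarith [Int.emod_eq_zero_of_dvd hdvd]
    omega
  · have : (n - 1) / k = n / k := by
      rw [Int.ediv_eq_iff_of_pos hk]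
      have := mt Int.dvd_of_emod_eq_zero hdvd
      constructor <;> linarith [show 1 ≤ n % k by omega]
    omega

section QuadraticGrowth

variable {U : Type*} {K : ℕ} {r : ℤ} {N : (U → ℤ) → ℤ → ℝ} {A : U → U → ℝ}
  {k : U → U → ℤ} {c : U → ℝ}

/-- `N s` is a family of functions, such as the numbers of lattice points of height `t` whose
distance from each facet `u` of a cone is at least `s u`, with periodic mixed second differences in
degree `K`: the coefficient for two facets `u ≠ w` is `A u w` if `k u w` divides `s u - s w`, and
`0` otherwise. -/
structure HasQuadraticGrowth [DecidableEq U] (K : ℕ) (r : ℤ) (N : (U → ℤ) → ℤ → ℝ) (A : U → U → ℝ)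
    (k : U → U → ℤ) (c : U → ℝ) : Prop where
  pos : ∀ u w, 0 < k u w
  period_comm : ∀ u w, k u w = k w u
  coeff_comm : ∀ u w, A u w = A w u
  coeff_self : ∀ u, A u u = 0
  add_one : ∀ s t, N (s + 1) t = N s (t - r)
  mixed_difference : ∀ s u w, u ≠ w → HasGrowth K
    (fun t => N s t - N (s + Pi.single u 1) t - N (s + Pi.single w 1) t +
      N (s + Pi.single u 1 + Pi.single w 1) t) (if k u w ∣ s u - s w then A u w else 0)
  shift_difference : ∀ u, HasGrowth K
    (fun t => (N 0 t - N (Pi.single u 1) t) - (N 0 (t - r) - N (Pi.single u 1) (t - r))) (c u)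

theorem HasQuadraticGrowth.pairPotential_add_single_sub [DecidableEq U]
    (H : HasQuadraticGrowth K r N A k c) (u v w : U) (s : U → ℤ) :
    A v w * (pairPotential (k v w) ((s + Pi.single u 1 : U → ℤ) v)
        ((s + Pi.single u 1 : U → ℤ) w) : ℤ) -
      A v w * (pairPotential (k v w) (s v) (s w) : ℤ) =
    (if v = u then A u w * (-2 * ((s u - s w) / k u w) : ℤ) else 0) +
      if w = u then A u v * (-2 * ((s u - s v) / k u v) : ℤ) else 0 := by
  by_cases hv : v = u <;> by_cases hw : w = u
  · simp [hv, hw, H.coeff_self]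
  · subst hv
    rw [if_pos rfl, if_neg hw, add_zero, ← pairPotential_add_one (H.pos _ _), ← mul_sub]
    simp [hw]
  · subst hw
    rw [if_neg hv, if_pos rfl, zero_add, ← pairPotential_add_one (H.pos _ _), ← mul_sub,
      pairPotential_comm (H.pos _ _), pairPotential_comm (H.pos _ _) (s v), H.coeff_comm,
      H.period_comm]
    simp [hv]
  · simp [hv, hw]

variable [Fintype U]

/-- The growth coefficient of the decrements of `N` in direction `u`, relative to those at `0`. -/
def decrementCoeff (A : U → U → ℝ) (k : U → U → ℤ) (c : U → ℝ) (u : U) (s : U → ℤ) : ℝ :=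
  -c u * s u + ∑ w, A u w * ((s u - s w) / k u w : ℤ)

/-- The growth coefficient of `N s` relative to its first-order expansion at `0`. -/
def quadraticCoeff (A : U → U → ℝ) (k : U → U → ℤ) (c : U → ℝ) (s : U → ℤ) : ℝ :=
  (∑ u, c u * (s u * (s u - 1) : ℤ)) / 2 +
    (∑ u, ∑ w, A u w * (pairPotential (k u w) (s u) (s w) : ℤ)) / 4

theorem decrementCoeff_add_one (u : U) (s : U → ℤ) :
    decrementCoeff A k c u (s + 1) = decrementCoeff A k c u s - c u := by
  simp only [decrementCoeff, Pi.add_apply, Pi.one_apply, add_sub_add_right_eq_sub]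
  push_cast
  ring

variable [DecidableEq U]

theorem decrementCoeff_sub_add_single {u w : U} (hk : 0 < k u w) (huw : w ≠ u) (s : U → ℤ) :
    decrementCoeff A k c u s - decrementCoeff A k c u (s + Pi.single w 1) =
      if k u w ∣ s u - s w then A u w else 0 := by
  have hu : (s + Pi.single w 1 : U → ℤ) u = s u := by simp [huw.symm]
  have hv (v : U) (hv : v ≠ w) : (s + Pi.single w 1 : U → ℤ) v = s v := by simp [hv]
  have hstep := ediv_sub_ediv_sub_one hk (s u - s w)
  rw [decrementCoeff, decrementCoeff, hu, add_sub_add_left_eq_sub, ← Finset.sum_sub_distrib,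
    Finset.sum_eq_single w (fun v _ hvw => by rw [hv v hvw, sub_self]) (by simp)]
  rw [Pi.add_apply, Pi.single_eq_same, ← mul_sub, ← sub_sub, ← Int.cast_sub, hstep]
  split_ifs <;> simp

namespace HasQuadraticGrowth

theorem decrement (H : HasQuadraticGrowth K r N A k c) (u : U) (s : U → ℤ) : HasGrowth K
    (fun t => (N s t - N (s + Pi.single u 1) t) - (N 0 t - N (Pi.single u 1) t))
    (decrementCoeff A k c u s) := by
  revert s
  refine forall_of_forall_add_iff (closure_insert_one_single_one u) ?_ ?_
  · simpa [decrementCoeff] using HasGrowth.zero K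
  rintro _ (rfl | ⟨w, hw, rfl⟩) s
  · rw [decrementCoeff_add_one, add_right_comm]
    simp only [H.add_one]
    refine ⟨fun h => ((h.comp_sub_const r).sub (H.shift_difference u)).congr (fun t => by ring) rfl,
      fun h => ((h.add (H.shift_difference u)).comp_sub_const (-r)).congr (fun t => ?_)
        (sub_add_cancel _ _)⟩
    rw [sub_neg_eq_add, add_sub_cancel_right]
    ring
  · have hmixed := H.mixed_difference s u w (Ne.symm hw)
    rw [← decrementCoeff_sub_add_single (c := c) (H.pos u w) hw] at hmixed
    rw [add_right_comm]
    exact ⟨fun h => (h.sub hmixed).congr (fun t => by ring) (sub_sub_cancel _ _),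
      fun h => (h.add hmixed).congr (fun t => by ring) (add_sub_cancel _ _)⟩

theorem quadraticCoeff_add_single (H : HasQuadraticGrowth K r N A k c) (u : U) (s : U → ℤ) :
    quadraticCoeff A k c (s + Pi.single u 1) =
      quadraticCoeff A k c s - decrementCoeff A k c u s := by
  set s' : U → ℤ := s + Pi.single u 1 with hs'
  have hdiag : ∑ v, c v * (s' v * (s' v - 1) : ℤ) - ∑ v, c v * (s v * (s v - 1) : ℤ) =
      2 * (c u * s u) := by
    rw [← Finset.sum_sub_distrib, Finset.sum_eq_single u (fun v _ hv => by simp [hs', hv])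
      (by simp), hs', Pi.add_apply, Pi.single_eq_same]
    push_cast
    ring
  have hpair : ∑ v, ∑ w, A v w * (pairPotential (k v w) (s' v) (s' w) : ℤ) -
      ∑ v, ∑ w, A v w * (pairPotential (k v w) (s v) (s w) : ℤ) =
      -4 * ∑ w, A u w * ((s u - s w) / k u w : ℤ) := by
    rw [← Finset.sum_sub_distrib]
    simp only [← Finset.sum_sub_distrib, hs', H.pairPotential_add_single_sub,
      Finset.sum_add_distrib]
    rw [Finset.sum_comm]
    simp only [Finset.sum_ite_eq', Finset.mem_univ, if_true, ← Finset.sum_add_distrib,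
      Finset.mul_sum]
    refine Finset.sum_congr rfl fun w _ => ?_
    push_cast
    ring
  rw [quadraticCoeff, quadraticCoeff, decrementCoeff]
  linear_combination hdiag / 2 + hpair / 4

theorem expansion (H : HasQuadraticGrowth K r N A k c) (s : U → ℤ) : HasGrowth K
    (fun t => N s t - N 0 t + ∑ u, (s u : ℝ) * (N 0 t - N (Pi.single u 1) t))
    (quadraticCoeff A k c s) := by
  revert s
  refine forall_of_forall_add_iff closure_range_single_one ?_ ?_
  · simpa [quadraticCoeff, pairPotential, floorPotential] using HasGrowth.zero K
  rintro _ ⟨u, rfl⟩ s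
  have hlinear (t : ℤ) :
      ∑ v, ((s + Pi.single u 1 : U → ℤ) v : ℝ) * (N 0 t - N (Pi.single v 1) t) =
        ∑ v, (s v : ℝ) * (N 0 t - N (Pi.single v 1) t) + (N 0 t - N (Pi.single u 1) t) := by
    simp [add_mul, Finset.sum_add_distrib, Pi.single_apply]
  have hdec := H.decrement u s
  simp only [hlinear, H.quadraticCoeff_add_single]
  exact ⟨fun h => (h.sub hdec).congr (fun t => by ring) rfl,
    fun h => (h.add hdec).congr (fun t => by ring) (sub_add_cancel _ _)⟩

end HasQuadraticGrowth

end QuadraticGrowth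

section Halving

variable {U Z : Type*} [Fintype Z] {K : ℕ} {r : ℤ} {N : (U → ℤ) → ℤ → ℝ}
  {A : U → U → ℝ} {k : U → U → ℤ} {c : U → ℝ} {n : Z → U → ℤ} {q : Z → U → U → ℤ}

/-- The vectors `n z` are periods of `N` and represent the classes modulo `2` in the sense that
`N 0 (2 * t)` is the sum of the values of `N` at their halves, rounded up. Moreover they are even as
often as odd, as are the quotients `q z u w` of the differences `n z u - n z w` by `k u w`. -/
structure IsHalving (N : (U → ℤ) → ℤ → ℝ) (A : U → U → ℝ) (k : U → U → ℤ) (n : Z → U → ℤ)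
    (q : Z → U → U → ℤ) : Prop where
  period : ∀ z t, N (n z) t = N 0 t
  period_neg : ∀ z t, N (-n z) t = N 0 t
  double : ∀ t, N 0 (2 * t) = ∑ z, N (fun u => (n z u + 1) / 2) t
  double_neg : ∀ t, N 0 (2 * t) = ∑ z, N (fun u => (-n z u + 1) / 2) t
  sub_eq_mul : ∀ z u w, A u w ≠ 0 → n z u - n z w = k u w * q z u w
  two_mul_sum_emod_two : ∀ u, 2 * ∑ z, n z u % 2 = Fintype.card Z
  two_mul_sum_quotient_emod_two : ∀ u w, A u w ≠ 0 → 2 * ∑ z, q z u w % 2 = Fintype.card Z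

variable [Fintype U] [DecidableEq U]

theorem HasQuadraticGrowth.quadraticCoeff_ceil_half (H : HasQuadraticGrowth K r N A k c)
    (hN : IsHalving N A k n q) (z : Z) :
    4 * (quadraticCoeff A k c (fun u => (n z u + 1) / 2) +
      quadraticCoeff A k c (fun u => (-n z u + 1) / 2)) =
    ∑ u, ∑ w, A u w * ((n z u % 2 : ℤ) + (n z w % 2 : ℤ) - k u w * (q z u w % 2 : ℤ) / 2) -
      ∑ u, c u * (n z u % 2 : ℤ) := by
  have hperiod : quadraticCoeff A k c (n z) + quadraticCoeff A k c (-n z) = 0 := by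
    refine (((H.expansion (n z)).add (H.expansion (-n z))).congr (fun t => ?_) rfl).unique
      (HasGrowth.zero K)
    simp [hN.period, hN.period_neg]
  have hdiag (u : U) : 4 * (c u * ((n z u + 1) / 2 * ((n z u + 1) / 2 - 1) : ℤ) +
        c u * ((-n z u + 1) / 2 * ((-n z u + 1) / 2 - 1) : ℤ)) -
      (c u * (n z u * (n z u - 1) : ℤ) + c u * (-n z u * (-n z u - 1) : ℤ)) =
      -2 * (c u * (n z u % 2 : ℤ)) := by
    have h : (_ : ℝ) = _ := congrArg Int.cast (mul_sub_one_ceil_half (n z u))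
    push_cast at h ⊢
    linear_combination c u * h
  have hpair (u w : U) : 4 *
        (A u w * (pairPotential (k u w) ((n z u + 1) / 2) ((n z w + 1) / 2) : ℤ) +
        A u w * (pairPotential (k u w) ((-n z u + 1) / 2) ((-n z w + 1) / 2) : ℤ)) -
      (A u w * (pairPotential (k u w) (n z u) (n z w) : ℤ) +
        A u w * (pairPotential (k u w) (-n z u) (-n z w) : ℤ)) =
      4 * (A u w * ((n z u % 2 : ℤ) + (n z w % 2 : ℤ) - k u w * (q z u w % 2 : ℤ) / 2)) := by
    by_cases hA : A u w = 0
    · simp [hA]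
    have h : (_ : ℝ) = _ :=
      congrArg Int.cast (pairPotential_ceil_half (H.pos u w) (hN.sub_eq_mul z u w hA))
    push_cast at h ⊢
    linear_combination A u w * h
  have hdiag_sum := Finset.sum_congr rfl fun u (_ : u ∈ Finset.univ) => hdiag u
  have hpair_sum := Finset.sum_congr rfl fun u (_ : u ∈ Finset.univ) =>
    Finset.sum_congr rfl fun w (_ : w ∈ Finset.univ) => hpair u w
  simp only [Finset.sum_sub_distrib, Finset.sum_add_distrib, ← Finset.mul_sum]
    at hdiag_sum hpair_sum
  simp only [quadraticCoeff, Pi.neg_apply] at hperiod ⊢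
  linear_combination hperiod + hdiag_sum / 2 + hpair_sum / 4

theorem HasQuadraticGrowth.sum_quadraticCoeff_ceil_half (H : HasQuadraticGrowth K r N A k c)
    (hN : IsHalving N A k n q) :
    8 * ∑ z, (quadraticCoeff A k c (fun u => (n z u + 1) / 2) +
      quadraticCoeff A k c (fun u => (-n z u + 1) / 2)) =
    Fintype.card Z * (2 * ∑ u, ∑ w, A u w - (∑ u, ∑ w, A u w * k u w) / 2 - ∑ u, c u) := by
  have hn (u : U) : 2 * ∑ z, ((n z u % 2 : ℤ) : ℝ) = Fintype.card Z := by
    exact_mod_cast hN.two_mul_sum_emod_two u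
  have hq (u w : U) (hA : A u w ≠ 0) : 2 * ∑ z, ((q z u w % 2 : ℤ) : ℝ) = Fintype.card Z := by
    exact_mod_cast hN.two_mul_sum_quotient_emod_two u w hA
  have hdiag : 2 * ∑ z, ∑ u, c u * (n z u % 2 : ℤ) = Fintype.card Z * ∑ u, c u := by
    rw [Finset.sum_comm, Finset.mul_sum, Finset.mul_sum]
    refine Finset.sum_congr rfl fun u _ => ?_
    rw [← Finset.mul_sum, ← hn u]
    ring
  have hpair : 2 * ∑ z, ∑ u, ∑ w, A u w *
        ((n z u % 2 : ℤ) + (n z w % 2 : ℤ) - k u w * (q z u w % 2 : ℤ) / 2) =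
      Fintype.card Z * (2 * ∑ u, ∑ w, A u w - (∑ u, ∑ w, A u w * k u w) / 2) := by
    rw [Finset.sum_comm, Finset.mul_sum, Finset.mul_sum, Finset.sum_div, ← Finset.sum_sub_distrib,
      Finset.mul_sum]
    refine Finset.sum_congr rfl fun u _ => ?_
    rw [Finset.sum_comm, Finset.mul_sum, Finset.mul_sum, Finset.sum_div, ← Finset.sum_sub_distrib,
      Finset.mul_sum]
    refine Finset.sum_congr rfl fun w _ => ?_
    by_cases hA : A u w = 0
    · simp [hA]
    rw [← Finset.mul_sum, Finset.sum_sub_distrib, Finset.sum_add_distrib, ← Finset.sum_div,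
      ← Finset.mul_sum]
    linear_combination A u w * hn u + A u w * hn w - A u w * k u w / 2 * hq u w hA
  have hz := Finset.sum_congr rfl fun z (_ : z ∈ Finset.univ) => H.quadraticCoeff_ceil_half hN z
  rw [← Finset.mul_sum, Finset.sum_sub_distrib] at hz
  linear_combination 2 * hz + hpair - hdiag

theorem HasQuadraticGrowth.first_difference (H : HasQuadraticGrowth K r N A k c) : HasGrowth K
    (fun t => N 0 (t - r) - N 0 t + ∑ u, (N 0 t - N (Pi.single u 1) t))
    ((∑ u, ∑ w, A u w) / 2) := by
  refine (H.expansion 1).congr (fun t => ?_) ?_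
  · simpa using H.add_one 0 t
  · simp only [quadraticCoeff, pairPotential, floorPotential]
    simp [← Finset.sum_mul]
    ring

theorem HasQuadraticGrowth.second_difference (H : HasQuadraticGrowth K r N A k c) : HasGrowth K
    (fun t => N 0 t - 2 * N 0 (t - r) + N 0 (t - 2 * r)) (∑ u, c u) := by
  have htwo (t : ℤ) : N 2 t = N 0 (t - 2 * r) := by
    rw [← one_add_one_eq_two, H.add_one, ← zero_add 1, H.add_one]
    congr 1
    ring
  refine ((H.expansion 2).sub (H.first_difference.const_mul 2)).congr (fun t => ?_) ?_
  · simp only [htwo, Pi.ofNat_apply, Int.cast_ofNat, ← Finset.mul_sum]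
    ring
  · simp only [quadraticCoeff, pairPotential, floorPotential, Pi.ofNat_apply]
    simp [← Finset.sum_mul]
    ring

/-- Expanding both sides of the halving identity, whose linear terms add up to a multiple of the
first difference of `N 0`. -/
theorem HasQuadraticGrowth.halving (H : HasQuadraticGrowth K r N A k c)
    (hN : IsHalving N A k n q) : HasGrowth K
    (fun t => 16 * Fintype.card Z * N 0 t - 16 * N 0 (2 * t) -
      4 * Fintype.card Z * (N 0 t - N 0 (t - r)))
    (Fintype.card Z * (∑ u, c u + (∑ u, ∑ w, A u w * k u w) / 2)) := by
  have hsum := HasGrowth.sum Finset.univ fun z (_ : z ∈ Finset.univ) =>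
    (H.expansion fun u => (n z u + 1) / 2).add (H.expansion fun u => (-n z u + 1) / 2)
  refine ((H.first_difference.const_mul (4 * Fintype.card Z)).sub (hsum.const_mul 8)).congr
    (fun t => ?_) ?_
  · have hlinear : 2 * (∑ z, ∑ u, (((n z u + 1) / 2 : ℤ) : ℝ) * (N 0 t - N (Pi.single u 1) t) +
        ∑ z, ∑ u, (((-n z u + 1) / 2 : ℤ) : ℝ) * (N 0 t - N (Pi.single u 1) t)) =
        Fintype.card Z * ∑ u, (N 0 t - N (Pi.single u 1) t) := by
      rw [← Finset.sum_add_distrib]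
      simp only [← Finset.sum_add_distrib, ← add_mul]
      rw [Finset.sum_comm, Finset.mul_sum, Finset.mul_sum]
      refine Finset.sum_congr rfl fun u _ => ?_
      have hround (z : Z) : (n z u + 1) / 2 + (-n z u + 1) / 2 = n z u % 2 := by omega
      rw [← Finset.sum_mul, ← mul_assoc]
      congr 1
      have hn := hN.two_mul_sum_emod_two u
      simp only [← hround] at hn
      exact_mod_cast hn
    simp only [Finset.sum_add_distrib, Finset.sum_sub_distrib (s := (Finset.univ : Finset Z)),
      ← hN.double, ← hN.double_neg, Finset.sum_const, Finset.card_univ, nsmul_eq_mul]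
    linear_combination -4 * hlinear
  · rw [H.sum_quadraticCoeff_ceil_half hN]
    ring

end Halving

/-! ### Asymptotics of Hilbert functions -/

/-- `f t * d! / t ^ d = a + b / t + c / t ^ 2 + o(1 / t ^ 2)` as `t` tends to infinity. -/
def HasExpansion (d : ℕ) (f : ℤ → ℝ) (a b c : ℝ) : Prop :=
  Tendsto (fun t : ℤ => (f t * d.factorial / (t : ℝ) ^ d - a - b / t) * (t : ℝ) ^ 2) atTop (nhds c)

theorem tendsto_intCast_inv : Tendsto (fun t : ℤ => (t : ℝ)⁻¹) atTop (nhds 0) :=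
  tendsto_inv_atTop_zero.comp tendsto_intCast_atTop_atTop

theorem HasGrowth.succ {k : ℕ} {f : ℤ → ℝ} {a : ℝ} (hf : HasGrowth k f a) :
    HasGrowth (k + 1) f 0 := by
  have h := (Tendsto.mul hf tendsto_intCast_inv).const_mul (k + 1 : ℝ)
  rw [mul_zero, mul_zero] at h
  refine h.congr fun t => ?_
  rw [Nat.factorial_succ, pow_succ, Nat.cast_mul, Nat.cast_succ, div_mul_eq_div_div, div_eq_mul_inv]
  ring

namespace HasExpansion

variable {d : ℕ} {f g : ℤ → ℝ} {a b c a' b' c' : ℝ}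

theorem add (hf : HasExpansion d f a b c) (hg : HasExpansion d g a' b' c') :
    HasExpansion d (fun t => f t + g t) (a + a') (b + b') (c + c') :=
  (Tendsto.add hf hg).congr fun t => by ring

theorem sub (hf : HasExpansion d f a b c) (hg : HasExpansion d g a' b' c') :
    HasExpansion d (fun t => f t - g t) (a - a') (b - b') (c - c') :=
  (Tendsto.sub hf hg).congr fun t => by ring

theorem const_mul (x : ℝ) (hf : HasExpansion d f a b c) :
    HasExpansion d (fun t => x * f t) (x * a) (x * b) (x * c) :=
  (Tendsto.const_mul x hf).congr fun t => by ring

theorem congr' (hf : HasExpansion d f a b c) (h : ∀ᶠ t in atTop, f t = g t) :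
    HasExpansion d g a b c :=
  Tendsto.congr' (h.mono fun t ht => by rw [ht]) hf

theorem comp_two_mul (hf : HasExpansion d f a b c) :
    HasExpansion d (fun t => f (2 * t)) (2 ^ d * a) (2 ^ d * b / 2) (2 ^ d * c / 4) := by
  have htwo : Tendsto (fun t : ℤ => 2 * t) atTop atTop :=
    tendsto_id.const_mul_atTop' (by norm_num)
  have h := (hf.comp htwo).const_mul ((2 : ℝ) ^ d / 4)
  rw [div_mul_eq_mul_div] at h
  refine h.congr' ?_
  filter_upwards [eventually_gt_atTop 0] with t ht
  have ht₀ : (t : ℝ) ≠ 0 := by exact_mod_cast ht.ne'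
  simp only [Function.comp_apply, Int.cast_mul, Int.cast_ofNat, mul_pow]
  field_simp
  ring

theorem tendsto_mul (hf : HasExpansion d f a b c) :
    Tendsto (fun t : ℤ => (f t * d.factorial / (t : ℝ) ^ d - a) * t) atTop (nhds b) := by
  have h := (Tendsto.mul hf tendsto_intCast_inv).add_const b
  rw [mul_zero, zero_add] at h
  refine h.congr' ?_
  filter_upwards [eventually_gt_atTop 0] with t ht
  have ht₀ : (t : ℝ) ≠ 0 := by exact_mod_cast ht.ne'
  field_simp
  ring

theorem hasGrowth (hf : HasExpansion d f a b c) : HasGrowth d f a := by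
  have h := (hf.tendsto_mul.mul tendsto_intCast_inv).add_const a
  rw [mul_zero, zero_add] at h
  refine h.congr' ?_
  filter_upwards [eventually_gt_atTop 0] with t ht
  have ht₀ : (t : ℝ) ≠ 0 := by exact_mod_cast ht.ne'
  rw [mul_inv_cancel_right₀ ht₀, sub_add_cancel]

theorem hasGrowth_of_zero (hf : HasExpansion (d + 1) f 0 b c) : HasGrowth d f (b / (d + 1)) := by
  refine (hf.tendsto_mul.div_const (d + 1 : ℝ)).congr' ?_
  filter_upwards [eventually_gt_atTop 0] with t ht
  rw [Nat.factorial_succ]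
  push_cast
  field_simp
  ring

theorem hasGrowth_of_zero_zero (hf : HasExpansion (d + 2) f 0 0 c) :
    HasGrowth d f (c / ((d + 1) * (d + 2))) := by
  refine (Tendsto.div_const hf ((d + 1) * (d + 2) : ℝ)).congr' ?_
  filter_upwards [eventually_gt_atTop 0] with t ht
  have ht₀ : (t : ℝ) ≠ 0 := by exact_mod_cast ht.ne'
  rw [Nat.factorial_succ, Nat.factorial_succ]
  push_cast
  field_simp
  ring

theorem mul_add_div (hf : HasExpansion d f a b c) (x : ℝ) :
    HasExpansion (d + 1) (fun t => f t * (t + x) / (d + 1)) a (b + x * a) (c + x * b) := by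
  refine (Tendsto.add hf (hf.tendsto_mul.const_mul x)).congr' ?_
  filter_upwards [eventually_gt_atTop 0] with t ht
  have ht₀ : (t : ℝ) ≠ 0 := by exact_mod_cast ht.ne'
  rw [Nat.factorial_succ]
  push_cast
  field_simp
  ring

end HasExpansion

theorem multichoose_succ_mul (d n : ℕ) :
    (d + 1) * (d + 2).multichoose n = (d + 1).multichoose n * (n + d + 1) := by
  rw [Nat.multichoose_eq, Nat.multichoose_eq, show d + 2 + n - 1 = n + (d + 1) by lia,
    show d + 1 + n - 1 = n + d by lia, Nat.choose_symm_add, Nat.choose_symm_add, ← add_assoc,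
    mul_comm, ← Nat.add_one_mul_choose_eq, mul_comm]

theorem hasExpansion_multichoose (d : ℕ) (j : ℤ) :
    HasExpansion d (fun t => (d + 1).multichoose (t - j).toNat) 1
      (d * (1 - j) + d * (d - 1) / 2)
      (d * (d - 1) / 24 * (12 * (1 - j) ^ 2 + 12 * (d - 1) * (1 - j) + (d - 2) * (3 * d - 1))) := by
  induction d with
  | zero => simp [HasExpansion]
  | succ d ih =>
    have h := (ih.mul_add_div (d + 1 - j)).congr'
      (g := fun t => ((d + 2).multichoose (t - j).toNat : ℝ)) <| by
        filter_upwards [eventually_ge_atTop j] with t ht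
        have hcast : (((t - j).toNat : ℕ) : ℝ) = t - j := by
          exact_mod_cast Int.toNat_of_nonneg (sub_nonneg.2 ht)
        have hsucc : ((d + 1) * (d + 2).multichoose (t - j).toNat : ℝ) =
            (d + 1).multichoose (t - j).toNat * ((t - j).toNat + d + 1) := by
          exact_mod_cast multichoose_succ_mul d (t - j).toNat
        rw [div_eq_iff (by positivity), mul_comm _ (d + 1 : ℝ), hsucc, hcast]
        ring
    convert h using 1 <;> push_cast <;> ring

theorem eventually_hilbertCoeff_eq_sum (D : ℕ) (h : ℕ → ℕ) (s : ℤ) : ∀ᶠ t : ℤ in atTop,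
    ∑ j ∈ Finset.range (D + 1), (h j : ℝ) * D.multichoose (t - (s + j)).toNat =
      hilbertCoeff D h (t - s) := by
  filter_upwards [eventually_ge_atTop (s + D)] with t ht
  rw [hilbertCoeff, Nat.cast_sum]
  refine Finset.sum_congr rfl fun j hj => ?_
  rw [if_pos (by rw [Finset.mem_range] at hj; lia), sub_sub, Nat.cast_mul]

theorem hasGrowth_hilbertCoeff (k : ℕ) (h : ℕ → ℕ) :
    HasGrowth k (fun t => hilbertCoeff (k + 1) h t) (∑ j ∈ Finset.range (k + 2), (h j : ℝ)) := by
  have hsum := HasGrowth.sum (Finset.range (k + 1 + 1)) fun j _ =>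
    (hasExpansion_multichoose k j).hasGrowth.const_mul (h j : ℝ)
  refine (hsum.congr' ?_).congr (fun t => rfl) (by simp)
  simpa using eventually_hilbertCoeff_eq_sum (k + 1) h 0

theorem hasGrowth_zero_hilbertCoeff {D k : ℕ} (hD : D ≤ k) (h : ℕ → ℕ) :
    HasGrowth k (fun t => hilbertCoeff D h t) 0 := by
  induction k, hD using Nat.le_induction with
  | base =>
    cases D with
    | zero =>
      refine (HasGrowth.zero 0).congr' ?_
      filter_upwards [eventually_gt_atTop 0] with t ht
      have hempty : Nat.multichoose 0 t.toNat = 0 := by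
        rw [← Nat.succ_pred_eq_of_pos (Int.pos_iff_toNat_pos.1 ht), Nat.multichoose_zero_succ]
      simp [hilbertCoeff, hempty]
    | succ k => exact (hasGrowth_hilbertCoeff k h).succ
  | succ k _ ih => exact ih.succ

theorem exists_hasGrowth_hilbertCoeff_sub (k : ℕ) (h : ℕ → ℕ) (r : ℤ) : ∃ c,
    HasGrowth k (fun t => (hilbertCoeff (k + 2) h t : ℝ) - hilbertCoeff (k + 2) h (t - r)) c := by
  have hterm (j : ℤ) : ∃ c, HasGrowth k (fun t => ((k + 2).multichoose (t - (0 + j)).toNat : ℝ) -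
      (k + 2).multichoose (t - (r + j)).toNat) c := by
    have h := (hasExpansion_multichoose (k + 1) (0 + j)).sub
      (hasExpansion_multichoose (k + 1) (r + j))
    rw [sub_self] at h
    exact ⟨_, h.hasGrowth_of_zero⟩
  choose c hc using hterm
  refine ⟨_, (HasGrowth.sum (Finset.range (k + 2 + 1)) fun j _ =>
    (hc j).const_mul (h j : ℝ)).congr' ?_⟩
  filter_upwards [eventually_hilbertCoeff_eq_sum (k + 2) h 0,
    eventually_hilbertCoeff_eq_sum (k + 2) h r] with t h₀ hr
  rw [sub_zero] at h₀
  rw [← hr, ← h₀, ← Finset.sum_sub_distrib]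
  simp only [mul_sub]

/-! ### Hilbert functions of Gorenstein cones -/

theorem hilbertCoeff_of_neg (D : ℕ) (h : ℕ → ℕ) {t : ℤ} (ht : t < 0) : hilbertCoeff D h t = 0 :=
  Finset.sum_eq_zero fun j _ => if_neg (by lia)

theorem hilbertCoeff_natCast_of_forall_lt {D n : ℕ} {h : ℕ → ℕ} (hn : n ≤ D)
    (hlt : ∀ j < n, h j = 0) : hilbertCoeff D h n = h n := by
  rw [hilbertCoeff, Finset.sum_eq_single_of_mem n (Finset.mem_range.2 (by lia))]
  · simp
  · intro j _ hj
    split_ifs with hle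
    · rw [hlt j (by lia), zero_mul]
    · rfl

section Reciprocity

variable {d : ℕ} {h : ℕ → ℕ}

theorem eq_zero_of_hilbertCoeff_reflect
    (hI : ∀ t, hilbertCoeff (d + 1) (fun j => h (d + 1 - j)) t =
      hilbertCoeff (d + 1) h (t - (d - 1))) {j : ℕ} (h₃ : 3 ≤ j) (hj : j ≤ d + 1) : h j = 0 := by
  have hreflect (n : ℕ) (hn : n + 1 < d) : h (d + 1 - n) = 0 := by
    induction n using Nat.strong_induction_on with
    | _ n ih =>
      have hn₀ := hilbertCoeff_natCast_of_forall_lt (D := d + 1) (h := fun j => h (d + 1 - j))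
        (by lia) fun j (hj : j < n) => ih j hj (by lia)
      rw [← hn₀, hI, hilbertCoeff_of_neg _ _ (by lia)]
  simpa [Nat.sub_sub_self hj] using hreflect (d + 1 - j) (by lia)

theorem eq_one_of_hilbertCoeff_reflect (hd : 1 ≤ d) (h₀ : hilbertCoeff (d + 1) h 0 = 1)
    (hI : ∀ t, hilbertCoeff (d + 1) (fun j => h (d + 1 - j)) t =
      hilbertCoeff (d + 1) h (t - (d - 1))) : h 0 = 1 ∧ h 2 = 1 := by
  constructor
  · rw [← h₀]
    exact (hilbertCoeff_natCast_of_forall_lt (by lia) (by simp)).symm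
  · have hlast := hilbertCoeff_natCast_of_forall_lt (D := d + 1) (n := d - 1)
      (h := fun j => h (d + 1 - j)) (by lia)
      fun j hj => eq_zero_of_hilbertCoeff_reflect hI (by lia) (by lia)
    rw [hI, Nat.cast_sub hd, Nat.cast_one, sub_self, h₀] at hlast
    rw [hlast]
    congr 1
    lia

theorem sum_range_eq_of_shape {M : Type*} [AddCommMonoid M] (hd : 1 ≤ d) {f : ℕ → M}
    (hf : ∀ j, 3 ≤ j → j ≤ d + 1 → f j = 0) :
    ∑ j ∈ Finset.range (d + 2), f j = f 0 + f 1 + f 2 := by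
  rw [← Finset.sum_subset (Finset.range_mono (by lia : 3 ≤ d + 2)), Finset.sum_range_succ,
    Finset.sum_range_succ, Finset.sum_range_one]
  intro j hj hj₃
  rw [Finset.mem_range] at hj hj₃
  exact hf j (by lia) (by lia)

theorem hasExpansion_hilbertCoeff_sub (hd : 1 ≤ d) (h₀ : h 0 = 1) (h₂ : h 2 = 1)
    (h₃ : ∀ j, 3 ≤ j → j ≤ d + 1 → h j = 0) (s : ℤ) :
    HasExpansion d (fun t => hilbertCoeff (d + 1) h (t - s)) (h 1 + 2)
      ((h 1 + 2) * (d * (d - 1) / 2 - d * s))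
      (d * (d - 1) / 24 *
        ((h 1 + 2) * (12 * s ^ 2 - 12 * (d - 1) * s + (d - 2) * (3 * d - 1)) + 24)) := by
  have hexp := (((hasExpansion_multichoose d (s + (0 : ℕ))).add
    ((hasExpansion_multichoose d (s + (1 : ℕ))).const_mul (h 1 : ℝ))).add
    (hasExpansion_multichoose d (s + (2 : ℕ)))).congr' 
    (g := fun t => hilbertCoeff (d + 1) h (t - s)) <| by
      filter_upwards [eventually_hilbertCoeff_eq_sum (d + 1) h s] with t ht
      rw [← ht, sum_range_eq_of_shape hd fun j hj₃ hj => by rw [h₃ j hj₃ hj]; simp, h₀, h₂]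
      simp
  convert hexp using 1 <;> push_cast <;> ring

/-- Comparison of the second order coefficients on both sides of the halving identity, for a Hilbert
function with numerator `1 + h 1 * X + X ^ 2`. -/
theorem twelve_eq_of_hilbertCoeff (hd : 2 ≤ d) (h₀ : h 0 = 1) (h₂ : h 2 = 1)
    (h₃ : ∀ j, 3 ≤ j → j ≤ d + 1 → h j = 0) {L : ℤ → ℝ} (hL : ∀ t, L t = hilbertCoeff (d + 1) h t)
    {C S : ℝ} (hsecond : HasGrowth (d - 2)
      (fun t => L t - 2 * L (t - (d - 1)) + L (t - 2 * (d - 1))) C)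
    (hhalving : HasGrowth (d - 2)
      (fun t => 16 * 2 ^ d * L t - 16 * L (2 * t) - 4 * 2 ^ d * (L t - L (t - (d - 1))))
      (2 ^ d * (C + S))) :
    12 = S + ((d - 1 : ℝ) * (1 - (d - 1)) + 2) / 2 * (h 1 + 2) := by
  have hexp (s : ℤ) := hasExpansion_hilbertCoeff_sub (by lia) h₀ h₂ h₃ s
  simp only [← hL] at hexp
  have hexp₀ := hexp 0
  simp only [sub_zero] at hexp₀
  obtain ⟨k, rfl⟩ := Nat.exists_eq_add_of_le' hd
  have hC := hsecond.unique <| HasExpansion.hasGrowth_of_zero_zero (d := k) <| by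
    convert (hexp₀.sub ((hexp ((k + 2 : ℕ) - 1)).const_mul 2)).add (hexp (2 * ((k + 2 : ℕ) - 1)))
      using 1 <;> push_cast <;> ring
  have hS := hhalving.unique <| HasExpansion.hasGrowth_of_zero_zero (d := k) <| by
    convert ((hexp₀.const_mul (16 * 2 ^ (k + 2))).sub (hexp₀.comp_two_mul.const_mul 16)).sub
      ((hexp₀.sub (hexp ((k + 2 : ℕ) - 1))).const_mul (4 * 2 ^ (k + 2))) using 1 <;>
      push_cast <;> ring
  push_cast at hC hS ⊢
  field_simp at hC hS
  refine mul_right_cancel₀ (by positivity : (k + 1 : ℝ) ≠ 0) ?_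
  linear_combination (4 * hC - hS) / 96

end Reciprocity

/-! ### Cones over lattice point sets -/

/-- The real vector space containing the cone over a polytope in `ℝ^d`; the last coordinate is the
height. -/
abbrev RealSpace (d : ℕ) := (Fin d → ℝ) × ℝ

/-- The lattice of `RealSpace d`. -/
abbrev Lattice (d : ℕ) := (Fin d → ℤ) × ℤ

section Cones

variable {d : ℕ}

/-- The embedding of the lattice into the real space. -/
def toReal : Lattice d →+ RealSpace d where
  toFun p := (coeLat p.1, p.2)
  map_zero' := by ext <;> simp [coeLat]
  map_add' p q := by ext <;> simp [coeLat]

theorem toReal_apply (p : Lattice d) : toReal p = (coeLat p.1, (p.2 : ℝ)) := rfl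

/-- The lattice point of height one over `v`. -/
def homogenize (v : Fin d → ℤ) : Lattice d := (v, 1)

theorem toReal_homogenize (v : Fin d → ℤ) : toReal (homogenize v) = (coeLat v, (1 : ℝ)) := by
  simp [toReal_apply, homogenize]

theorem isometry_toReal : Isometry (toReal : Lattice d → RealSpace d) :=
  (Isometry.piMap _ fun _ => Real.isometry_intCast).prodMap Real.isometry_intCast

theorem finite_linearCombination_eq_toReal {ι : Type*} [Fintype ι] (g : ι → RealSpace d) (K : ℝ) :
    {p : Lattice d | ∃ l : ι → ℝ, (∀ i, |l i| ≤ K) ∧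
      Fintype.linearCombination ℝ g l = toReal p}.Finite := by
  have hcompact : IsCompact (Fintype.linearCombination ℝ g '' Set.Icc (-fun _ => K) fun _ => K) :=
    isCompact_Icc.image (LinearMap.continuous_of_finiteDimensional _)
  have hbounded := isometry_toReal.antilipschitz.isBounded_preimage hcompact.isBounded
  refine ((Metric.isCompact_of_isClosed_isBounded (isClosed_discrete _)
    hbounded).finite_of_discrete).subset ?_
  rintro p ⟨l, hl, hp⟩
  exact ⟨l, ⟨fun i => (abs_le.1 (hl i)).1, fun i => (abs_le.1 (hl i)).2⟩, hp⟩

/-- The lattice polytope spanned by a finite set of lattice points. -/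
def latticeHull (S : Finset (Fin d → ℤ)) : Set (Fin d → ℝ) :=
  convexHull ℝ (coeLat '' (S : Set (Fin d → ℤ)))

/-- The points of `S`, placed at height one, as a lattice configuration. -/
def pointConfiguration (S : Finset (Fin d → ℤ)) :
    LatticeConfiguration (RealSpace d) S (Lattice d) where
  real := toReal
  point v := homogenize v
  height := LinearMap.snd ℝ _ _
  deg := AddMonoidHom.snd _ _
  height_real _ := rfl
  deg_point _ := rfl
  finite_zonotope := finite_linearCombination_eq_toReal _ 1

/-- The cone over `S × {1}`. -/
def coneOver (S : Finset (Fin d → ℤ)) : PointedCone ℝ (RealSpace d) :=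
  PointedCone.hull ℝ (Set.range (pointConfiguration S).vec)

/-- The linear span of `S × {1}`. -/
def spanOver (S : Finset (Fin d → ℤ)) : Submodule ℝ (RealSpace d) := (pointConfiguration S).span

/-- The dimension of the cone over `S`, one more than that of the convex hull of `S ≠ ∅`. -/
def coneRank (S : Finset (Fin d → ℤ)) : ℕ := (pointConfiguration S).rank

/-- The lattice points of height `t` in the cone over `S`. -/
def coneSlice (S : Finset (Fin d → ℤ)) (t : ℤ) : Set (Lattice d) :=
  {p | p.2 = t ∧ toReal p ∈ coneOver S}

theorem exists_ncard_coneSlice (S : Finset (Fin d → ℤ)) :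
    ∃ h μ, (∀ i, 0 < μ i) ∧ ∀ t,
      (coneSlice S t).Finite ∧ (coneSlice S t).ncard = hilbertCoeff (coneRank S) h t ∧
      ((pointConfiguration S).perturbedPoints
          (-Fintype.linearCombination ℝ (pointConfiguration S).vec μ) t).ncard =
        hilbertCoeff (coneRank S) (fun j => h (coneRank S - j)) t :=
  (pointConfiguration S).exists_ncard_eq_hilbertCoeff

/-- The numerator of the Hilbert series of the cone over `S`. -/
def hStar (S : Finset (Fin d → ℤ)) : ℕ → ℕ := (exists_ncard_coneSlice S).choose

variable {S T : Finset (Fin d → ℤ)} {x : RealSpace d}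

theorem finite_coneSlice (S : Finset (Fin d → ℤ)) (t : ℤ) : (coneSlice S t).Finite :=
  ((exists_ncard_coneSlice S).choose_spec.choose_spec.2 t).1

theorem ncard_coneSlice (S : Finset (Fin d → ℤ)) (t : ℤ) :
    (coneSlice S t).ncard = hilbertCoeff (coneRank S) (hStar S) t :=
  ((exists_ncard_coneSlice S).choose_spec.choose_spec.2 t).2.1

/-- The normalized volume of `latticeHull S`, defined as the value at one of the numerator of the
Hilbert series. -/
def latticeVolume (S : Finset (Fin d → ℤ)) : ℝ :=
  ∑ j ∈ Finset.range (coneRank S + 1), (hStar S j : ℝ)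

theorem toReal_homogenize_mem_coneOver {v : Fin d → ℤ} (hv : v ∈ S) :
    toReal (homogenize v) ∈ coneOver S :=
  PointedCone.subset_hull ⟨⟨v, hv⟩, rfl⟩

theorem coneOver_le_iff {C : PointedCone ℝ (RealSpace d)} :
    coneOver S ≤ C ↔ ∀ v ∈ S, toReal (homogenize v) ∈ C := by
  refine Submodule.span_le.trans (Set.range_subset_iff.trans ?_)
  exact Subtype.forall

theorem coneOver_mono (h : S ⊆ T) : coneOver S ≤ coneOver T :=
  coneOver_le_iff.2 fun _ hv => toReal_homogenize_mem_coneOver (h hv)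

theorem apply_nonneg_of_mem_coneOver {f : Module.Dual ℝ (RealSpace d)}
    (hf : ∀ v ∈ S, 0 ≤ f (toReal (homogenize v))) (hx : x ∈ coneOver S) : 0 ≤ f x :=
  (coneOver_le_iff (C := (PointedCone.positive ℝ ℝ).comap f)).2 hf hx

theorem mem_dualAnnihilator_spanOver {f : Module.Dual ℝ (RealSpace d)} :
    f ∈ (spanOver S).dualAnnihilator ↔ ∀ v ∈ S, f (toReal (homogenize v)) = 0 := by
  rw [Submodule.mem_dualAnnihilator]
  change spanOver S ≤ LinearMap.ker f ↔ _
  refine Submodule.span_le.trans (Set.range_subset_iff.trans ?_)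
  exact Subtype.forall

theorem mem_coneOver_of_apply_eq_zero {f : Module.Dual ℝ (RealSpace d)}
    (hf : ∀ v ∈ S, 0 ≤ f (toReal (homogenize v)))
    (hT : ∀ v ∈ S, f (toReal (homogenize v)) = 0 → v ∈ T) (hx : x ∈ coneOver S) (h₀ : f x = 0) :
    x ∈ coneOver T := by
  suffices 0 ≤ f x ∧ (f x = 0 → x ∈ coneOver T) from this.2 h₀
  clear h₀
  induction hx using Submodule.span_induction with
  | mem x hx =>
    obtain ⟨v, rfl⟩ := hx
    exact ⟨hf _ v.2, fun h => toReal_homogenize_mem_coneOver (hT _ v.2 h)⟩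
  | zero => simp
  | add x y _ _ hx hy =>
    rw [map_add]
    refine ⟨add_nonneg hx.1 hy.1, fun h => ?_⟩
    obtain ⟨hx₀, hy₀⟩ := (add_eq_zero_iff_of_nonneg hx.1 hy.1).1 h
    exact add_mem (hx.2 hx₀) (hy.2 hy₀)
  | smul a x _ hx =>
    have hfa : f (a • x) = a.1 * f x := map_smul f a.1 x
    rw [hfa]
    refine ⟨mul_nonneg a.2 hx.1, fun h => ?_⟩
    rcases mul_eq_zero.1 h with ha | hx₀
    · rw [show a = 0 from Subtype.ext ha, zero_smul]
      exact zero_mem _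
    · exact Submodule.smul_mem _ _ (hx.2 hx₀)

theorem linearCombination_vec (S : Finset (Fin d → ℤ)) (l : S → ℝ) :
    Fintype.linearCombination ℝ (pointConfiguration S).vec l =
      (∑ v, l v • coeLat v.1, ∑ v, l v) := by
  have hvec (v : S) : (pointConfiguration S).vec v = (coeLat v.1, (1 : ℝ)) := toReal_homogenize _
  ext <;> simp [Fintype.linearCombination_apply, hvec, Prod.fst_sum, Prod.snd_sum]

theorem mem_coneOver_iff {x : Fin d → ℝ} {t : ℝ} (ht : 0 < t) :
    (x, t) ∈ coneOver S ↔ x ∈ t • latticeHull S := by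
  rw [Set.mem_smul_set_iff_inv_smul_mem₀ ht.ne']
  constructor
  · intro h
    obtain ⟨l, hl, h⟩ := mem_hull_range_iff.1 h
    rw [linearCombination_vec, Prod.mk.injEq] at h
    obtain ⟨rfl, rfl⟩ := h
    exact Finset.centerMass_mem_convexHull Finset.univ (fun v _ => hl v) ht
      fun v _ => ⟨v, v.2, rfl⟩
  · intro h
    suffices latticeHull S ⊆
        {y | ((y, 1) : RealSpace d) ∈ coneOver S} by
      simpa [ht.ne'] using PointedCone.smul_mem (coneOver S) ht.le (this h)
    refine convexHull_min ?_ fun y hy z hz a b ha hb hab => ?_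
    · rintro _ ⟨v, hv, rfl⟩
      simpa only [Set.mem_ofPred_eq, toReal_homogenize] using toReal_homogenize_mem_coneOver hv
    · simpa [hab] using PointedCone.convex (coneOver S) hy hz ha hb hab

private theorem fst_eq_zero_of_forall_dual {y : Fin d → ℝ}
    (h : ∀ f : Module.Dual ℝ (RealSpace d), (∀ v ∈ S, 0 ≤ f (toReal (homogenize v))) →
      0 ≤ f (y, 0)) : y = 0 := by
  have key (g : Module.Dual ℝ (Fin d → ℝ)) : 0 ≤ g y := by
    obtain ⟨M, hM⟩ := (S.image fun v => -g (coeLat v)).exists_le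
    have := h (g.comp (LinearMap.fst ℝ _ _) + M • LinearMap.snd ℝ _ _) fun v hv => by
      have := hM _ (Finset.mem_image_of_mem _ hv)
      simp only [toReal_homogenize, LinearMap.add_apply, LinearMap.comp_apply, LinearMap.fst_apply,
        LinearMap.smul_apply, LinearMap.snd_apply, smul_eq_mul, mul_one]
      linarith
    simpa using this
  ext i
  exact le_antisymm (by simpa using key (-LinearMap.proj i)) (key (LinearMap.proj i))

theorem mem_coneOver_iff_forall_dual : x ∈ coneOver S ↔
    ∀ f : Module.Dual ℝ (RealSpace d), (∀ v ∈ S, 0 ≤ f (toReal (homogenize v))) → 0 ≤ f x := by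
  refine ⟨fun hx f hf => apply_nonneg_of_mem_coneOver hf hx, fun h => ?_⟩
  obtain ⟨y, t⟩ := x
  have ht : 0 ≤ t := h (LinearMap.snd ℝ _ _) fun v _ => by simp [toReal_homogenize]
  rcases ht.eq_or_lt with rfl | ht
  · rw [fst_eq_zero_of_forall_dual h]
    exact zero_mem _
  rw [mem_coneOver_iff ht, Set.mem_smul_set_iff_inv_smul_mem₀ ht.ne']
  by_contra hy
  have hclosed : IsClosed (latticeHull S) :=
    ((S.finite_toSet.image _).isCompact_convexHull ℝ).isClosed
  obtain ⟨f, a, hfy, hfS⟩ := geometric_hahn_banach_point_closed (convex_convexHull ℝ _) hclosed hy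
  have := h (f.toLinearMap.comp (LinearMap.fst ℝ _ _) - a • LinearMap.snd ℝ _ _) fun v hv => by
    simpa [toReal_homogenize] using (hfS _ (subset_convexHull ℝ _ ⟨v, hv, rfl⟩)).le
  rw [map_smul, smul_eq_mul, inv_mul_lt_iff₀ ht] at hfy
  simp only [LinearMap.sub_apply, LinearMap.comp_apply, LinearMap.fst_apply, LinearMap.smul_apply,
    LinearMap.snd_apply, smul_eq_mul, ContinuousLinearMap.coe_coe] at this
  linarith

end Cones

/-! ### Facets of a Gorenstein cone -/

/-- The linear form `(x, t) ↦ ⟨y, x⟩ - t * b`, the homogenization of the inequality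
`⟨y, x⟩ ≥ b`. -/
def affineForm {d : ℕ} (y : Fin d → ℝ) (b : ℝ) : Module.Dual ℝ (RealSpace d) :=
  (dotProductBilin ℝ ℝ y).comp (LinearMap.fst ℝ _ _) - b • LinearMap.snd ℝ _ _

theorem affineForm_apply {d : ℕ} (y : Fin d → ℝ) (b : ℝ) (x : RealSpace d) :
    affineForm y b x = y ⬝ᵥ x.1 - x.2 * b := by
  simp [affineForm, mul_comm]

/-- The integral version of `affineForm`. -/
def latticeForm {d : ℕ} (u : Fin d → ℤ) (c : ℤ) : Lattice d →+ ℤ where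
  toFun p := u ⬝ᵥ p.1 - p.2 * c
  map_zero' := by simp
  map_add' p q := by simp only [Prod.fst_add, Prod.snd_add, dotProduct_add, add_mul]; ring

theorem coeLat_dotProduct {d : ℕ} (u v : Fin d → ℤ) :
    coeLat u ⬝ᵥ coeLat v = ((u ⬝ᵥ v : ℤ) : ℝ) := by
  simp [dotProduct, coeLat]

theorem coeLat_injective {d : ℕ} : Function.Injective (coeLat (d := d)) :=
  fun _ _ h => funext fun i => Int.cast_injective (congrFun h i)

/-- The cone over a Gorenstein polytope of index `r`, described by lattice points and by the
primitive inner normals of its facets. That the polytope is Gorenstein is expressed by a lattice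
point at height `r` on which each facet form takes the value one. -/
structure GorensteinCone (d r : ℕ) where
  /-- lattice points spanning the polytope -/
  points : Finset (Fin d → ℤ)
  /-- the inner normals of the facets -/
  normals : Finset (Fin d → ℤ)
  /-- the interior lattice point of the dilation by `r` -/
  center : Fin d → ℤ
  /-- the minimum of a facet normal on the polytope -/
  offset : (Fin d → ℤ) → ℤ
  dotProduct_center : ∀ u ∈ normals, u ⬝ᵥ center - r * offset u = 1
  offset_le : ∀ u ∈ normals, ∀ v ∈ points, offset u ≤ u ⬝ᵥ v
  coneRank_points : coneRank points = d + 1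
  mem_hull_of_nonneg : ∀ f : Module.Dual ℝ (RealSpace d),
    (∀ v ∈ points, 0 ≤ f (toReal (homogenize v))) →
      f ∈ PointedCone.hull ℝ ((fun u => affineForm (coeLat u) (offset u)) '' normals)
  affineForm_mem_extremePoints : ∀ u ∈ normals,
    affineForm (coeLat u) (offset u) ∈ Set.extremePoints ℝ
      {f : Module.Dual ℝ (RealSpace d) | (∀ v ∈ points, 0 ≤ f (toReal (homogenize v))) ∧
        f (toReal (center, (r : ℤ))) = 1}

namespace GorensteinCone

variable {d r : ℕ} (Γ : GorensteinCone d r)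

/-- The linear form vanishing on the facet with normal `u`. -/
def form (u : Fin d → ℤ) : Module.Dual ℝ (RealSpace d) := affineForm (coeLat u) (Γ.offset u)

/-- The lattice distance of a lattice point from the facet with normal `u`. -/
def dist (u : Fin d → ℤ) : Lattice d →+ ℤ := latticeForm u (Γ.offset u)

/-- The lattice point at height `r` at distance one from every facet. -/
def gorensteinPoint : Lattice d := (Γ.center, (r : ℤ))

variable {u w : Fin d → ℤ} {x : RealSpace d} {p : Lattice d}

theorem dist_apply (u : Fin d → ℤ) (p : Lattice d) :
    Γ.dist u p = u ⬝ᵥ p.1 - p.2 * Γ.offset u := rfl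

theorem form_toReal (u : Fin d → ℤ) (p : Lattice d) : Γ.form u (toReal p) = Γ.dist u p := by
  rw [form, affineForm_apply, toReal_apply, coeLat_dotProduct, dist_apply]
  push_cast
  rfl

theorem dist_gorensteinPoint (hu : u ∈ Γ.normals) : Γ.dist u Γ.gorensteinPoint = 1 :=
  Γ.dotProduct_center u hu

theorem form_gorensteinPoint (hu : u ∈ Γ.normals) : Γ.form u (toReal Γ.gorensteinPoint) = 1 := by
  rw [form_toReal, Γ.dist_gorensteinPoint hu, Int.cast_one]

theorem dist_nonneg (hu : u ∈ Γ.normals) {v : Fin d → ℤ} (hv : v ∈ Γ.points) :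
    0 ≤ Γ.dist u (homogenize v) := by
  simpa [dist_apply, homogenize] using Γ.offset_le u hu v hv

theorem form_nonneg (hu : u ∈ Γ.normals) {v : Fin d → ℤ} (hv : v ∈ Γ.points) :
    0 ≤ Γ.form u (toReal (homogenize v)) := by
  rw [form_toReal]
  exact_mod_cast Γ.dist_nonneg hu hv

theorem form_injective : Function.Injective Γ.form := by
  intro u w h
  have hdot (y : Fin d → ℝ) : coeLat u ⬝ᵥ y = coeLat w ⬝ᵥ y := by
    simpa [form, affineForm_apply] using LinearMap.congr_fun h (y, 0)
  exact coeLat_injective (dotProduct_eq _ _ hdot)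

theorem mem_coneOver_points_iff : x ∈ coneOver Γ.points ↔ ∀ u ∈ Γ.normals, 0 ≤ Γ.form u x := by
  refine ⟨fun hx u hu => apply_nonneg_of_mem_coneOver (fun v hv => Γ.form_nonneg hu hv) hx,
    fun h => mem_coneOver_iff_forall_dual.2 fun f hf => ?_⟩
  have hle : PointedCone.hull ℝ (Γ.form '' Γ.normals) ≤
      (PointedCone.positive ℝ ℝ).comap (Module.Dual.eval ℝ (RealSpace d) x) :=
    Submodule.span_le.2 (Set.image_subset_iff.2 fun u hu => h u hu)
  exact hle (Γ.mem_hull_of_nonneg f hf)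

theorem toReal_mem_coneOver_points_iff :
    toReal p ∈ coneOver Γ.points ↔ ∀ u ∈ Γ.normals, 0 ≤ Γ.dist u p := by
  simp [mem_coneOver_points_iff, form_toReal]

/-- The points lying on the facets with normals `u` and `w`. -/
def commonPoints (u w : Fin d → ℤ) : Finset (Fin d → ℤ) :=
  Γ.points.filter fun v => Γ.dist u (homogenize v) = 0 ∧ Γ.dist w (homogenize v) = 0

theorem mem_commonPoints {v : Fin d → ℤ} : v ∈ Γ.commonPoints u w ↔
    v ∈ Γ.points ∧ Γ.dist u (homogenize v) = 0 ∧ Γ.dist w (homogenize v) = 0 :=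
  Finset.mem_filter

theorem commonPoints_comm (u w : Fin d → ℤ) : Γ.commonPoints u w = Γ.commonPoints w u :=
  Finset.filter_congr fun _ _ => and_comm

theorem commonPoints_subset (u w : Fin d → ℤ) : Γ.commonPoints u w ⊆ Γ.points :=
  Finset.filter_subset _ _

/-- The linear forms vanishing on `S × {1}` and at the Gorenstein point; if `S` lies on a facet,
these are the differences of forms which vanish on `S × {1}` and agree at the Gorenstein point. -/
def directions (S : Finset (Fin d → ℤ)) : Submodule ℝ (Module.Dual ℝ (RealSpace d)) :=
  (spanOver S ⊔ Submodule.span ℝ {toReal Γ.gorensteinPoint}).dualAnnihilator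

variable {S : Finset (Fin d → ℤ)} {f : Module.Dual ℝ (RealSpace d)}

theorem mem_directions : f ∈ Γ.directions S ↔
    (∀ v ∈ S, f (toReal (homogenize v)) = 0) ∧ f (toReal Γ.gorensteinPoint) = 0 := by
  rw [directions, Submodule.dualAnnihilator_sup_eq, Submodule.mem_inf, mem_dualAnnihilator_spanOver]
  refine and_congr_right' ?_
  rw [Submodule.mem_dualAnnihilator]
  exact (Submodule.span_singleton_le_iff_mem (p := LinearMap.ker f) ..)

theorem form_sub_form_mem_directions (hu : u ∈ Γ.normals) (hw : w ∈ Γ.normals)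
    (huS : ∀ v ∈ S, Γ.dist u (homogenize v) = 0) (hwS : ∀ v ∈ S, Γ.dist w (homogenize v) = 0) :
    Γ.form u - Γ.form w ∈ Γ.directions S := by
  refine Γ.mem_directions.2 ⟨fun v hv => ?_, ?_⟩
  · simp [form_toReal, huS v hv, hwS v hv]
  · simp [Γ.form_gorensteinPoint, hu, hw]

theorem finrank_directions_add_coneRank (hu : u ∈ Γ.normals)
    (hS : ∀ v ∈ S, Γ.dist u (homogenize v) = 0) :
    Module.finrank ℝ (Γ.directions S) + coneRank S = d := by
  have hform : ∀ x ∈ spanOver S, Γ.form u x = 0 := (Submodule.mem_dualAnnihilator _).1 <|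
    mem_dualAnnihilator_spanOver.2 fun v hv => by rw [form_toReal, hS v hv, Int.cast_zero]
  have hdisj : Disjoint (spanOver S) (Submodule.span ℝ {toReal Γ.gorensteinPoint}) :=
    Submodule.disjoint_span_singleton.2 fun hmem => absurd
      ((Γ.form_gorensteinPoint hu).symm.trans (hform _ hmem)) one_ne_zero
  have hne : toReal Γ.gorensteinPoint ≠ 0 := fun h => by
    simpa [h] using Γ.form_gorensteinPoint hu
  have hsup := Submodule.finrank_sup_add_finrank_inf_eq (spanOver S)
    (Submodule.span ℝ {toReal Γ.gorensteinPoint})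
  have hann := Subspace.finrank_add_finrank_dualAnnihilator_eq
    (spanOver S ⊔ Submodule.span ℝ {toReal Γ.gorensteinPoint})
  rw [hdisj.eq_bot, finrank_bot, finrank_span_singleton hne] at hsup
  have hspace : Module.finrank ℝ (RealSpace d) = d + 1 := by simp
  change _ + Module.finrank ℝ (spanOver S) = d
  change _ + Module.finrank ℝ (Γ.directions S) = _ at hann
  lia

theorem eq_zero_of_nonneg_add_of_nonneg_sub (hu : u ∈ Γ.normals)
    (h₀ : f (toReal Γ.gorensteinPoint) = 0)
    (hadd : ∀ v ∈ Γ.points, 0 ≤ (Γ.form u + f) (toReal (homogenize v)))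
    (hsub : ∀ v ∈ Γ.points, 0 ≤ (Γ.form u - f) (toReal (homogenize v))) : f = 0 := by
  have hadd₁ : (Γ.form u + f) (toReal Γ.gorensteinPoint) = 1 := by
    simp [Γ.form_gorensteinPoint hu, h₀]
  have hsub₁ : (Γ.form u - f) (toReal Γ.gorensteinPoint) = 1 := by
    simp [Γ.form_gorensteinPoint hu, h₀]
  have hmid : Γ.form u ∈ openSegment ℝ (Γ.form u + f) (Γ.form u - f) :=
    ⟨1 / 2, 1 / 2, by norm_num, by norm_num, by norm_num, by module⟩
  exact add_eq_left.1 ((mem_extremePoints.1 (Γ.affineForm_mem_extremePoints u hu)).2 _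
    ⟨hadd, hadd₁⟩ _ ⟨hsub, hsub₁⟩ hmid).1

theorem exists_pos_forall_abs_le_one (f : Module.Dual ℝ (RealSpace d))
    (S : Finset (Fin d → ℤ)) : ∃ ε : ℝ, 0 < ε ∧ ∀ v ∈ S, |ε * f (toReal (homogenize v))| ≤ 1 := by
  obtain ⟨M, hM⟩ := (S.image fun v => |f (toReal (homogenize v))|).exists_le
  have hpos : 0 < |M| + 1 := by positivity
  refine ⟨(|M| + 1)⁻¹, inv_pos.2 hpos, fun v hv => ?_⟩
  rw [abs_mul, abs_of_pos (inv_pos.2 hpos), inv_mul_le_iff₀ hpos, mul_one]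
  exact (hM _ (Finset.mem_image_of_mem _ hv)).trans ((le_abs_self M).trans (by simp))

theorem directions_commonPoints_self (hu : u ∈ Γ.normals) :
    Γ.directions (Γ.commonPoints u u) = ⊥ := by
  refine (Submodule.eq_bot_iff _).2 fun f hf => ?_
  obtain ⟨hfS, hf₀⟩ := Γ.mem_directions.1 hf
  obtain ⟨ε, hε, hbound⟩ := exists_pos_forall_abs_le_one f Γ.points
  have hle (v) (hv : v ∈ Γ.points) :
      |(ε • f) (toReal (homogenize v))| ≤ Γ.form u (toReal (homogenize v)) := by
    rcases (Γ.dist_nonneg hu hv).eq_or_lt with h | h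
    · simp [hfS v (Γ.mem_commonPoints.2 ⟨hv, h.symm, h.symm⟩), form_toReal, ← h]
    · refine (hbound v hv).trans ?_
      rw [form_toReal]
      exact_mod_cast h
  have hzero := Γ.eq_zero_of_nonneg_add_of_nonneg_sub (f := ε • f) hu (by simp [hf₀])
    (fun v hv => by rw [LinearMap.add_apply]; linarith [(abs_le.1 (hle v hv)).1])
    (fun v hv => by rw [LinearMap.sub_apply]; linarith [(abs_le.1 (hle v hv)).2])
  exact (smul_eq_zero.1 hzero).resolve_left hε.ne'

theorem coneRank_commonPoints_self (hu : u ∈ Γ.normals) : coneRank (Γ.commonPoints u u) = d := by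
  have := Γ.finrank_directions_add_coneRank (S := Γ.commonPoints u u) hu
    fun v hv => (Γ.mem_commonPoints.1 hv).2.1
  rwa [Γ.directions_commonPoints_self hu, finrank_bot, zero_add] at this

theorem coneRank_commonPoints_lt (hu : u ∈ Γ.normals) (hw : w ∈ Γ.normals) (huw : u ≠ w) :
    coneRank (Γ.commonPoints u w) < d := by
  have hmem := Γ.form_sub_form_mem_directions hu hw
    (fun v hv => (Γ.mem_commonPoints.1 hv).2.1) fun v hv => (Γ.mem_commonPoints.1 hv).2.2
  have hne : Γ.directions (Γ.commonPoints u w) ≠ ⊥ :=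
    (Submodule.ne_bot_iff _).2 ⟨_, hmem, sub_ne_zero.2 (Γ.form_injective.ne huw)⟩
  have := Γ.finrank_directions_add_coneRank (S := Γ.commonPoints u w) hu
    fun v hv => (Γ.mem_commonPoints.1 hv).2.1
  have := Submodule.one_le_finrank_iff.2 hne
  lia

theorem not_sbtw_form {u₁ u₂ u₃ : Fin d → ℤ} (h₁ : u₁ ∈ Γ.normals) (h₂ : u₂ ∈ Γ.normals)
    (h₃ : u₃ ∈ Γ.normals) : ¬ Sbtw ℝ (Γ.form u₁) (Γ.form u₂) (Γ.form u₃) := by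
  intro h
  have hmid := (sbtw_iff_mem_image_Ioo_and_ne.1 h).1
  rw [← openSegment_eq_image_lineMap] at hmid
  have hmem {u} (hu : u ∈ Γ.normals) := (Γ.affineForm_mem_extremePoints u hu).1
  exact h.ne_left.symm ((mem_extremePoints.1 (Γ.affineForm_mem_extremePoints u₂ h₂)).2 _
    (hmem h₁) _ (hmem h₃) hmid).1

theorem coneRank_add_one_lt_of_three_facets {u₁ u₂ u₃ : Fin d → ℤ} (h₁ : u₁ ∈ Γ.normals)
    (h₂ : u₂ ∈ Γ.normals) (h₃ : u₃ ∈ Γ.normals) (h₁₂ : u₁ ≠ u₂) (h₁₃ : u₁ ≠ u₃) (h₂₃ : u₂ ≠ u₃)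
    (hS₁ : ∀ v ∈ S, Γ.dist u₁ (homogenize v) = 0) (hS₂ : ∀ v ∈ S, Γ.dist u₂ (homogenize v) = 0)
    (hS₃ : ∀ v ∈ S, Γ.dist u₃ (homogenize v) = 0) : coneRank S + 1 < d := by
  by_contra! hS
  have hrank := Γ.finrank_directions_add_coneRank h₁ hS₁
  have hle : vectorSpan ℝ {Γ.form u₁, Γ.form u₂, Γ.form u₃} ≤ Γ.directions S := by
    refine Submodule.span_le.2 ?_
    have hforms : ∀ g ∈ ({Γ.form u₁, Γ.form u₂, Γ.form u₃} : Set (Module.Dual ℝ (RealSpace d))),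
        ∃ u ∈ Γ.normals, (∀ v ∈ S, Γ.dist u (homogenize v) = 0) ∧ Γ.form u = g := by
      rintro g (rfl | rfl | rfl)
      exacts [⟨u₁, h₁, hS₁, rfl⟩, ⟨u₂, h₂, hS₂, rfl⟩, ⟨u₃, h₃, hS₃, rfl⟩]
    rintro - ⟨_, hf, _, hg, rfl⟩
    obtain ⟨u, hu, huS, rfl⟩ := hforms _ hf
    obtain ⟨w, hw, hwS, rfl⟩ := hforms _ hg
    exact Γ.form_sub_form_mem_directions hu hw huS hwS
  have hcol : Collinear ℝ {Γ.form u₁, Γ.form u₂, Γ.form u₃} :=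
    collinear_iff_finrank_le_one.2 ((Submodule.finrank_mono hle).trans (by lia))
  rcases hcol.wbtw_or_wbtw_or_wbtw with h | h | h
  · exact Γ.not_sbtw_form h₁ h₂ h₃ ⟨h, Γ.form_injective.ne h₁₂.symm, Γ.form_injective.ne h₂₃⟩
  · exact Γ.not_sbtw_form h₂ h₃ h₁ ⟨h, Γ.form_injective.ne h₂₃.symm, Γ.form_injective.ne h₁₃.symm⟩
  · exact Γ.not_sbtw_form h₃ h₁ h₂ ⟨h, Γ.form_injective.ne h₁₃, Γ.form_injective.ne h₁₂⟩

end GorensteinCone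

/-! ### Counting lattice points above the facets -/

section TranslatedSlice

variable {d : ℕ} {S T : Finset (Fin d → ℤ)}

/-- The lattice points at height `t` in the translate by `y` of the cone over `S`. -/
def translatedSlice (S : Finset (Fin d → ℤ)) (y : Lattice d) (t : ℤ) : Set (Lattice d) :=
  {p | p.2 = t ∧ toReal (p - y) ∈ coneOver S}

theorem translatedSlice_eq_image (S : Finset (Fin d → ℤ)) (y : Lattice d) (t : ℤ) :
    translatedSlice S y t = (· + y) '' coneSlice S (t - y.2) := by
  rw [Set.image_add_right]
  ext p
  simp only [translatedSlice, coneSlice, Set.mem_preimage, Set.mem_ofPred_eq, ← sub_eq_add_neg,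
    Prod.snd_sub, sub_left_inj]

theorem finite_translatedSlice (S : Finset (Fin d → ℤ)) (y : Lattice d) (t : ℤ) :
    (translatedSlice S y t).Finite := by
  rw [translatedSlice_eq_image]
  exact (finite_coneSlice S _).image _

theorem ncard_translatedSlice (S : Finset (Fin d → ℤ)) (y : Lattice d) (t : ℤ) :
    (translatedSlice S y t).ncard = hilbertCoeff (coneRank S) (hStar S) (t - y.2) := by
  rw [translatedSlice_eq_image, Set.ncard_image_of_injective _ (add_left_injective y),
    ncard_coneSlice]

theorem hasGrowth_ncard_translatedSlice {k : ℕ} (hS : coneRank S = k + 1) (y : Lattice d) :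
    HasGrowth k (fun t => ((translatedSlice S y t).ncard : ℝ))
      (latticeVolume S) :=
  ((hasGrowth_hilbertCoeff k (hStar S)).comp_sub_const y.2).congr
    (fun t => by rw [ncard_translatedSlice, hS]) (by rw [latticeVolume, hS])

theorem hasGrowth_zero_ncard_translatedSlice {k : ℕ} (hS : coneRank S ≤ k) (y : Lattice d) :
    HasGrowth k (fun t => ((translatedSlice S y t).ncard : ℝ)) 0 :=
  ((hasGrowth_zero_hilbertCoeff hS (hStar S)).comp_sub_const y.2).congr
    (fun t => by rw [ncard_translatedSlice]) rfl

-- Rounding down the coefficients on `T` leaves a remainder with bounded coefficients.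
theorem exists_finset_forall_sub_mem_coneOver {f : Module.Dual ℝ (RealSpace d)}
    (hf : ∀ v ∈ S, 0 ≤ f (toReal (homogenize v)))
    (hT : ∀ v ∈ S, v ∉ T → 1 ≤ f (toReal (homogenize v))) (a : ℝ) :
    ∃ Y : Finset (Lattice d), ∀ p, toReal p ∈ coneOver S → f (toReal p) ≤ a →
      ∃ y ∈ Y, toReal (p - y) ∈ coneOver T := by
  classical
  refine ⟨(finite_linearCombination_eq_toReal (pointConfiguration S).vec (1 + |a|)).toFinset,
    fun p hp ha => ?_⟩
  obtain ⟨l, hl, hlp⟩ := mem_hull_range_iff.1 hp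
  have hvec (c : S → ℝ) : Fintype.linearCombination ℝ (pointConfiguration S).vec c =
      ∑ v : S, c v • toReal (homogenize v.1) := rfl
  have hterm (v : S) : l v * f (toReal (homogenize v)) ≤ a := by
    rw [← hlp, hvec, map_sum] at ha
    simp only [map_smul, smul_eq_mul] at ha
    exact (Finset.single_le_sum (f := fun v : S => l v * f (toReal (homogenize v)))
      (fun v _ => mul_nonneg (hl v) (hf v v.2)) (Finset.mem_univ v)).trans ha
  let m : S → ℤ := fun v => if v.1 ∈ T then ⌊l v⌋ else 0
  let z : Lattice d := ∑ v, m v • homogenize v.1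
  have hz : toReal z = Fintype.linearCombination ℝ (pointConfiguration S).vec
      (fun v => (m v : ℝ)) := by
    rw [hvec, map_sum]
    exact Finset.sum_congr rfl fun v _ => by rw [map_zsmul, Int.cast_smul_eq_zsmul]
  refine ⟨p - z, ?_, ?_⟩
  · rw [Set.Finite.mem_toFinset]
    refine ⟨fun v => l v - m v, fun v => ?_, ?_⟩
    · by_cases hv : v.1 ∈ T
      · simp only [m, if_pos hv, Int.self_sub_floor, Int.abs_fract]
        linarith [Int.fract_lt_one (l v), abs_nonneg a]
      · simp only [m, if_neg hv, Int.cast_zero, sub_zero, abs_of_nonneg (hl v)]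
        linarith [le_mul_of_one_le_right (hl v) (hT v v.2 hv), hterm v, le_abs_self a]
    · rw [map_sub, hz, ← hlp, ← map_sub]
      rfl
  · rw [sub_sub_cancel, hz, hvec]
    refine Submodule.sum_mem _ fun v _ => ?_
    by_cases hv : v.1 ∈ T
    · simp only [m, if_pos hv]
      exact PointedCone.smul_mem _ (by exact_mod_cast Int.floor_nonneg.2 (hl v))
        (toReal_homogenize_mem_coneOver hv)
    · simp [m, hv]

end TranslatedSlice

namespace GorensteinCone

variable {d r : ℕ} (Γ : GorensteinCone d r)

/-- The lattice points at height `t` at distance at least `s u` from each facet `u`. -/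
def region (s : Γ.normals → ℤ) (t : ℤ) : Set (Lattice d) :=
  {p | p.2 = t ∧ ∀ u : Γ.normals, s u ≤ Γ.dist u p}

/-- The number `N(s, t)` of lattice points in `Γ.region s t`. -/
def count (s : Γ.normals → ℤ) (t : ℤ) : ℝ := (Γ.region s t).ncard

theorem region_translate (s : Γ.normals → ℤ) (t : ℤ) (q : Lattice d) :
    Γ.region (fun u => s u + Γ.dist u q) (t + q.2) = (· + q) '' Γ.region s t := by
  rw [Set.image_add_right]
  ext p
  simp [region, ← sub_eq_add_neg, sub_eq_iff_eq_add, le_sub_iff_add_le]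

theorem count_translate (s : Γ.normals → ℤ) (t : ℤ) (q : Lattice d) :
    Γ.count (fun u => s u + Γ.dist u q) (t + q.2) = Γ.count s t := by
  rw [count, region_translate, Set.ncard_image_of_injective _ (add_left_injective q), count]

theorem count_add_one (s : Γ.normals → ℤ) (t : ℤ) : Γ.count (s + 1) t = Γ.count s (t - r) := by
  rw [← Γ.count_translate s _ Γ.gorensteinPoint]
  congr 1
  · ext u
    simp [Γ.dist_gorensteinPoint u.2]
  · simp [gorensteinPoint]

theorem region_zero (t : ℤ) : Γ.region 0 t = coneSlice Γ.points t := by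
  ext p
  simp [region, coneSlice, toReal_mem_coneOver_points_iff]

theorem dist_zsmul_gorensteinPoint (M : ℤ) (u : Γ.normals) :
    Γ.dist u (M • Γ.gorensteinPoint) = M := by
  rw [map_zsmul, Γ.dist_gorensteinPoint u.2, smul_eq_mul, mul_one]

theorem exists_region_subset (s : Γ.normals → ℤ) :
    ∃ M : ℤ, ∀ t, Γ.region s t ⊆ translatedSlice Γ.points (-(M • Γ.gorensteinPoint)) t := by
  obtain ⟨M, hM⟩ := Finite.exists_le fun u => -s u
  refine ⟨M, fun t p hp => ⟨hp.1, ?_⟩⟩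
  rw [toReal_mem_coneOver_points_iff]
  intro u hu
  have := hM ⟨u, hu⟩
  have := hp.2 ⟨u, hu⟩
  rw [sub_neg_eq_add, map_add, Γ.dist_zsmul_gorensteinPoint M ⟨u, hu⟩]
  lia

theorem finite_region (s : Γ.normals → ℤ) (t : ℤ) : (Γ.region s t).Finite :=
  have ⟨_, hM⟩ := Γ.exists_region_subset s
  (finite_translatedSlice _ _ _).subset (hM t)

theorem toReal_mem_coneOver_commonPoints_iff {u w : Fin d → ℤ} (hu : u ∈ Γ.normals)
    (hw : w ∈ Γ.normals) {p : Lattice d} : toReal p ∈ coneOver (Γ.commonPoints u w) ↔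
      (∀ x ∈ Γ.normals, 0 ≤ Γ.dist x p) ∧ Γ.dist u p = 0 ∧ Γ.dist w p = 0 := by
  constructor
  · intro hp
    have hnonneg := Γ.toReal_mem_coneOver_points_iff.1
      (coneOver_mono (Γ.commonPoints_subset u w) hp)
    have hnonpos {x} (hx : ∀ v ∈ Γ.commonPoints u w, Γ.dist x (homogenize v) = 0) :
        Γ.dist x p ≤ 0 := by
      have := apply_nonneg_of_mem_coneOver (f := -Γ.form x)
        (fun v hv => by simp [form_toReal, hx v hv]) hp
      rw [LinearMap.neg_apply, form_toReal, neg_nonneg] at this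
      exact_mod_cast this
    exact ⟨hnonneg, (hnonpos fun v hv => (Γ.mem_commonPoints.1 hv).2.1).antisymm (hnonneg u hu),
      (hnonpos fun v hv => (Γ.mem_commonPoints.1 hv).2.2).antisymm (hnonneg w hw)⟩
  · rintro ⟨hp, hup, hwp⟩
    refine mem_coneOver_of_apply_eq_zero (f := Γ.form u + Γ.form w)
      (fun v hv => add_nonneg (Γ.form_nonneg hu hv) (Γ.form_nonneg hw hv)) (fun v hv h => ?_)
      (Γ.toReal_mem_coneOver_points_iff.2 hp) (by simp [form_toReal, hup, hwp])
    rw [LinearMap.add_apply, form_toReal, form_toReal] at h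
    have := Γ.dist_nonneg hu hv
    have := Γ.dist_nonneg hw hv
    norm_cast at h
    exact Γ.mem_commonPoints.2 ⟨hv, by lia, by lia⟩

/-- The points of `Γ.region s t` at minimal distance from the facets `u` and `w`, which may
coincide. -/
def ridgeRegion (s : Γ.normals → ℤ) (u w : Γ.normals) (t : ℤ) : Set (Lattice d) :=
  {p ∈ Γ.region s t | Γ.dist u p = s u ∧ Γ.dist w p = s w}

theorem finite_ridgeRegion (s : Γ.normals → ℤ) (u w : Γ.normals) (t : ℤ) :
    (Γ.ridgeRegion s u w t).Finite := (Γ.finite_region s t).subset (Set.sep_subset _ _)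

theorem ridgeRegion_zero (u w : Γ.normals) (t : ℤ) :
    Γ.ridgeRegion 0 u w t = translatedSlice (Γ.commonPoints u w) 0 t := by
  ext p
  simp [ridgeRegion, region, translatedSlice, Γ.toReal_mem_coneOver_commonPoints_iff u.2 w.2,
    and_assoc]

theorem mem_region_add_single {s : Γ.normals → ℤ} {u : Γ.normals} {t : ℤ} {p : Lattice d} :
    p ∈ Γ.region (s + Pi.single u 1) t ↔ p ∈ Γ.region s t ∧ Γ.dist u p ≠ s u := by
  have hle (x : Γ.normals) : (s + Pi.single u 1 : Γ.normals → ℤ) x ≤ Γ.dist x p ↔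
      s x ≤ Γ.dist x p ∧ (x = u → Γ.dist u p ≠ s u) := by
    by_cases hx : x = u
    · subst hx
      simp only [Pi.add_apply, Pi.single_eq_same, forall_const]
      lia
    · simp [hx]
  simp only [region, Set.mem_ofPred_eq, hle, forall_and, forall_eq, and_assoc]

theorem count_sub_count_add_single (s : Γ.normals → ℤ) (u : Γ.normals) (t : ℤ) :
    Γ.count s t - Γ.count (s + Pi.single u 1) t = (Γ.ridgeRegion s u u t).ncard := by
  have hsdiff : Γ.ridgeRegion s u u t = Γ.region s t \ Γ.region (s + Pi.single u 1) t := by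
    ext p
    simp only [ridgeRegion, Set.mem_sdiff, Set.mem_sep_iff, mem_region_add_single]
    tauto
  have hsub : Γ.region (s + Pi.single u 1) t ⊆ Γ.region s t :=
    fun p hp => (Γ.mem_region_add_single.1 hp).1
  rw [hsdiff, Set.cast_ncard_sdiff hsub (Γ.finite_region s t), count, count]

theorem ncard_ridgeRegion_sub_add_single (s : Γ.normals → ℤ) {u w : Γ.normals} (huw : u ≠ w)
    (t : ℤ) : ((Γ.ridgeRegion s u u t).ncard : ℝ) -
      (Γ.ridgeRegion (s + Pi.single w 1) u u t).ncard = (Γ.ridgeRegion s u w t).ncard := by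
  have hs : (s + Pi.single w 1 : Γ.normals → ℤ) u = s u := by simp [huw]
  have hsdiff : Γ.ridgeRegion s u w t =
      Γ.ridgeRegion s u u t \ Γ.ridgeRegion (s + Pi.single w 1) u u t := by
    ext p
    simp only [ridgeRegion, Set.mem_sdiff, Set.mem_ofPred_eq, mem_region_add_single, hs]
    tauto
  have hsub : Γ.ridgeRegion (s + Pi.single w 1) u u t ⊆ Γ.ridgeRegion s u u t := by
    intro p hp
    simp only [ridgeRegion, Set.mem_ofPred_eq, mem_region_add_single, hs] at hp ⊢
    tauto
  rw [hsdiff, Set.cast_ncard_sdiff hsub (Γ.finite_ridgeRegion s u u t)]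

theorem count_mixed_difference (s : Γ.normals → ℤ) {u w : Γ.normals} (huw : u ≠ w) (t : ℤ) :
    Γ.count s t - Γ.count (s + Pi.single u 1) t - Γ.count (s + Pi.single w 1) t +
      Γ.count (s + Pi.single u 1 + Pi.single w 1) t = (Γ.ridgeRegion s u w t).ncard := by
  rw [← Γ.ncard_ridgeRegion_sub_add_single s huw, ← count_sub_count_add_single,
    ← count_sub_count_add_single, add_right_comm s (Pi.single w 1)]
  ring

theorem exists_hasGrowth_facet_difference (hd : 2 ≤ d) (u : Γ.normals) :
    ∃ c, HasGrowth (d - 2) (fun t => (Γ.count 0 t - Γ.count (Pi.single u 1) t) -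
      (Γ.count 0 (t - r) - Γ.count (Pi.single u 1) (t - r))) c := by
  obtain ⟨c, hc⟩ := exists_hasGrowth_hilbertCoeff_sub (d - 2) (hStar (Γ.commonPoints u u)) r
  have hfacet (t : ℤ) : Γ.count 0 t - Γ.count (Pi.single u 1) t =
      hilbertCoeff (d - 2 + 2) (hStar (Γ.commonPoints u u)) t := by
    have := Γ.count_sub_count_add_single 0 u t
    rw [zero_add, ridgeRegion_zero, ncard_translatedSlice, Γ.coneRank_commonPoints_self u.2,
      Prod.snd_zero, sub_zero] at this
    rwa [Nat.sub_add_cancel hd]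
  exact ⟨c, hc.congr (fun t => by rw [hfacet, hfacet]) rfl⟩

/-- Two facets are adjacent if they meet in a face of codimension two. -/
def Adj (u w : Fin d → ℤ) : Prop := u ≠ w ∧ coneRank (Γ.commonPoints u w) + 1 = d

theorem adj_comm {u w : Fin d → ℤ} : Γ.Adj u w ↔ Γ.Adj w u := by
  rw [Adj, Adj, commonPoints_comm, ne_comm]

open Classical in
/-- The normalized volume of the ridge in which two adjacent facets meet, and zero for facets which
are not adjacent. -/
def ridgeVolume (u w : Γ.normals) : ℝ :=
  if Γ.Adj u w then latticeVolume (Γ.commonPoints u w) else 0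

theorem ridgeVolume_comm (u w : Γ.normals) : Γ.ridgeVolume u w = Γ.ridgeVolume w u := by
  rw [ridgeVolume, ridgeVolume, Γ.commonPoints_comm u.1, Γ.adj_comm]

theorem hasGrowth_ridgeVolume (hd : 2 ≤ d) {u w : Γ.normals} (h : Γ.Adj u w) (y : Lattice d) :
    HasGrowth (d - 2) (fun t => ((translatedSlice (Γ.commonPoints u w) y t).ncard : ℝ))
      (Γ.ridgeVolume u w) := by
  rw [ridgeVolume, if_pos h]
  have hrank : coneRank (Γ.commonPoints u w) = d - 2 + 1 := by
    have := h.2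
    lia
  exact hasGrowth_ncard_translatedSlice hrank y

-- A large multiple of an interior lattice point of the cone over the ridge.
theorem Adj.exists_abs_le_dist {u w : Γ.normals} (h : Γ.Adj u w) (c : Γ.normals → ℤ) :
    ∃ e, Γ.dist u e = 0 ∧ Γ.dist w e = 0 ∧ ∀ x, x ≠ u → x ≠ w → |c x| ≤ Γ.dist x e := by
  obtain ⟨M, hM⟩ := Finite.exists_le fun x => |c x|
  let b : Lattice d := ∑ v ∈ Γ.commonPoints u w, homogenize v
  have hzero {x} (hx : ∀ v ∈ Γ.commonPoints u w, Γ.dist x (homogenize v) = 0) :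
      Γ.dist x (M • b) = 0 := by
    rw [map_zsmul, map_sum, Finset.sum_eq_zero hx, smul_zero]
  refine ⟨M • b, hzero fun v hv => (Γ.mem_commonPoints.1 hv).2.1,
    hzero fun v hv => (Γ.mem_commonPoints.1 hv).2.2, fun x hxu hxw => ?_⟩
  have hpos (v) (hv : v ∈ Γ.commonPoints u w) : 0 ≤ Γ.dist x (homogenize v) :=
    Γ.dist_nonneg x.2 (Γ.mem_commonPoints.1 hv).1
  have hb : 1 ≤ Γ.dist x b := by
    rw [map_sum]
    refine (Finset.sum_nonneg hpos).lt_of_ne' fun hsum => ?_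
    refine (Γ.coneRank_add_one_lt_of_three_facets u.2 w.2 x.2 h.1
      (Subtype.coe_ne_coe.2 hxu.symm) (Subtype.coe_ne_coe.2 hxw.symm)
      (fun v hv => (Γ.mem_commonPoints.1 hv).2.1) (fun v hv => (Γ.mem_commonPoints.1 hv).2.2)
      ((Finset.sum_eq_zero_iff_of_nonneg hpos).1 hsum)).ne h.2
  rw [map_zsmul, smul_eq_mul]
  exact (hM x).trans (le_mul_of_one_le_right ((abs_nonneg _).trans (hM x)) hb)

theorem hasGrowth_ridgeRegion_of_adj (hd : 2 ≤ d) (s : Γ.normals → ℤ) {u w : Γ.normals}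
    (h : Γ.Adj u w) {p₀ : Lattice d} (hu : Γ.dist u p₀ = s u) (hw : Γ.dist w p₀ = s w) :
    HasGrowth (d - 2) (fun t => ((Γ.ridgeRegion s u w t).ncard : ℝ)) (Γ.ridgeVolume u w) := by
  obtain ⟨e, heu, hew, he⟩ := h.exists_abs_le_dist Γ fun x => s x - Γ.dist x p₀
  have hcases (x : Γ.normals) : x = u ∨ x = w ∨ |s x - Γ.dist x p₀| ≤ Γ.dist x e := by
    grind
  have hlower (t : ℤ) :
      translatedSlice (Γ.commonPoints u w) (p₀ + e) t ⊆ Γ.ridgeRegion s u w t := by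
    rintro p ⟨hpt, hp⟩
    obtain ⟨hp, hpu, hpw⟩ := (Γ.toReal_mem_coneOver_commonPoints_iff u.2 w.2).1 hp
    simp only [map_sub, map_add] at hp hpu hpw
    refine ⟨⟨hpt, fun x => ?_⟩, by lia, by lia⟩
    have := hp x x.2
    rcases hcases x with rfl | rfl | hx
    · lia
    · lia
    · linarith [le_abs_self (s x - Γ.dist x p₀)]
  have hupper (t : ℤ) :
      Γ.ridgeRegion s u w t ⊆ translatedSlice (Γ.commonPoints u w) (p₀ - e) t := by
    rintro p ⟨⟨hpt, hp⟩, hpu, hpw⟩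
    refine ⟨hpt, (Γ.toReal_mem_coneOver_commonPoints_iff u.2 w.2).2 ?_⟩
    simp only [map_sub]
    refine ⟨fun x hx => ?_, by lia, by lia⟩
    lift x to Γ.normals using hx
    have := hp x
    rcases hcases x with rfl | rfl | hx
    · lia
    · lia
    · linarith [neg_abs_le (s x - Γ.dist x p₀)]
  refine (Γ.hasGrowth_ridgeVolume hd h (p₀ + e)).squeeze (Γ.hasGrowth_ridgeVolume hd h (p₀ - e))
    (.of_forall fun t => ?_) (.of_forall fun t => ?_)
  · exact_mod_cast Set.ncard_le_ncard (hlower t) (Γ.finite_ridgeRegion s u w t)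
  · exact_mod_cast Set.ncard_le_ncard (hupper t) (finite_translatedSlice _ _ _)

theorem exists_ridgeRegion_subset (s : Γ.normals → ℤ) (u w : Γ.normals) :
    ∃ Y : Finset (Lattice d), ∀ t,
      Γ.ridgeRegion s u w t ⊆ ⋃ y ∈ Y, translatedSlice (Γ.commonPoints u w) y t := by
  classical
  obtain ⟨M, hM⟩ := Γ.exists_region_subset s
  let q : Lattice d := M • Γ.gorensteinPoint
  obtain ⟨Y, hY⟩ := exists_finset_forall_sub_mem_coneOver (S := Γ.points)
    (T := Γ.commonPoints u w) (f := Γ.form u + Γ.form w)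
    (fun v hv => add_nonneg (Γ.form_nonneg u.2 hv) (Γ.form_nonneg w.2 hv))
    (fun v hv hvT => by
      have hu := Γ.dist_nonneg u.2 hv
      have hw := Γ.dist_nonneg w.2 hv
      have hne : Γ.dist u (homogenize v) ≠ 0 ∨ Γ.dist w (homogenize v) ≠ 0 := by
        simpa only [mem_commonPoints, hv, true_and, not_and_or] using hvT
      rw [LinearMap.add_apply, form_toReal, form_toReal]
      exact_mod_cast (by lia : 1 ≤ Γ.dist u (homogenize v) + Γ.dist w (homogenize v)))
    ((Γ.form u + Γ.form w) (toReal q) + s u + s w)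
  refine ⟨Y.image (· - q), fun t p hp => ?_⟩
  have hcone : toReal (p + q) ∈ coneOver Γ.points := by
    simpa [q] using (hM t hp.1).2
  obtain ⟨y, hy, hpy⟩ := hY (p + q) hcone (by
    simp only [LinearMap.add_apply, map_add, form_toReal, hp.2.1, hp.2.2]
    linarith)
  exact Set.mem_biUnion (Finset.mem_image_of_mem _ hy)
    ⟨hp.1.1, by rwa [sub_sub_eq_add_sub]⟩

theorem hasGrowth_ridgeRegion_of_not_adj (s : Γ.normals → ℤ) {u w : Γ.normals} (huw : u ≠ w)
    (h : ¬ Γ.Adj u w) :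
    HasGrowth (d - 2) (fun t => ((Γ.ridgeRegion s u w t).ncard : ℝ)) 0 := by
  have huw' : u.1 ≠ w.1 := Subtype.coe_ne_coe.2 huw
  have hrank : coneRank (Γ.commonPoints u w) ≤ d - 2 := by
    have := Γ.coneRank_commonPoints_lt u.2 w.2 huw'
    have : coneRank (Γ.commonPoints u w) + 1 ≠ d := fun h' => h ⟨huw', h'⟩
    lia
  obtain ⟨Y, hY⟩ := Γ.exists_ridgeRegion_subset s u w
  have hsum := HasGrowth.sum Y fun y _ => hasGrowth_zero_ncard_translatedSlice hrank y
  rw [Finset.sum_const_zero] at hsum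
  refine (HasGrowth.zero _).squeeze hsum (.of_forall fun t => by positivity)
    (.of_forall fun t => ?_)
  have hfin : (⋃ y ∈ Y, translatedSlice (Γ.commonPoints u w) y t).Finite :=
    Y.finite_toSet.biUnion fun y _ => finite_translatedSlice _ y t
  exact_mod_cast (Set.ncard_le_ncard (hY t) hfin).trans (Finset.set_ncard_biUnion_le Y _)

end GorensteinCone

/-! ### Differences of facet normals -/

section Content

variable {d : ℕ} {x y : Fin d → ℤ}

/-- The greatest common divisor of the coordinates of an integer vector, with the convention that
the zero vector has content one. -/
def content (x : Fin d → ℤ) : ℤ := if x = 0 then 1 else Finset.univ.gcd x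

theorem content_pos (x : Fin d → ℤ) : 0 < content x := by
  rw [content]
  split_ifs with h
  · exact one_pos
  · refine Finset.Int.finsetGcd_nonneg.lt_of_ne' fun h₀ => h (funext fun i => ?_)
    exact Finset.gcd_eq_zero_iff.1 h₀ i (Finset.mem_univ i)

theorem content_neg (x : Fin d → ℤ) : content (-x) = content x := by
  have hgcd : Finset.univ.gcd (-x) = Finset.univ.gcd x :=
    Int.dvd_antisymm Finset.Int.finsetGcd_nonneg Finset.Int.finsetGcd_nonneg
      (Finset.gcd_mono_fun fun i _ => by simp) (Finset.gcd_mono_fun fun i _ => by simp)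
  simp only [content, neg_eq_zero, hgcd]

theorem exists_eq_content_smul (hx : x ≠ 0) :
    ∃ q : Fin d → ℤ, x = content x • q ∧ ∃ y, q ⬝ᵥ y = 1 := by
  obtain ⟨i, -⟩ := Function.ne_iff.1 hx
  obtain ⟨q, hq, hgcd⟩ := Finset.extract_gcd x ⟨i, Finset.mem_univ i⟩
  obtain ⟨y, hy⟩ := Finset.gcd_eq_sum_mul Finset.univ q
  refine ⟨q, funext fun j => ?_, y, ?_⟩
  · rw [content, if_neg hx]
    exact hq j (Finset.mem_univ j)
  · rw [← hgcd, hy, dotProduct]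

theorem exists_odd_of_dotProduct_eq_one (h : x ⬝ᵥ y = 1) : ∃ i, Odd (x i) := by
  by_contra! heven
  have hdvd : 2 ∣ x ⬝ᵥ y := Finset.dvd_sum fun i _ =>
    (Int.not_odd_iff_even.1 (heven i)).two_dvd.mul_right _
  lia

theorem two_mul_sum_sum_emod_two {ι : Type*} [Fintype ι] (x : ι → ℤ) (hx : ∃ i, Odd (x i)) :
    2 * ∑ z : Finset ι, (∑ i ∈ z, x i) % 2 = Fintype.card (Finset ι) := by
  classical
  obtain ⟨i, hi⟩ := hx
  have hcompl (z : Finset ι) (hz : z ∈ (Finset.univ.erase i).powerset) :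
      (∑ j ∈ z, x j) % 2 + (∑ j ∈ insert i z, x j) % 2 = 1 := by
    have hiz : i ∉ z := fun h => (Finset.mem_erase.1 (Finset.mem_powerset.1 hz h)).1 rfl
    rw [Finset.sum_insert hiz]
    have := Int.odd_iff.1 hi
    lia
  have hi : i ∈ (Finset.univ : Finset ι) := Finset.mem_univ i
  rw [← Finset.powerset_univ, ← Finset.insert_erase hi,
    Finset.sum_powerset_insert (Finset.notMem_erase _ _), ← Finset.sum_add_distrib,
    Finset.sum_congr rfl hcompl, ← Finset.card_univ, ← Finset.powerset_univ, Finset.card_powerset,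
    ← Finset.card_erase_add_one hi]
  simp [Finset.card_powerset, pow_succ, mul_comm]

end Content

theorem nonempty_of_coneRank_ne_zero {d : ℕ} {S : Finset (Fin d → ℤ)} (h : coneRank S ≠ 0) :
    S.Nonempty := by
  contrapose! h
  subst h
  have hempty : Set.range (pointConfiguration (∅ : Finset (Fin d → ℤ))).vec = ∅ :=
    Set.range_eq_empty _
  rw [coneRank, LatticeConfiguration.rank, LatticeConfiguration.span, hempty,
    Submodule.span_empty, finrank_bot]

/-! ### Halving lattice points -/

section Halving

variable {d : ℕ}

/-- The lattice point at height zero whose first component is the indicator vector of `z`. -/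
def cubePoint (z : Finset (Fin d)) : Lattice d := (fun i => if i ∈ z then 1 else 0, 0)

/-- The set of odd coordinates of the first component of a lattice point. -/
def oddSupport (p : Lattice d) : Finset (Fin d) := Finset.univ.filter fun i => Odd (p.1 i)

theorem oddSupport_two_zsmul_sub (ε : ℤˣ) (q : Lattice d) (z : Finset (Fin d)) :
    oddSupport ((2 : ℤ) • q - (ε : ℤ) • cubePoint z) = z := by
  ext i
  rcases Int.units_eq_one_or ε with rfl | rfl <;> by_cases hi : i ∈ z <;>
    simp [oddSupport, cubePoint, hi, parity_simps]

theorem exists_eq_two_zsmul_sub (ε : ℤˣ) {p : Lattice d} {t : ℤ} (hp : p.2 = 2 * t) :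
    ∃ q : Lattice d, q.2 = t ∧ p = (2 : ℤ) • q - (ε : ℤ) • cubePoint (oddSupport p) := by
  have hcoord (i : Fin d) : ∃ y, p.1 i = 2 * y - ε * (cubePoint (oddSupport p)).1 i := by
    rcases Int.even_or_odd' (p.1 i) with ⟨k, hk | hk⟩
    · exact ⟨k, by simp [oddSupport, cubePoint, hk, ← Int.not_even_iff_odd]⟩
    · rcases Int.units_eq_one_or ε with rfl | rfl
      · exact ⟨k + 1, by simp [oddSupport, cubePoint, hk]; ring⟩
      · exact ⟨k, by simp [oddSupport, cubePoint, hk]⟩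
  choose y hy using hcoord
  refine ⟨(y, t), rfl, Prod.ext (funext hy) ?_⟩
  simpa [cubePoint] using hp

end Halving

namespace GorensteinCone

variable {d r : ℕ} (Γ : GorensteinCone d r)

theorem dist_cubePoint (u : Fin d → ℤ) (z : Finset (Fin d)) :
    Γ.dist u (cubePoint z) = ∑ i ∈ z, u i := by
  simp [dist_apply, cubePoint, dotProduct]

theorem dist_sub_dist (u w : Fin d → ℤ) (p : Lattice d) :
    Γ.dist u p - Γ.dist w p = (u - w) ⬝ᵥ p.1 - p.2 * (Γ.offset u - Γ.offset w) := by
  rw [dist_apply, dist_apply, sub_dotProduct]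
  ring

theorem Adj.content_dvd (hd : 2 ≤ d) {u w : Fin d → ℤ} (h : Γ.Adj u w) (p : Lattice d) :
    content (u - w) ∣ Γ.dist u p - Γ.dist w p := by
  obtain ⟨v, hv⟩ : (Γ.commonPoints u w).Nonempty := nonempty_of_coneRank_ne_zero <| by
    have := h.2
    lia
  obtain ⟨q, hq, -⟩ := exists_eq_content_smul (sub_ne_zero.2 h.1)
  have hdot (y : Fin d → ℤ) : content (u - w) ∣ (u - w) ⬝ᵥ y := by
    conv_rhs => rw [hq, smul_dotProduct]
    exact dvd_mul_right _ _
  have hoffset : Γ.offset u - Γ.offset w = (u - w) ⬝ᵥ v := by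
    have := Γ.dist_sub_dist u w (homogenize v)
    rw [(Γ.mem_commonPoints.1 hv).2.1, (Γ.mem_commonPoints.1 hv).2.2] at this
    simp only [homogenize] at this
    lia
  rw [dist_sub_dist, hoffset]
  exact dvd_sub (hdot _) ((hdot v).mul_left _)

theorem exists_dist_eq {u w : Γ.normals} (huw : u ≠ w) {a b : ℤ}
    (hab : content (u.1 - w.1) ∣ a - b) : ∃ p, Γ.dist u p = a ∧ Γ.dist w p = b := by
  obtain ⟨q, hq, y, hy⟩ := exists_eq_content_smul (sub_ne_zero.2 (Subtype.coe_ne_coe.2 huw))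
  obtain ⟨e, he⟩ := hab
  let p : Lattice d := (e • y, 0)
  have hp : Γ.dist u p - Γ.dist w p = a - b := by
    rw [dist_sub_dist, hq, he]
    simp only [p, smul_dotProduct, dotProduct_smul, hy, smul_eq_mul, zero_mul]
    ring
  refine ⟨p + (a - Γ.dist u p) • Γ.gorensteinPoint, ?_, ?_⟩
  · rw [map_add, dist_zsmul_gorensteinPoint]
    ring
  · rw [map_add, dist_zsmul_gorensteinPoint]
    lia

theorem hasGrowth_mixed_difference (hd : 2 ≤ d) (s : Γ.normals → ℤ) {u w : Γ.normals}
    (huw : u ≠ w) : HasGrowth (d - 2) (fun t => Γ.count s t - Γ.count (s + Pi.single u 1) t -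
        Γ.count (s + Pi.single w 1) t + Γ.count (s + Pi.single u 1 + Pi.single w 1) t)
      (if content (u.1 - w.1) ∣ s u - s w then Γ.ridgeVolume u w else 0) := by
  simp only [Γ.count_mixed_difference s huw]
  by_cases h : Γ.Adj u w
  · split_ifs with hdvd
    · obtain ⟨p, hup, hwp⟩ := Γ.exists_dist_eq huw hdvd
      exact Γ.hasGrowth_ridgeRegion_of_adj hd s h hup hwp
    · refine (HasGrowth.zero _).congr (fun t => ?_) rfl
      have hempty : Γ.ridgeRegion s u w t = ∅ := Set.eq_empty_of_forall_notMem
        fun p ⟨_, hup, hwp⟩ => hdvd (hup ▸ hwp ▸ h.content_dvd Γ hd p)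
      rw [hempty, Set.ncard_empty, Nat.cast_zero]
  · rw [ridgeVolume, if_neg h, ite_self]
    exact Γ.hasGrowth_ridgeRegion_of_not_adj s huw h

theorem hasQuadraticGrowth (hd : 2 ≤ d) : ∃ c, HasQuadraticGrowth (d - 2) r Γ.count
    Γ.ridgeVolume (fun u w => content (u.1 - w.1)) c := by
  choose c hc using Γ.exists_hasGrowth_facet_difference hd
  exact ⟨c, {
    pos := fun u w => content_pos _
    period_comm := fun u w => by rw [← neg_sub, content_neg]
    coeff_comm := Γ.ridgeVolume_comm
    coeff_self := fun u => if_neg fun h => h.1 rfl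
    add_one := Γ.count_add_one
    mixed_difference := fun s u w huw => Γ.hasGrowth_mixed_difference hd s huw
    shift_difference := hc }⟩

theorem exists_odd_normal (hd : 1 ≤ d) {u : Fin d → ℤ} (hu : u ∈ Γ.normals) :
    ∃ i, Odd (u i) := by
  obtain ⟨v, hv⟩ : (Γ.commonPoints u u).Nonempty := nonempty_of_coneRank_ne_zero <| by
    rw [Γ.coneRank_commonPoints_self hu]
    lia
  refine exists_odd_of_dotProduct_eq_one (y := Γ.center - (r : ℤ) • v) ?_
  have hv₀ := (Γ.mem_commonPoints.1 hv).2.1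
  have hcenter := Γ.dotProduct_center u hu
  rw [dist_apply] at hv₀
  simp only [homogenize, one_mul] at hv₀
  rw [dotProduct_sub, dotProduct_smul, smul_eq_mul]
  linear_combination hcenter - r * hv₀

theorem region_oddSupport (ε : ℤˣ) (z : Finset (Fin d)) (t : ℤ) :
    {p ∈ Γ.region 0 (2 * t) | oddSupport p = z} =
      (fun q => (2 : ℤ) • q - (ε : ℤ) • cubePoint z) ''
        Γ.region (fun u => (ε * ∑ i ∈ z, u.1 i + 1) / 2) t := by
  have hregion (q : Lattice d) : (2 : ℤ) • q - (ε : ℤ) • cubePoint z ∈ Γ.region 0 (2 * t) ↔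
      q ∈ Γ.region (fun u => (ε * ∑ i ∈ z, u.1 i + 1) / 2) t := by
    simp only [region, Set.mem_ofPred_eq, map_sub, map_zsmul, dist_cubePoint, smul_eq_mul,
      Pi.zero_apply]
    refine and_congr (by simp [cubePoint]) (forall_congr' fun u => ?_)
    lia
  ext p
  constructor
  · rintro ⟨hp, rfl⟩
    obtain ⟨q, -, hq⟩ := exists_eq_two_zsmul_sub ε hp.1
    rw [hq] at hp
    exact ⟨q, (hregion q).1 hp, hq.symm⟩
  · rintro ⟨q, hq, rfl⟩
    exact ⟨(hregion q).2 hq, oddSupport_two_zsmul_sub ε q z⟩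

theorem count_two_mul (ε : ℤˣ) (t : ℤ) : Γ.count 0 (2 * t) =
    ∑ z : Finset (Fin d), Γ.count (fun u => (ε * ∑ i ∈ z, u.1 i + 1) / 2) t := by
  have hcard := Finset.card_eq_sum_card_fiberwise (f := oddSupport) (t := Finset.univ)
    (s := (Γ.finite_region 0 (2 * t)).toFinset) fun _ _ => Finset.mem_univ _
  have hinj (z : Finset (Fin d)) :
      Function.Injective fun q : Lattice d => (2 : ℤ) • q - (ε : ℤ) • cubePoint z :=
    sub_left_injective.comp (smul_right_injective _ two_ne_zero)
  rw [count, Set.ncard_eq_toFinset_card _ (Γ.finite_region 0 (2 * t)), hcard, Nat.cast_sum]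
  refine Finset.sum_congr rfl fun z _ => ?_
  rw [count, ← Set.ncard_image_of_injective _ (hinj z), ← Γ.region_oddSupport,
    ← Set.ncard_coe_finset]
  simp

theorem exists_isHalving (hd : 1 ≤ d) : ∃ q, IsHalving Γ.count Γ.ridgeVolume
    (fun u w => content (u.1 - w.1)) (fun (z : Finset (Fin d)) u => ∑ i ∈ z, u.1 i) q := by
  have hquot (u w : Γ.normals) : ∃ q : Fin d → ℤ, u ≠ w →
      u.1 - w.1 = content (u.1 - w.1) • q ∧ ∃ i, Odd (q i) := by
    by_cases huw : u = w
    · exact ⟨0, fun h => (h huw).elim⟩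
    · obtain ⟨q, hq, y, hy⟩ := exists_eq_content_smul (sub_ne_zero.2 (Subtype.coe_ne_coe.2 huw))
      exact ⟨q, fun _ => ⟨hq, exists_odd_of_dotProduct_eq_one hy⟩⟩
  choose q hq using hquot
  have hne {u w : Γ.normals} (hA : Γ.ridgeVolume u w ≠ 0) : u ≠ w := by
    rintro rfl
    exact hA (if_neg fun h => h.1 rfl)
  have hperiod (ε : ℤˣ) (z : Finset (Fin d)) (t : ℤ) :
      Γ.count (fun u => ε * ∑ i ∈ z, u.1 i) t = Γ.count 0 t := by
    have hsnd : ((ε : ℤ) • cubePoint z).2 = 0 := by simp [cubePoint]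
    simpa only [map_zsmul, dist_cubePoint, smul_eq_mul, Pi.zero_apply, zero_add, hsnd, add_zero]
      using Γ.count_translate 0 t ((ε : ℤ) • cubePoint z)
  exact ⟨fun z u w => ∑ i ∈ z, q u w i, {
    period := by simpa using hperiod 1
    period_neg := by simpa [Pi.neg_def] using hperiod (-1)
    double := by simpa using Γ.count_two_mul 1
    double_neg := by simpa using Γ.count_two_mul (-1)
    sub_eq_mul := fun z u w hA => by
      rw [← Finset.sum_sub_distrib, Finset.mul_sum]
      exact Finset.sum_congr rfl fun i _ => congrFun (hq u w (hne hA)).1 i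
    two_mul_sum_emod_two := fun u =>
      two_mul_sum_sum_emod_two u.1 (Γ.exists_odd_normal hd u.2)
    two_mul_sum_quotient_emod_two := fun u w hA =>
      two_mul_sum_sum_emod_two (q u w) (hq u w (hne hA)).2 }⟩

end GorensteinCone

/-! ### The number twelve -/

theorem coneSlice_zero {d : ℕ} (S : Finset (Fin d → ℤ)) : coneSlice S 0 = {0} := by
  refine Set.eq_singleton_iff_unique_mem.2 ⟨⟨rfl, ?_⟩, fun p ⟨hdeg, hp⟩ => ?_⟩
  · rw [map_zero]
    exact zero_mem _
  · obtain ⟨l, hl, h⟩ := mem_hull_range_iff.1 hp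
    have hsum : ∑ v, l v = 0 := by
      rw [linearCombination_vec] at h
      exact (congrArg Prod.snd h).trans (by rw [toReal_apply, hdeg, Int.cast_zero])
    rw [Fintype.sum_eq_zero_iff_of_nonneg hl] at hsum
    rw [hsum, map_zero] at h
    exact isometry_toReal.injective (h.symm.trans (map_zero toReal).symm)

namespace GorensteinCone

section Interior

variable {d r : ℕ} (Γ : GorensteinCone d r)

theorem spanOver_points : spanOver Γ.points = ⊤ :=
  Submodule.eq_top_of_finrank_eq (Γ.coneRank_points.trans (by simp))

theorem form_linearCombination_pos {μ : Γ.points → ℝ} (hμ : ∀ v, 0 < μ v) {u : Fin d → ℤ}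
    (hu : u ∈ Γ.normals) :
    0 < Γ.form u (Fintype.linearCombination ℝ (pointConfiguration Γ.points).vec μ) := by
  have hterm (v : Γ.points) : 0 ≤ μ v * Γ.form u (toReal (homogenize v.1)) :=
    mul_nonneg (hμ v).le (Γ.form_nonneg hu v.2)
  have heq : Γ.form u (Fintype.linearCombination ℝ (pointConfiguration Γ.points).vec μ) =
      ∑ v : Γ.points, μ v * Γ.form u (toReal (homogenize v.1)) := by
    rw [Fintype.linearCombination_apply, map_sum]
    exact Finset.sum_congr rfl fun v _ => map_smul _ _ _
  rw [heq]
  refine (Finset.sum_nonneg fun v _ => hterm v).lt_of_ne' fun h₀ => ?_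
  have hzero (v : Γ.points) : Γ.form u (toReal (homogenize v.1)) = 0 :=
    (mul_eq_zero.1 ((Finset.sum_eq_zero_iff_of_nonneg fun v _ => hterm v).1 h₀ v
      (Finset.mem_univ v))).resolve_left (hμ v).ne'
  have hmem : Γ.form u ∈ (spanOver Γ.points).dualAnnihilator :=
    mem_dualAnnihilator_spanOver.2 fun v hv => hzero ⟨v, hv⟩
  rw [spanOver_points, Submodule.dualAnnihilator_top, Submodule.mem_bot] at hmem
  simpa [hmem] using Γ.form_gorensteinPoint hu

theorem perturbedPoints_eq_region {μ : Γ.points → ℝ} (hμ : ∀ v, 0 < μ v) (t : ℤ) :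
    (pointConfiguration Γ.points).perturbedPoints
      (-Fintype.linearCombination ℝ (pointConfiguration Γ.points).vec μ) t = Γ.region 1 t := by
  set y := Fintype.linearCombination ℝ (pointConfiguration Γ.points).vec μ
  have hform (u : Fin d → ℤ) (p : Lattice d) (ε : ℝ) :
      Γ.form u (toReal p + ε • -y) = Γ.dist u p - ε * Γ.form u y := by
    rw [map_add, map_smul, map_neg, form_toReal, smul_eq_mul, mul_neg, sub_eq_add_neg]
  ext p
  refine and_congr Iff.rfl ⟨fun ⟨_, hp⟩ u => ?_, fun hp => ⟨?_, ?_⟩⟩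
  · obtain ⟨ε, hmem, hε⟩ := (hp.and self_mem_nhdsWithin).exists
    have hnonneg := Γ.mem_coneOver_points_iff.1 hmem u.1 u.2
    have hpos := mul_pos hε (Γ.form_linearCombination_pos hμ u.2)
    have hlt : (0 : ℝ) < Γ.dist u.1 p := by
      linarith [(hform u.1 p ε).symm.trans_ge hnonneg]
    exact_mod_cast hlt
  · exact Γ.spanOver_points.ge Submodule.mem_top
  · have hev (u : Γ.normals) :
        ∀ᶠ ε in nhdsWithin (0 : ℝ) (Set.Ioi 0), 0 ≤ Γ.form u.1 (toReal p + ε • -y) := by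
      have hcont : Continuous fun ε : ℝ => (Γ.dist u.1 p : ℝ) - ε * Γ.form u.1 y := by fun_prop
      have hlt : (0 : ℝ) < Γ.dist u.1 p - 0 * Γ.form u.1 y := by
        rw [zero_mul, sub_zero]
        exact_mod_cast hp u
      simp only [hform]
      exact nhdsWithin_le_nhds
        ((hcont.continuousAt.eventually (lt_mem_nhds hlt)).mono fun _ => le_of_lt)
    filter_upwards [eventually_all.2 hev] with ε hε
    exact Γ.mem_coneOver_points_iff.2 fun u hu => hε ⟨u, hu⟩

end Interior

variable {d : ℕ} (Γ : GorensteinCone d (d - 1))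

theorem hilbertCoeff_hStar_reflect (hd : 1 ≤ d) (t : ℤ) :
    hilbertCoeff (d + 1) (fun j => hStar Γ.points (d + 1 - j)) t =
      hilbertCoeff (d + 1) (hStar Γ.points) (t - (d - 1)) := by
  obtain ⟨μ, hμ, H⟩ := (exists_ncard_coneSlice Γ.points).choose_spec
  have hcount := Γ.count_add_one 0 t
  rw [count, count, region_zero, Nat.cast_inj, zero_add, ← Γ.perturbedPoints_eq_region hμ,
    (H t).2.2, ncard_coneSlice, Nat.cast_sub hd, Nat.cast_one] at hcount
  rw [← Γ.coneRank_points]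
  exact hcount

theorem count_zero_eq_hilbertCoeff (t : ℤ) :
    Γ.count 0 t = hilbertCoeff (d + 1) (hStar Γ.points) t := by
  rw [count, region_zero, ncard_coneSlice, Γ.coneRank_points]

theorem twelve_eq (hd : 2 ≤ d) :
    12 = (∑ u : Γ.normals, ∑ w : Γ.normals, Γ.ridgeVolume u w * content (u.1 - w.1)) / 2 +
      ((d - 1 : ℝ) * (1 - (d - 1)) + 2) / 2 * latticeVolume Γ.points := by
  obtain ⟨c, H⟩ := Γ.hasQuadraticGrowth hd
  obtain ⟨q, hq⟩ := Γ.exists_isHalving (by lia)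
  have hreflect := Γ.hilbertCoeff_hStar_reflect (by lia)
  have h₀ : hilbertCoeff (d + 1) (hStar Γ.points) 0 = 1 := by
    rw [← Γ.coneRank_points, ← ncard_coneSlice, coneSlice_zero, Set.ncard_singleton]
  obtain ⟨hone, htwo⟩ := eq_one_of_hilbertCoeff_reflect (by lia) h₀ hreflect
  have hshape (j : ℕ) (h₃ : 3 ≤ j) (hj : j ≤ d + 1) : hStar Γ.points j = 0 :=
    eq_zero_of_hilbertCoeff_reflect hreflect h₃ hj
  have hr : ((d - 1 : ℕ) : ℤ) = d - 1 := by lia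
  have hsecond := H.second_difference
  have hhalving := H.halving hq
  simp only [hr, Fintype.card_finset, Fintype.card_fin, Nat.cast_pow, Nat.cast_ofNat]
    at hsecond hhalving
  have hvolume : latticeVolume Γ.points = hStar Γ.points 1 + 2 := by
    rw [latticeVolume, Γ.coneRank_points,
      sum_range_eq_of_shape (by lia) fun j h₃ hj => Nat.cast_eq_zero.2 (hshape j h₃ hj), hone, htwo]
    push_cast
    ring
  rw [hvolume]
  exact twelve_eq_of_hilbertCoeff hd hone htwo hshape Γ.count_zero_eq_hilbertCoeff hsecond hhalving

end GorensteinCone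

/-! ### Dimension and normalized volume of lattice polytopes -/

section NormalizedVolume

variable {d : ℕ} {S : Finset (Fin d → ℤ)}

theorem mem_latticeHull_iff {x : Fin d → ℝ} : x ∈ latticeHull S ↔ (x, 1) ∈ coneOver S := by
  rw [mem_coneOver_iff one_pos, one_smul]

theorem coeLat_mem_latticeHull {v : Fin d → ℤ} (hv : v ∈ S) : coeLat v ∈ latticeHull S :=
  subset_convexHull ℝ _ ⟨v, hv, rfl⟩


theorem spanOver_eq_sup {v₀ : Fin d → ℤ} (h₀ : v₀ ∈ S) :
    spanOver S = (vectorSpan ℝ (coeLat '' (S : Set (Fin d → ℤ)))).map (LinearMap.inl ℝ _ ℝ) ⊔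
      Submodule.span ℝ {toReal (homogenize v₀)} := by
  have hinl (v : Fin d → ℤ) : LinearMap.inl ℝ _ ℝ (coeLat v -ᵥ coeLat v₀) =
      toReal (homogenize v) - toReal (homogenize v₀) := by
    simp [toReal_homogenize]
  have hmem {v : Fin d → ℤ} (hv : v ∈ S) : toReal (homogenize v) ∈ spanOver S :=
    Submodule.subset_span ⟨⟨v, hv⟩, rfl⟩
  refine le_antisymm (Submodule.span_le.2 ?_) (sup_le ?_ ?_)
  · rintro _ ⟨⟨v, hv⟩, rfl⟩
    refine Submodule.mem_sup.2 ⟨_, Submodule.mem_map_of_mem (vsub_mem_vectorSpan ℝ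
      ⟨v, hv, rfl⟩ ⟨v₀, h₀, rfl⟩), _, Submodule.mem_span_singleton_self _, ?_⟩
    rw [hinl, sub_add_cancel]
    rfl
  · rw [vectorSpan_eq_span_vsub_set_right ℝ (Set.mem_image_of_mem coeLat h₀), Submodule.map_span,
      Submodule.span_le]
    rintro _ ⟨_, ⟨_, ⟨v, hv, rfl⟩, rfl⟩, rfl⟩
    rw [SetLike.mem_coe, hinl]
    exact sub_mem (hmem hv) (hmem h₀)
  · exact (Submodule.span_singleton_le_iff_mem _ _).2 (hmem h₀)

theorem dimSet_latticeHull_add_one (hS : S.Nonempty) :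
    dimSet (latticeHull S) + 1 = coneRank S := by
  obtain ⟨v₀, h₀⟩ := hS
  have hv₀ : toReal (homogenize v₀) ≠ 0 := by simp [toReal_homogenize]
  have hinl : Disjoint ((vectorSpan ℝ (coeLat '' (S : Set (Fin d → ℤ)))).map (LinearMap.inl ℝ _ ℝ))
      (Submodule.span ℝ {toReal (homogenize v₀)}) := by
    refine (Submodule.disjoint_span_singleton' hv₀).2 ?_
    rintro ⟨y, -, hy⟩
    simpa [toReal_homogenize] using congrArg Prod.snd hy
  have hsup := Submodule.finrank_sup_add_finrank_inf_eq
    ((vectorSpan ℝ (coeLat '' (S : Set (Fin d → ℤ)))).map (LinearMap.inl ℝ _ ℝ))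
    (Submodule.span ℝ {toReal (homogenize v₀)})
  rw [← spanOver_eq_sup h₀, hinl.eq_bot, finrank_bot, add_zero, finrank_span_singleton hv₀,
    ← (Submodule.equivMapOfInjective _ LinearMap.inl_injective _).finrank_eq] at hsup
  rw [dimSet, latticeHull, affineSpan_convexHull, direction_affineSpan]
  exact hsup.symm

theorem coneSlice_eq_image {m : ℕ} (hm : 0 < m) :
    coneSlice S m = (fun n => (n, (m : ℤ))) '' latticePoints ((m : ℝ) • latticeHull S) := by
  have hiff (n : Fin d → ℤ) :
      toReal (n, (m : ℤ)) ∈ coneOver S ↔ n ∈ latticePoints ((m : ℝ) • latticeHull S) := by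
    rw [toReal_apply, Int.cast_natCast, mem_coneOver_iff (Nat.cast_pos.2 hm)]
    rfl
  ext p
  constructor
  · rintro ⟨hdeg, hp⟩
    have heq : (p.1, (m : ℤ)) = p := Prod.ext rfl hdeg.symm
    exact ⟨p.1, (hiff _).1 (heq ▸ hp), heq⟩
  · rintro ⟨n, hn, rfl⟩
    exact ⟨rfl, (hiff n).2 hn⟩

theorem normVol_latticeHull {k : ℕ} (hS : coneRank S = k + 1) :
    normVol k (latticeHull S) = latticeVolume S := by
  have hgrowth : HasGrowth k (fun t => ((coneSlice S t).ncard : ℝ)) (latticeVolume S) := by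
    simpa [translatedSlice, coneSlice] using hasGrowth_ncard_translatedSlice hS 0
  refine Tendsto.limUnder_eq ((hgrowth.comp tendsto_natCast_atTop_atTop).congr' ?_)
  filter_upwards [eventually_gt_atTop 0] with m hm
  rw [Function.comp_apply, coneSlice_eq_image hm,
    Set.ncard_image_of_injective _ (Prod.mk_left_injective _), mul_comm, Int.cast_natCast]

/-! ### Lattice segments -/

theorem coeLat_sub (u w : Fin d → ℤ) : coeLat (u - w) = coeLat u - coeLat w := by
  ext
  simp [coeLat]

theorem coeLat_smul (k : ℤ) (u : Fin d → ℤ) : coeLat (k • u) = (k : ℝ) • coeLat u := by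
  ext
  simp [coeLat]

theorem latticePoints_smul_segment {u w q y : Fin d → ℤ} {k : ℤ} (hk : 0 < k)
    (hq : u - w = k • q) (hy : q ⬝ᵥ y = 1) {m : ℕ} (hm : 0 < m) :
    latticePoints ((m : ℝ) • segment ℝ (coeLat u) (coeLat w)) =
      (fun j : ℤ => (m : ℤ) • w + j • q) '' Set.Icc 0 (m * k) := by
  have hmk : (0 : ℝ) < m * k := by positivity
  have hsub : coeLat u - coeLat w = (k : ℝ) • coeLat q := by
    rw [← coeLat_sub, hq, coeLat_smul]
  have hmem (n : Fin d → ℤ) : n ∈ latticePoints ((m : ℝ) • segment ℝ (coeLat u) (coeLat w)) ↔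
      ∃ θ ∈ Set.Icc (0 : ℝ) 1, (θ * (m * k)) • coeLat q = coeLat (n - (m : ℤ) • w) := by
    rw [segment_symm, segment_eq_image', hsub, ← Set.image_smul, Set.image_image]
    refine exists_congr fun θ => and_congr_right fun _ => ?_
    beta_reduce
    rw [smul_add, smul_smul, smul_smul, mul_assoc, mul_left_comm _ θ, coeLat_sub, coeLat_smul,
      Int.cast_natCast, eq_sub_iff_add_eq']
  ext n
  rw [hmem]
  constructor
  · rintro ⟨θ, hθ, hn⟩
    set j : ℤ := (n - (m : ℤ) • w) ⬝ᵥ y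
    have hj : (j : ℝ) = θ * (m * k) := by
      rw [← coeLat_dotProduct, ← hn, smul_dotProduct, coeLat_dotProduct, hy, Int.cast_one,
        smul_eq_mul, mul_one]
    have hn' : j • q = n - (m : ℤ) • w := coeLat_injective (by rw [coeLat_smul, hj, hn])
    refine ⟨j, ⟨?_, ?_⟩, add_eq_of_eq_sub' hn'⟩
    · exact_mod_cast hj ▸ mul_nonneg hθ.1 hmk.le
    · exact_mod_cast hj ▸ mul_le_of_le_one_left hmk.le hθ.2
  · rintro ⟨j, hj, rfl⟩
    refine ⟨j / (m * k), ⟨?_, ?_⟩, ?_⟩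
    · exact div_nonneg (by exact_mod_cast hj.1) hmk.le
    · exact div_le_one_of_le₀ (by exact_mod_cast hj.2) hmk.le
    · rw [div_mul_cancel₀ _ hmk.ne', add_sub_cancel_left, coeLat_smul]

theorem normVol_segment {u w : Fin d → ℤ} (h : u ≠ w) :
    normVol 1 (segment ℝ (coeLat u) (coeLat w)) = content (u - w) := by
  obtain ⟨q, hq, y, hy⟩ := exists_eq_content_smul (sub_ne_zero.2 h)
  have hk := content_pos (u - w)
  set k := content (u - w)
  have hinj (x : Fin d → ℤ) : Function.Injective fun j : ℤ => x + j • q := fun i j hij => by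
    simpa only [smul_dotProduct, hy, smul_eq_mul, mul_one] using
      congrArg (· ⬝ᵥ y) (add_left_cancel hij)
  have hlimit : Tendsto (fun m : ℕ => (k : ℝ) + 1 / (m : ℝ)) atTop (nhds k) := by
    simpa using tendsto_const_nhds.add (tendsto_one_div_atTop_nhds_zero_nat (𝕜 := ℝ))
  refine Tendsto.limUnder_eq (hlimit.congr' ?_)
  filter_upwards [eventually_gt_atTop 0] with m hm
  rw [latticePoints_smul_segment hk hq hy hm, Set.ncard_image_of_injective _ (hinj _)]
  have hcard : ((Set.Icc 0 (m * k)).ncard : ℝ) = m * k + 1 := by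
    have hmk : 0 ≤ m * k + 1 := by positivity
    rw [← Finset.coe_Icc, Set.ncard_coe_finset, Int.card_Icc, sub_zero]
    exact_mod_cast congrArg (Int.cast : ℤ → ℝ) (Int.toNat_of_nonneg hmk)
  rw [hcard, Nat.factorial_one, Nat.cast_one, one_mul, pow_one]
  field_simp

end NormalizedVolume

/-! ### Faces of lattice polytopes -/

section Faces

variable {d : ℕ} {S : Finset (Fin d → ℤ)} {f : Module.Dual ℝ (RealSpace d)}

theorem apply_nonneg_of_mem_latticeHull (hf : ∀ v ∈ S, 0 ≤ f (toReal (homogenize v)))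
    {x : Fin d → ℝ} (hx : x ∈ latticeHull S) : 0 ≤ f (x, 1) :=
  apply_nonneg_of_mem_coneOver hf (mem_latticeHull_iff.1 hx)

theorem apply_eq_zero_of_mem_latticeHull (hf : ∀ v ∈ S, f (toReal (homogenize v)) = 0)
    {x : Fin d → ℝ} (hx : x ∈ latticeHull S) : f (x, 1) = 0 := by
  refine le_antisymm ?_ (apply_nonneg_of_mem_latticeHull (fun v hv => (hf v hv).ge) hx)
  exact neg_nonneg.1 (apply_nonneg_of_mem_latticeHull (f := -f) (fun v hv => by simp [hf v hv]) hx)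

theorem latticeHull_filter (hf : ∀ v ∈ S, 0 ≤ f (toReal (homogenize v))) :
    latticeHull {v ∈ S | f (toReal (homogenize v)) = 0} = {x ∈ latticeHull S | f (x, 1) = 0} := by
  ext x
  refine ⟨fun hx => ⟨convexHull_mono (Set.image_mono (Finset.filter_subset _ _)) hx,
    apply_eq_zero_of_mem_latticeHull (fun v hv => (Finset.mem_filter.1 hv).2) hx⟩, fun hx => ?_⟩
  exact mem_latticeHull_iff.2 <| mem_coneOver_of_apply_eq_zero hf
    (fun v hv h => Finset.mem_filter.2 ⟨hv, h⟩) (mem_latticeHull_iff.1 hx.1) hx.2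

theorem isExposed_latticeHull_filter (hf : ∀ v ∈ S, 0 ≤ f (toReal (homogenize v))) :
    IsExposed ℝ (latticeHull S) (latticeHull {v ∈ S | f (toReal (homogenize v)) = 0}) := by
  rintro ⟨x₀, hx₀⟩
  let l : StrongDual ℝ (Fin d → ℝ) := -(f ∘ₗ LinearMap.inl ℝ (Fin d → ℝ) ℝ).toContinuousLinearMap
  have hl (x y : Fin d → ℝ) : l y ≤ l x ↔ f (x, 1) ≤ f (y, 1) := by
    have hsplit (z : Fin d → ℝ) : f (z, 1) = f (0, 1) - l z := by
      simp [l, ← map_add]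
    rw [hsplit x, hsplit y, sub_le_sub_iff_left]
  rw [latticeHull_filter hf] at hx₀ ⊢
  refine ⟨l, Set.ext fun x => and_congr_right fun hx => ⟨fun h y hy => ?_, fun h => ?_⟩⟩
  · exact (hl x y).2 (h.trans_le (apply_nonneg_of_mem_latticeHull hf hy))
  · exact ((hl x x₀).1 (h x₀ hx₀.1)).trans_eq hx₀.2 |>.antisymm
      (apply_nonneg_of_mem_latticeHull hf hx)

theorem exists_dual_of_isExposed {θ : Set (Fin d → ℝ)} (hθ : IsExposed ℝ (latticeHull S) θ)
    (hne : θ.Nonempty) : ∃ f : Module.Dual ℝ (RealSpace d),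
      (∀ v ∈ S, 0 ≤ f (toReal (homogenize v))) ∧
        θ = latticeHull {v ∈ S | f (toReal (homogenize v)) = 0} := by
  obtain ⟨l, rfl⟩ := hθ hne
  obtain ⟨x₀, hx₀, hmax⟩ := hne
  let f : Module.Dual ℝ (RealSpace d) :=
    l x₀ • LinearMap.snd ℝ (Fin d → ℝ) ℝ - l.toLinearMap ∘ₗ LinearMap.fst ℝ (Fin d → ℝ) ℝ
  have hf (x : Fin d → ℝ) : f (x, 1) = l x₀ - l x := by simp [f]
  have hnonneg : ∀ v ∈ S, 0 ≤ f (toReal (homogenize v)) := fun v hv => by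
    rw [toReal_homogenize, hf]
    exact sub_nonneg.2 (hmax _ (coeLat_mem_latticeHull hv))
  refine ⟨f, hnonneg, ?_⟩
  rw [latticeHull_filter hnonneg]
  refine Set.ext fun x => and_congr_right fun hx => ?_
  rw [hf, sub_eq_zero]
  exact ⟨fun h => le_antisymm (h _ hx₀) (hmax _ hx), fun h y hy => h ▸ hmax y hy⟩

namespace GorensteinCone

variable {r : ℕ} (Γ : GorensteinCone d r) {u w : Fin d → ℤ}

theorem exists_forall_apply_eq_zero_iff (hf : ∀ v ∈ Γ.points, 0 ≤ f (toReal (homogenize v))) :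
    ∃ A : Finset Γ.normals, ∀ v ∈ Γ.points,
      f (toReal (homogenize v)) = 0 ↔ ∀ u ∈ A, Γ.dist u (homogenize v) = 0 := by
  have hmem := Γ.mem_hull_of_nonneg f hf
  rw [Set.image_eq_range] at hmem
  obtain ⟨l, hl, rfl⟩ := mem_hull_range_iff.1 hmem
  refine ⟨Finset.univ.filter fun u => l u ≠ 0, fun v hv => ?_⟩
  have hsum : Fintype.linearCombination ℝ (fun u : Γ.normals => Γ.form u) l
      (toReal (homogenize v)) = ∑ u, l u * Γ.dist u (homogenize v) := by
    simp [Fintype.linearCombination_apply, form_toReal]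
  refine (Eq.congr_left hsum).trans ((Finset.sum_eq_zero_iff_of_nonneg fun u _ => mul_nonneg (hl u)
    (Int.cast_nonneg (Γ.dist_nonneg u.2 hv))).trans ?_)
  simp [or_iff_not_imp_left]

theorem commonPoints_eq_filter (hu : u ∈ Γ.normals) (hw : w ∈ Γ.normals) :
    Γ.commonPoints u w = {v ∈ Γ.points | (Γ.form u + Γ.form w) (toReal (homogenize v)) = 0} :=
  Finset.filter_congr fun v hv => by
    rw [LinearMap.add_apply, form_toReal, form_toReal, add_eq_zero_iff_of_nonneg
      (Int.cast_nonneg (Γ.dist_nonneg hu hv)) (Int.cast_nonneg (Γ.dist_nonneg hw hv)),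
      Int.cast_eq_zero, Int.cast_eq_zero]

theorem isFaceOfDim_commonPoints (hd : 2 ≤ d) (hu : u ∈ Γ.normals) (hw : w ∈ Γ.normals)
    (h : Γ.Adj u w) :
    IsFaceOfDim (latticeHull Γ.points) (d - 2) (latticeHull (Γ.commonPoints u w)) := by
  have hne : (Γ.commonPoints u w).Nonempty := nonempty_of_coneRank_ne_zero (by have := h.2; lia)
  have hdim := dimSet_latticeHull_add_one hne
  refine ⟨?_, ((Finset.coe_nonempty.2 hne).image coeLat).convexHull, by have := h.2; lia⟩
  rw [Γ.commonPoints_eq_filter hu hw]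
  exact isExposed_latticeHull_filter fun v hv =>
    add_nonneg (Γ.form_nonneg hu hv) (Γ.form_nonneg hw hv)

theorem eq_or_eq_of_adj {x : Fin d → ℤ} (hu : u ∈ Γ.normals) (hw : w ∈ Γ.normals)
    (hx : x ∈ Γ.normals) (h : Γ.Adj u w)
    (hzero : ∀ v ∈ Γ.commonPoints u w, Γ.dist x (homogenize v) = 0) : x = u ∨ x = w := by
  by_contra! hne
  exact (Γ.coneRank_add_one_lt_of_three_facets hu hw hx h.1 hne.1.symm hne.2.symm
    (fun v hv => (Γ.mem_commonPoints.1 hv).2.1) (fun v hv => (Γ.mem_commonPoints.1 hv).2.2)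
    hzero).ne h.2

theorem exists_adj_of_coneRank_add_one {A : Finset Γ.normals}
    (hA : coneRank {v ∈ Γ.points | ∀ u ∈ A, Γ.dist u (homogenize v) = 0} + 1 = d) :
    ∃ u w : Γ.normals, Γ.Adj u w ∧
      {v ∈ Γ.points | ∀ u ∈ A, Γ.dist u (homogenize v) = 0} = Γ.commonPoints u w := by
  have hzero : ∀ u ∈ A, ∀ v ∈ Γ.points.filter (fun v => ∀ u ∈ A, Γ.dist u (homogenize v) = 0),
      Γ.dist u (homogenize v) = 0 := fun u hu v hv => (Finset.mem_filter.1 hv).2 u hu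
  have hcard : A.card ≤ 2 := by
    by_contra! hA₃
    obtain ⟨u, hu, w, hw, x, hx, huw, hux, hwx⟩ := Finset.two_lt_card.1 hA₃
    exact (Γ.coneRank_add_one_lt_of_three_facets u.2 w.2 x.2 (Subtype.coe_ne_coe.2 huw)
      (Subtype.coe_ne_coe.2 hux) (Subtype.coe_ne_coe.2 hwx) (hzero u hu) (hzero w hw)
      (hzero x hx)).ne hA
  interval_cases hcase : A.card
  · obtain rfl := Finset.card_eq_zero.1 hcase
    have hrank := Γ.coneRank_points
    simp only [Finset.notMem_empty, false_implies, implies_true, Finset.filter_true] at hA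
    lia
  · obtain ⟨u, rfl⟩ := Finset.card_eq_one.1 hcase
    have hrank := Γ.coneRank_commonPoints_self u.2
    simp only [commonPoints, and_self] at hrank
    simp only [Finset.mem_singleton, forall_eq] at hA
    lia
  · obtain ⟨u, w, huw, rfl⟩ := Finset.card_eq_two.1 hcase
    simp only [Finset.mem_insert, Finset.mem_singleton, forall_eq_or_imp, forall_eq] at hA ⊢
    exact ⟨u, w, ⟨Subtype.coe_ne_coe.2 huw, hA⟩, rfl⟩

theorem exists_adj_of_isFaceOfDim (hd : 2 ≤ d) {θ : Set (Fin d → ℝ)}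
    (hθ : IsFaceOfDim (latticeHull Γ.points) (d - 2) θ) :
    ∃ u w : Γ.normals, Γ.Adj u w ∧ latticeHull (Γ.commonPoints u w) = θ := by
  obtain ⟨hexp, hne, hdim⟩ := hθ
  obtain ⟨f, hf, rfl⟩ := exists_dual_of_isExposed hexp hne
  obtain ⟨A, hA⟩ := Γ.exists_forall_apply_eq_zero_iff hf
  rw [Finset.filter_congr hA] at hne hdim ⊢
  rw [latticeHull, convexHull_nonempty_iff, Set.image_nonempty] at hne
  have hrank := dimSet_latticeHull_add_one hne
  obtain ⟨u, w, h, heq⟩ := Γ.exists_adj_of_coneRank_add_one (A := A) (by lia)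
  exact ⟨u, w, h, congrArg latticeHull heq.symm⟩

theorem latticeHull_commonPoints_eq_iff {u w x y : Γ.normals} (h : Γ.Adj u w) (h' : Γ.Adj x y) :
    latticeHull (Γ.commonPoints x y) = latticeHull (Γ.commonPoints u w) ↔
      x = u ∧ y = w ∨ x = w ∧ y = u := by
  constructor
  · intro heq
    have hzero {z : Γ.normals} (hz : ∀ v ∈ Γ.commonPoints x y, Γ.dist z (homogenize v) = 0) :
        z = u ∨ z = w := by
      rw [Subtype.ext_iff, Subtype.ext_iff]
      refine Γ.eq_or_eq_of_adj u.2 w.2 z.2 h fun v hv => ?_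
      have hmem : coeLat v ∈ latticeHull (Γ.commonPoints x y) :=
        heq ▸ coeLat_mem_latticeHull hv
      have hform := apply_eq_zero_of_mem_latticeHull (f := Γ.form z)
        (fun v hv => by rw [form_toReal, hz v hv, Int.cast_zero]) hmem
      rwa [← toReal_homogenize, form_toReal, Int.cast_eq_zero] at hform
    have hx := hzero fun v hv => (Γ.mem_commonPoints.1 hv).2.1
    have hy := hzero fun v hv => (Γ.mem_commonPoints.1 hv).2.2
    have hxy : x ≠ y := fun hxy => h'.1 (congrArg Subtype.val hxy)
    grind
  · rintro (⟨rfl, rfl⟩ | ⟨rfl, rfl⟩)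
    · rfl
    · rw [commonPoints_comm]

end GorensteinCone

end Faces

/-! ### The cone of a Gorenstein polytope -/

theorem eq_zero_of_forall_mem_nonneg {E : Type*} [NormedAddCommGroup E] [NormedSpace ℝ E]
    [FiniteDimensional ℝ E] {P : Set E} (h₀ : 0 ∈ interior P) {f : Module.Dual ℝ E}
    (hf : ∀ x ∈ P, 0 ≤ f x) : f = 0 := by
  have hmin : IsLocalMin f.toContinuousLinearMap 0 :=
    Filter.mem_of_superset (mem_interior_iff_mem_nhds.1 h₀) fun x hx => by simpa using hf x hx
  have hzero := hmin.hasFDerivAt_eq_zero f.toContinuousLinearMap.hasFDerivAt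
  exact LinearMap.toContinuousLinearMap.map_eq_zero_iff.1 hzero

theorem map_mem_extremePoints {E F : Type*} [AddCommGroup E] [Module ℝ E] [AddCommGroup F]
    [Module ℝ F] {f : E →ᵃ[ℝ] F} (hf : Function.Injective f) {s : Set E} {x : E}
    (hx : x ∈ s.extremePoints ℝ) : f x ∈ (f '' s).extremePoints ℝ := by
  refine mem_extremePoints_iff_left.2 ⟨Set.mem_image_of_mem f hx.1, ?_⟩
  rintro - ⟨y, hy, rfl⟩ - ⟨z, hz, rfl⟩ hxyz
  rw [← image_openSegment, hf.mem_set_image] at hxyz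
  exact congrArg f ((mem_extremePoints_iff_left.1 hx).2 y hy z hz hxyz)

section Gorenstein

variable {d : ℕ}

theorem exists_latticeHull_extremePoints {Q : Set (Fin d → ℝ)} (hQ : IsLatticePolytope Q) :
    ∃ U : Finset (Fin d → ℤ), coeLat '' (U : Set (Fin d → ℤ)) = Q.extremePoints ℝ ∧
      latticeHull U = Q := by
  obtain ⟨W, rfl⟩ := hQ
  have hfinite : (coeLat '' (W : Set (Fin d → ℤ))).Finite := W.finite_toSet.image _
  obtain ⟨U, hUW, hU⟩ := Set.subset_image_iff.1
    (extremePoints_convexHull_subset (𝕜 := ℝ) (A := coeLat '' (W : Set (Fin d → ℤ))))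
  lift U to Finset (Fin d → ℤ) using W.finite_toSet.subset hUW
  refine ⟨U, hU, ?_⟩
  rw [latticeHull, ← closure_convexHull_extremePoints (hfinite.isCompact_convexHull ℝ)
    (convex_convexHull ℝ _), ← hU, ((U.finite_toSet.image _).isClosed_convexHull ℝ).closure_eq]

theorem zero_mem_interior_polarDual {P : Set (Fin d → ℝ)} (hP : IsCompact P) :
    0 ∈ interior (polarDual P) := by
  refine mem_interior_iff_mem_nhds.2 (hP.eventually_forall_of_forall_eventually (x₀ := 0)
    (P := fun (y x : Fin d → ℝ) => -1 ≤ ∑ i, y i * x i) fun x _ => ?_)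
  have hcont : Continuous fun z : (Fin d → ℝ) × (Fin d → ℝ) => ∑ i, z.1 i * z.2 i := by fun_prop
  exact (hcont.tendsto _).eventually_const_le (by simp)

/-- The affine map taking a Gorenstein polytope of index `r` to a reflexive polytope, where `m` is
the interior lattice point of the dilation by `r`. -/
def reflexiveShift (r : ℕ) (m : Fin d → ℤ) (x : Fin d → ℝ) : Fin d → ℝ := (r : ℝ) • x - coeLat m

/-- The map taking a point `y` to the linear form which is one at `(m, r)` and vanishes at `(x, 1)`
when `⟨y, reflexiveShift r m x⟩ = -1`. It identifies the dual of the reflexive polytope with a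
section of the dual cone. -/
def polarForm (r : ℕ) (m : Fin d → ℤ) : (Fin d → ℝ) →ᵃ[ℝ] Module.Dual ℝ (RealSpace d) :=
  (r : ℝ)⁻¹ • ((LinearMap.lcomp ℝ ℝ ((r : ℝ) • LinearMap.fst ℝ (Fin d → ℝ) ℝ -
    (LinearMap.snd ℝ (Fin d → ℝ) ℝ).smulRight (coeLat m)) ∘ₗ dotProductBilin ℝ ℝ).toAffineMap +
    AffineMap.const ℝ _ (LinearMap.snd ℝ _ _))

variable {r : ℕ} {m : Fin d → ℤ} {y : Fin d → ℝ} {x : RealSpace d}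

theorem polarForm_apply :
    polarForm r m y x = (r : ℝ)⁻¹ * (y ⬝ᵥ ((r : ℝ) • x.1 - x.2 • coeLat m) + x.2) := by
  simp [polarForm, mul_add]

theorem polarForm_apply_one (x : Fin d → ℝ) :
    polarForm r m y (x, 1) = (r : ℝ)⁻¹ * (y ⬝ᵥ reflexiveShift r m x + 1) := by
  rw [polarForm_apply, one_smul, reflexiveShift]

theorem polarForm_apply_center (hr : r ≠ 0) : polarForm r m y (toReal (m, (r : ℤ))) = 1 := by
  simp [polarForm_apply, toReal_apply, hr]

theorem polarForm_eq_affineForm (hr : r ≠ 0) :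
    polarForm r m y = affineForm y ((y ⬝ᵥ coeLat m - 1) / r) := by
  refine LinearMap.ext fun x => ?_
  rw [polarForm_apply, affineForm_apply, dotProduct_sub, dotProduct_smul, dotProduct_smul,
    smul_eq_mul, smul_eq_mul]
  field

theorem polarForm_injective (hr : r ≠ 0) : Function.Injective (polarForm (d := d) r m) := by
  intro y z h
  refine dotProduct_eq y z fun x => ?_
  simpa [polarForm_eq_affineForm hr, affineForm_apply] using LinearMap.congr_fun h (x, 0)

theorem exists_polarForm_eq {f : Module.Dual ℝ (RealSpace d)} (hr : r ≠ 0)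
    (hf : f (toReal (m, (r : ℤ))) = 1) : ∃ y, polarForm r m y = f := by
  let y := (dotProductEquiv ℝ (Fin d)).symm (f ∘ₗ LinearMap.inl ℝ _ _)
  have hy (x : RealSpace d) : f x = y ⬝ᵥ x.1 + x.2 * f (0, 1) := by
    have hfst : y ⬝ᵥ x.1 = f (x.1, 0) :=
      LinearMap.congr_fun ((dotProductEquiv ℝ (Fin d)).apply_symm_apply _) x.1
    rw [hfst, ← smul_eq_mul, ← map_smul, ← map_add]
    simp
  have hm : y ⬝ᵥ coeLat m - 1 = -(r * f (0, 1)) := by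
    have := (hy _).symm.trans hf
    simp only [toReal_apply, Int.cast_natCast] at this
    linarith
  refine ⟨y, LinearMap.ext fun x => ?_⟩
  rw [polarForm_eq_affineForm hr, affineForm_apply, hy, hm]
  field

variable {V : Finset (Fin d → ℤ)}

theorem mem_polarDual_iff (hr : r ≠ 0) : y ∈ polarDual (reflexiveShift r m '' latticeHull V) ↔
    ∀ v ∈ V, 0 ≤ polarForm r m y (toReal (homogenize v)) := by
  have hle (x : Fin d → ℝ) :
      -1 ≤ y ⬝ᵥ reflexiveShift r m x ↔ 0 ≤ polarForm r m y (x, 1) := by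
    rw [polarForm_apply_one, mul_nonneg_iff_of_pos_left (by positivity), neg_le_iff_add_nonneg]
  simp only [toReal_homogenize]
  refine Set.forall_mem_image.trans
    ⟨fun h v hv => (hle _).1 (h (coeLat_mem_latticeHull hv)), fun h x hx => (hle x).2 ?_⟩
  exact apply_nonneg_of_mem_latticeHull (fun v hv => by simpa [toReal_homogenize] using h v hv) hx

theorem image_polarForm_polarDual (hr : r ≠ 0) :
    polarForm r m '' polarDual (reflexiveShift r m '' latticeHull V) =
      {f | (∀ v ∈ V, 0 ≤ f (toReal (homogenize v))) ∧ f (toReal (m, (r : ℤ))) = 1} := by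
  ext f
  constructor
  · rintro ⟨y, hy, rfl⟩
    exact ⟨(mem_polarDual_iff hr).1 hy, polarForm_apply_center hr⟩
  · rintro ⟨hf, h₁⟩
    obtain ⟨y, rfl⟩ := exists_polarForm_eq hr h₁
    exact ⟨y, (mem_polarDual_iff hr).2 hf, rfl⟩

theorem apply_pos_of_nonneg (hr : r ≠ 0) (h₀ : 0 ∈ interior (reflexiveShift r m '' latticeHull V))
    {f : Module.Dual ℝ (RealSpace d)} (hf : ∀ v ∈ V, 0 ≤ f (toReal (homogenize v))) (hne : f ≠ 0) :
    0 < f (toReal (m, (r : ℤ))) := by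
  have hsplit (x : Fin d → ℝ) : f (reflexiveShift r m x, 0) =
      r * f (x, 1) - f (toReal (m, (r : ℤ))) := by
    rw [← smul_eq_mul, ← map_smul, ← map_sub]
    simp [toReal_apply, reflexiveShift]
  obtain ⟨x, hx, hx₀⟩ := interior_subset h₀
  have hcenter : f (toReal (m, (r : ℤ))) = r * f (x, 1) := by
    have := hsplit x
    rw [hx₀, Prod.mk_zero_zero, map_zero] at this
    linarith
  have hnonneg : 0 ≤ f (toReal (m, (r : ℤ))) := by
    have := apply_nonneg_of_mem_latticeHull hf hx
    rw [hcenter]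
    positivity
  refine hnonneg.lt_of_ne fun hzero => hne ?_
  have hinl : f ∘ₗ LinearMap.inl ℝ (Fin d → ℝ) ℝ = 0 := by
    refine eq_zero_of_forall_mem_nonneg h₀ (Set.forall_mem_image.2 fun x hx => ?_)
    have := apply_nonneg_of_mem_latticeHull hf hx
    rw [LinearMap.comp_apply, LinearMap.inl_apply, hsplit, ← hzero, sub_zero]
    positivity
  refine LinearMap.prod_ext hinl (LinearMap.ext_ring ?_)
  have hx₁ : f (x, 1) = 0 := by simpa [hr, ← hzero] using hcenter
  have hxsplit : f (x, 1) = f (x, 0) + f (0, 1) := by simp [← map_add]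
  have hx₀' : f (x, 0) = 0 := LinearMap.congr_fun hinl x
  simpa [hx₀', hx₁] using hxsplit.symm

theorem mem_hull_polarForm (hr : r ≠ 0) (h₀ : 0 ∈ interior (reflexiveShift r m '' latticeHull V))
    {U : Finset (Fin d → ℤ)} (hU : latticeHull U = polarDual (reflexiveShift r m '' latticeHull V))
    {f : Module.Dual ℝ (RealSpace d)} (hf : ∀ v ∈ V, 0 ≤ f (toReal (homogenize v))) :
    f ∈ PointedCone.hull ℝ ((fun u => polarForm r m (coeLat u)) '' U) := by
  rcases eq_or_ne f 0 with rfl | hne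
  · exact zero_mem _
  have hpos := inv_pos.2 (apply_pos_of_nonneg hr h₀ hf hne)
  have hmem : (f (toReal (m, (r : ℤ))))⁻¹ • f ∈
      polarForm r m '' polarDual (reflexiveShift r m '' latticeHull V) := by
    rw [image_polarForm_polarDual hr]
    refine ⟨fun v hv => mul_nonneg hpos.le (hf v hv), inv_mul_cancel₀ (inv_pos.1 hpos).ne'⟩
  rw [← hU, latticeHull, AffineMap.image_convexHull, Set.image_image] at hmem
  exact (PointedCone.smul_mem_iff _ hpos).1
    (convexHull_min PointedCone.subset_hull (PointedCone.convex _) hmem)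

theorem exists_coeLat_dotProduct_reflexiveShift_eq (hd : d ≠ 0)
    (h₀ : 0 ∈ interior (reflexiveShift r m '' latticeHull V)) {u : Fin d → ℤ}
    (hu : coeLat u ∈ (polarDual (reflexiveShift r m '' latticeHull V)).extremePoints ℝ) :
    ∃ v ∈ V, coeLat u ⬝ᵥ reflexiveShift r m (coeLat v) = -1 := by
  by_contra! hV
  have hint (v : Fin d → ℤ) : coeLat u ⬝ᵥ reflexiveShift r m (coeLat v) =
      ((r * (u ⬝ᵥ v) - u ⬝ᵥ m : ℤ) : ℝ) := by
    simp [reflexiveShift, dotProduct_sub, coeLat_dotProduct]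
  have hform (x : Fin d → ℝ) : affineForm ((r : ℝ) • coeLat u) (coeLat u ⬝ᵥ coeLat m) (x, 1) =
      coeLat u ⬝ᵥ reflexiveShift r m x := by
    simp [affineForm_apply, reflexiveShift, dotProduct_sub]
  have hnonneg : ∀ v ∈ V, 0 ≤ affineForm ((r : ℝ) • coeLat u) (coeLat u ⬝ᵥ coeLat m)
      (toReal (homogenize v)) := fun v hv => by
    have hge : -1 ≤ coeLat u ⬝ᵥ reflexiveShift r m (coeLat v) :=
      hu.1 _ (Set.mem_image_of_mem _ (coeLat_mem_latticeHull hv))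
    have hne := hV v hv
    rw [toReal_homogenize, hform]
    rw [hint] at hge hne ⊢
    norm_cast at hge hne ⊢
    lia
  have hzero : dotProductBilin ℝ ℝ (coeLat u) = 0 := by
    refine eq_zero_of_forall_mem_nonneg h₀ (Set.forall_mem_image.2 fun x hx => ?_)
    exact (apply_nonneg_of_mem_latticeHull hnonneg hx).trans_eq (hform x)
  have hu₀ : coeLat u = 0 := dotProduct_eq_zero _ fun x => LinearMap.congr_fun hzero x
  have hcompact : IsCompact (reflexiveShift r m '' latticeHull V) :=
    ((V.finite_toSet.image _).isCompact_convexHull ℝ).image (by unfold reflexiveShift; fun_prop)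
  have : NeZero d := ⟨hd⟩
  exact (disjoint_interior_extremePoints _).notMem_of_mem_left
    (zero_mem_interior_polarDual hcompact) (hu₀ ▸ hu)

theorem exists_affineForm_eq_polarForm (hd : d ≠ 0) (hr : r ≠ 0)
    (h₀ : 0 ∈ interior (reflexiveShift r m '' latticeHull V)) {u : Fin d → ℤ}
    (hu : coeLat u ∈ (polarDual (reflexiveShift r m '' latticeHull V)).extremePoints ℝ) :
    ∃ c : ℤ, affineForm (coeLat u) c = polarForm r m (coeLat u) := by
  obtain ⟨v, -, hv⟩ := exists_coeLat_dotProduct_reflexiveShift_eq hd h₀ hu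
  refine ⟨u ⬝ᵥ v, ?_⟩
  rw [reflexiveShift, dotProduct_sub, dotProduct_smul, smul_eq_mul] at hv
  have hc : coeLat u ⬝ᵥ coeLat m - 1 = r * (coeLat u ⬝ᵥ coeLat v) := by linarith
  rw [polarForm_eq_affineForm hr, ← coeLat_dotProduct, hc, mul_div_cancel_left₀ _ (by positivity)]

theorem exists_gorensteinCone (hd : d ≠ 0) (hr : r ≠ 0) (hdim : dimSet (latticeHull V) = d)
    (h₀ : 0 ∈ interior (reflexiveShift r m '' latticeHull V))
    (hQ : IsLatticePolytope (polarDual (reflexiveShift r m '' latticeHull V))) :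
    ∃ Γ : GorensteinCone d r, Γ.points = V ∧ Γ.center = m ∧
      latticeHull Γ.normals = polarDual (reflexiveShift r m '' latticeHull V) := by
  obtain ⟨U, hU, hUQ⟩ := exists_latticeHull_extremePoints hQ
  have hext (u) (hu : u ∈ U) : coeLat u ∈
      (polarDual (reflexiveShift r m '' latticeHull V)).extremePoints ℝ :=
    hU ▸ Set.mem_image_of_mem _ hu
  choose! offset hoffset using fun u hu => exists_affineForm_eq_polarForm hd hr h₀ (hext u hu)
  have hne : V.Nonempty := by
    have := Set.image_nonempty.1 ⟨0, interior_subset h₀⟩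
    rwa [latticeHull, convexHull_nonempty_iff, Set.image_nonempty] at this
  refine ⟨⟨V, U, m, offset, fun u hu => ?_, fun u hu v hv => ?_, ?_, fun f hf => ?_,
    fun u hu => ?_⟩, rfl, rfl, hUQ⟩
  · have := polarForm_apply_center (y := coeLat u) (m := m) hr
    rw [← hoffset u hu, affineForm_apply] at this
    simp only [toReal_apply, coeLat_dotProduct] at this
    exact_mod_cast this
  · have := (mem_polarDual_iff hr).1 (hext u hu).1 v hv
    rw [← hoffset u hu, affineForm_apply, toReal_homogenize, one_mul, coeLat_dotProduct,
      sub_nonneg] at this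
    exact_mod_cast this
  · rw [← dimSet_latticeHull_add_one hne, hdim]
  · rw [Set.image_congr hoffset]
    exact mem_hull_polarForm hr h₀ hUQ hf
  · rw [hoffset u hu, ← image_polarForm_polarDual hr]
    exact map_mem_extremePoints (polarForm_injective hr) (hext u hu)

theorem mem_dualFace_latticeHull {P : Set (Fin d → ℝ)} {T : Finset (Fin d → ℤ)} :
    y ∈ dualFace P (reflexiveShift r m '' latticeHull T) ↔
      y ∈ polarDual P ∧ ∀ v ∈ T, y ⬝ᵥ reflexiveShift r m (coeLat v) = -1 := by
  refine and_congr_right fun _ => Set.forall_mem_image.trans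
    ⟨fun h v hv => h (coeLat_mem_latticeHull hv), fun h x hx => ?_⟩
  have hform (x : Fin d → ℝ) : affineForm ((r : ℝ) • y) (y ⬝ᵥ coeLat m - 1) (x, 1) =
      y ⬝ᵥ reflexiveShift r m x + 1 := by
    simp [affineForm_apply, reflexiveShift, dotProduct_sub, sub_add]
  have hT : ∀ v ∈ T, affineForm ((r : ℝ) • y) (y ⬝ᵥ coeLat m - 1) (toReal (homogenize v)) = 0 :=
    fun v hv => by rw [toReal_homogenize, hform, h v hv, neg_add_cancel]
  exact eq_neg_of_add_eq_zero_left ((hform x).symm.trans (apply_eq_zero_of_mem_latticeHull hT hx))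

theorem dualFace_latticeHull {U T : Finset (Fin d → ℤ)}
    (hU : latticeHull U = polarDual (reflexiveShift r m '' latticeHull V)) (hT : T ⊆ V) :
    dualFace (reflexiveShift r m '' latticeHull V) (reflexiveShift r m '' latticeHull T) =
      latticeHull {u ∈ U | ∀ v ∈ T, coeLat u ⬝ᵥ reflexiveShift r m (coeLat v) = -1} := by
  let f : Module.Dual ℝ (RealSpace d) :=
    ∑ v ∈ T, affineForm (reflexiveShift r m (coeLat v)) (-1)
  have hf (y : Fin d → ℝ) : f (y, 1) = ∑ v ∈ T, (y ⬝ᵥ reflexiveShift r m (coeLat v) + 1) := by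
    simp [f, affineForm_apply, dotProduct_comm]
  have hterm {y : Fin d → ℝ} (hy : y ∈ latticeHull U) (v) (hv : v ∈ T) :
      0 ≤ y ⬝ᵥ reflexiveShift r m (coeLat v) + 1 := by
    rw [hU] at hy
    exact neg_le_iff_add_nonneg.1 (hy _ (Set.mem_image_of_mem _ (coeLat_mem_latticeHull (hT hv))))
  have hzero {y : Fin d → ℝ} (hy : y ∈ latticeHull U) :
      f (y, 1) = 0 ↔ ∀ v ∈ T, y ⬝ᵥ reflexiveShift r m (coeLat v) = -1 := by
    simp only [hf, Finset.sum_eq_zero_iff_of_nonneg (hterm hy), add_eq_zero_iff_eq_neg]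
  have hnonneg : ∀ u ∈ U, 0 ≤ f (toReal (homogenize u)) := fun u hu => by
    rw [toReal_homogenize, hf]
    exact Finset.sum_nonneg (hterm (coeLat_mem_latticeHull hu))
  have hfilter : {u ∈ U | ∀ v ∈ T, coeLat u ⬝ᵥ reflexiveShift r m (coeLat v) = -1} =
      {u ∈ U | f (toReal (homogenize u)) = 0} :=
    Finset.filter_congr fun u hu => by rw [toReal_homogenize, hzero (coeLat_mem_latticeHull hu)]
  rw [hfilter, latticeHull_filter hnonneg]
  ext y
  rw [mem_dualFace_latticeHull, ← hU]
  exact and_congr_right fun hy => (hzero hy).symm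

namespace GorensteinCone

variable (Γ : GorensteinCone d r) {u w : Fin d → ℤ}

theorem dotProduct_reflexiveShift (hu : u ∈ Γ.normals) (x : Fin d → ℝ) :
    coeLat u ⬝ᵥ reflexiveShift r Γ.center x + 1 = r * Γ.form u (x, 1) := by
  have hcenter : coeLat u ⬝ᵥ coeLat Γ.center - r * Γ.offset u = 1 := by
    rw [coeLat_dotProduct]
    exact_mod_cast Γ.dotProduct_center u hu
  rw [reflexiveShift, dotProduct_sub, dotProduct_smul, smul_eq_mul, form, affineForm_apply]
  linarith

theorem dualFace_commonPoints (hr : r ≠ 0) (hu : u ∈ Γ.normals) (hw : w ∈ Γ.normals)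
    (h : Γ.Adj u w)
    (hΓ : latticeHull Γ.normals = polarDual (reflexiveShift r Γ.center '' latticeHull Γ.points)) :
    dualFace (reflexiveShift r Γ.center '' latticeHull Γ.points)
        (reflexiveShift r Γ.center '' latticeHull (Γ.commonPoints u w)) =
      segment ℝ (coeLat u) (coeLat w) := by
  have hcontact {x : Fin d → ℤ} (hx : x ∈ Γ.normals) (v : Fin d → ℤ) :
      coeLat x ⬝ᵥ reflexiveShift r Γ.center (coeLat v) = -1 ↔ Γ.dist x (homogenize v) = 0 := by
    rw [← add_eq_zero_iff_eq_neg, Γ.dotProduct_reflexiveShift hx, ← toReal_homogenize,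
      form_toReal]
    simp [hr]
  have hfilter : {x ∈ Γ.normals | ∀ v ∈ Γ.commonPoints u w,
      coeLat x ⬝ᵥ reflexiveShift r Γ.center (coeLat v) = -1} = {u, w} := by
    ext x
    rw [Finset.mem_filter, Finset.mem_insert, Finset.mem_singleton]
    constructor
    · rintro ⟨hx, hxv⟩
      exact Γ.eq_or_eq_of_adj hu hw hx h fun v hv => (hcontact hx v).1 (hxv v hv)
    · rintro (rfl | rfl)
      · exact ⟨hu, fun v hv => (hcontact hu v).2 (Γ.mem_commonPoints.1 hv).2.1⟩
      · exact ⟨hw, fun v hv => (hcontact hw v).2 (Γ.mem_commonPoints.1 hv).2.2⟩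
  rw [dualFace_latticeHull hΓ (Γ.commonPoints_subset u w), hfilter]
  simp [latticeHull, Set.image_pair, convexHull_pair]

end GorensteinCone

end Gorenstein

/-! ### Ridges of a Gorenstein polytope -/

section Ridges

variable {d : ℕ}

namespace GorensteinCone

variable (Γ : GorensteinCone d (d - 1))

open Classical in
/-- The ordered pairs of adjacent facets: every ridge of the polytope comes from exactly two of
them. -/
def adjPairs : Finset (Γ.normals × Γ.normals) :=
  {p | Γ.Adj p.1 p.2}

theorem mem_adjPairs {p : Γ.normals × Γ.normals} : p ∈ Γ.adjPairs ↔ Γ.Adj p.1 p.2 := by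
  simp [adjPairs]

/-- The ridge in which two facets meet, as a subset of the polytope. -/
def ridge (p : Γ.normals × Γ.normals) : Set (Fin d → ℝ) :=
  latticeHull (Γ.commonPoints p.1 p.2)

open Classical in
theorem setOf_isFaceOfDim_eq_image_ridge (hd : 2 ≤ d) :
    {θ | IsFaceOfDim (latticeHull Γ.points) (d - 2) θ} = ↑(Γ.adjPairs.image Γ.ridge) := by
  ext θ
  simp only [Set.mem_ofPred_eq, Finset.coe_image, Set.mem_image, Finset.mem_coe, mem_adjPairs]
  constructor
  · intro hθ
    obtain ⟨u, w, h, rfl⟩ := Γ.exists_adj_of_isFaceOfDim hd hθ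
    exact ⟨(u, w), h, rfl⟩
  · rintro ⟨p, h, rfl⟩
    exact Γ.isFaceOfDim_commonPoints hd p.1.2 p.2.2 h

open Classical in
theorem card_filter_ridge_eq {θ : Set (Fin d → ℝ)} (hθ : θ ∈ Γ.adjPairs.image Γ.ridge) :
    Finset.card {p ∈ Γ.adjPairs | Γ.ridge p = θ} = 2 := by
  obtain ⟨⟨u, w⟩, hp, rfl⟩ := Finset.mem_image.1 hθ
  have h : Γ.Adj u w := Γ.mem_adjPairs.1 hp
  have hfiber : {q ∈ Γ.adjPairs | Γ.ridge q = Γ.ridge (u, w)} = {(u, w), (w, u)} := by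
    ext ⟨x, y⟩
    simp only [Finset.mem_filter, mem_adjPairs, Finset.mem_insert, Finset.mem_singleton,
      Prod.mk.injEq]
    constructor
    · rintro ⟨hxy, heq⟩
      exact (Γ.latticeHull_commonPoints_eq_iff h hxy).1 heq
    · intro hxy
      have h' : Γ.Adj x y := by
        obtain ⟨rfl, rfl⟩ | ⟨rfl, rfl⟩ := hxy
        exacts [h, Γ.adj_comm.1 h]
      exact ⟨h', (Γ.latticeHull_commonPoints_eq_iff h h').2 hxy⟩
  rw [hfiber, Finset.card_pair]
  exact fun heq => h.1 (congrArg (fun q : Γ.normals × Γ.normals => (q.1 : Fin d → ℤ)) heq)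

theorem sum_adjPairs_comp_ridge (hd : 2 ≤ d) (F : Set (Fin d → ℝ) → ℝ) :
    ∑ p ∈ Γ.adjPairs, F (Γ.ridge p) =
      2 * ∑ᶠ θ ∈ {θ | IsFaceOfDim (latticeHull Γ.points) (d - 2) θ}, F θ := by
  classical
  rw [Γ.setOf_isFaceOfDim_eq_image_ridge hd, finsum_mem_coe_finset, Finset.sum_comp, Finset.mul_sum]
  refine Finset.sum_congr rfl fun θ hθ => ?_
  rw [Γ.card_filter_ridge_eq hθ, nsmul_eq_mul, Nat.cast_ofNat]

theorem sum_sum_ridgeVolume_mul_content :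
    ∑ u : Γ.normals, ∑ w : Γ.normals, Γ.ridgeVolume u w * content (u.1 - w.1) =
      ∑ p ∈ Γ.adjPairs, latticeVolume (Γ.commonPoints p.1 p.2) * content (p.1.1 - p.2.1) := by
  classical
  rw [adjPairs, Finset.sum_filter, ← Fintype.sum_prod_type']
  exact Finset.sum_congr rfl fun p _ => by simp [ridgeVolume]

theorem normVol_ridge_mul_normVol_dualFace (hd : 2 ≤ d) (hΓ : latticeHull Γ.normals =
      polarDual (reflexiveShift (d - 1) Γ.center '' latticeHull Γ.points))
    {p : Γ.normals × Γ.normals} (hp : p ∈ Γ.adjPairs) :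
    normVol (d - 2) (Γ.ridge p) *
        normVol 1 (dualFace (reflexiveShift (d - 1) Γ.center '' latticeHull Γ.points)
          (reflexiveShift (d - 1) Γ.center '' Γ.ridge p)) =
      latticeVolume (Γ.commonPoints p.1 p.2) * content (p.1.1 - p.2.1) := by
  have h := Γ.mem_adjPairs.1 hp
  have hrank : coneRank (Γ.commonPoints p.1 p.2) = d - 2 + 1 := by have := h.2; lia
  rw [ridge, Γ.dualFace_commonPoints (by lia) p.1.2 p.2.2 h hΓ, normVol_latticeHull hrank,
    normVol_segment h.1]

theorem twelve_eq_finsum (hd : 2 ≤ d)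
    (hΓ : latticeHull Γ.normals =
      polarDual (reflexiveShift (d - 1) Γ.center '' latticeHull Γ.points)) :
    12 = ∑ᶠ θ ∈ {θ | IsFaceOfDim (latticeHull Γ.points) (d - 2) θ},
        normVol (d - 2) θ *
          normVol 1 (dualFace (reflexiveShift (d - 1) Γ.center '' latticeHull Γ.points)
            (reflexiveShift (d - 1) Γ.center '' θ)) +
      ((d - 1 : ℝ) * (1 - (d - 1)) + 2) / 2 * normVol d (latticeHull Γ.points) := by
  have h := Γ.twelve_eq hd
  rw [sum_sum_ridgeVolume_mul_content,
    ← Finset.sum_congr rfl fun p hp => Γ.normVol_ridge_mul_normVol_dualFace hd hΓ hp,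
    Γ.sum_adjPairs_comp_ridge hd fun θ => normVol (d - 2) θ *
      normVol 1 (dualFace (reflexiveShift (d - 1) Γ.center '' latticeHull Γ.points)
        (reflexiveShift (d - 1) Γ.center '' θ)), mul_div_cancel_left₀ _ two_ne_zero] at h
  rwa [normVol_latticeHull Γ.coneRank_points]

end GorensteinCone

end Ridges

end GorensteinPolytope

theorem gorenstein_index_d_sub_one_12_general (d : ℕ) (hd : 2 ≤ d) (r : ℕ) (hr : r = d - 1)
    (Δ : Set (Fin d → ℝ)) (hΔ : IsLatticePolytope Δ) (hdim : dimSet Δ = d)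
    (m : Fin d → ℤ) (P : Set (Fin d → ℝ))
    (hP : P = (fun x => (r : ℝ) • x - coeLat m) '' Δ)
    (hPrefl : IsReflexive P) :
    (12 : ℝ) =
      (∑ᶠ θ ∈ {θ : Set (Fin d → ℝ) | IsFaceOfDim Δ (r - 1) θ},
          normVol (r - 1) θ *
            normVol (d - r) (dualFace P ((fun x => (r : ℝ) • x - coeLat m) '' θ))) +
        (((r : ℝ) * (1 - (r : ℝ)) + 2) / 2) * normVol d Δ := by
  subst hr hP
  obtain ⟨V, rfl⟩ := hΔ
  obtain ⟨-, h₀, hdual⟩ := hPrefl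
  obtain ⟨Γ, rfl, rfl, hΓ⟩ :=
    GorensteinPolytope.exists_gorensteinCone (by lia) (by lia) hdim h₀ hdual
  have hcast : ((d - 1 : ℕ) : ℝ) = d - 1 := by rw [Nat.cast_sub (by lia), Nat.cast_one]
  have h := Γ.twelve_eq_finsum hd hΓ
  rw [← hcast, show d - 2 = d - 1 - 1 by lia] at h
  rwa [show d - (d - 1) = 1 by lia]

theorem gorenstein_index_d_sub_one_12 (d : ℕ) (hd : 3 ≤ d) (r : ℕ) (hr : r = d - 1)
    (Δ : Set (Fin d → ℝ)) (hΔ : IsLatticePolytope Δ) (hdim : dimSet Δ = d)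
    (m : Fin d → ℤ) (P : Set (Fin d → ℝ))
    (hP : P = (fun x => (r : ℝ) • x - coeLat m) '' Δ)
    (hPrefl : IsReflexive P) :
    (12 : ℝ) =
      (∑ᶠ θ ∈ {θ : Set (Fin d → ℝ) | IsFaceOfDim Δ (r - 1) θ},
          normVol (r - 1) θ *
            normVol (d - r) (dualFace P ((fun x => (r : ℝ) • x - coeLat m) '' θ))) +
        (((r : ℝ) * (1 - (r : ℝ)) + 2) / 2) * normVol d Δ :=
  gorenstein_index_d_sub_one_12_general d (by lia) r hr Δ hΔ hdim m P hP hPrefl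

end
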